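/- For every integer N ≥ 3 with N ≠ 2·3·5·7·11·13·17·19·23, one has N / φ(N) < e^γ · log(log N) + 5/(2 · log(log N)). -/

import Mathlib

/-!
Write `γ` for Euler's constant. The range of `N` is split at `log N = exp (21 / 2)`.

**Large `N`.** Maximising `N / φ(N)` for `N` of a given size is a knapsack problem. Its dual bound
`tangent` estimates `log (N / φ(N))` by the sum of `-log (1 - 1 / p)` over the primes `p ≤ x = log N`,
plus `(x - ψ(x)) / (x log x)`, up to small errors. The sum over primes is compared with
`∑ Λ(n) / (n log n)` over `n ≤ x`, and `At_le` is a Mertens estimate for that sum minus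
`ψ(x) / (x log x)`. The `ψ` terms therefore cancel, and only a smoothed prime sum is needed:
`PP u = ∑ Λ(n) (1 / n - e^{-u})` over `n ≤ e^u`. Partial summation (`WW_eq`) passes from `PP` to
`At_le`.

The smoothed sum has an absolutely convergent explicit formula over the zeros of `ξ`
(`explicit_formula`). It follows from the partial fraction expansion of `ξ'/ξ`, valid because `ξ` is an
entire function of order less than two, and from the uniqueness of Laplace transforms. The remainder is
at most `0.67 / u` for `u ≥ 21 / 2` (`abs_RR_le'`), without numerical knowledge of any zero:

* `∑ 1 / (1 + γ_ρ²) ≤ 2 ξ'/ξ (1)`, where `γ_ρ = Im ρ`, and `ξ'/ξ (1) = 1 + γ/2 - log (4 π) / 2` is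
  about `0.0231`. In particular every zero has `γ_ρ² ≥ 42`.
* The inequality `3 + 4 cos θ + cos 2θ ≥ 0` gives a zero-free region whose width is of order
  `1 / log |γ_ρ|` (`zero_free`). The resulting logarithm is averaged over the zeros by
  means of bounds for `∑ 1 / (b² + γ_ρ²)` at `b = 16 · 2 ^ k` (`sum_mu_log_le`).
* With `x e^{-x} ≤ 1 / e` and the symmetry `ρ ↦ 1 - conj ρ`, this bounds the sum over zeros.

The additive constant in `At_le` is first known only to exist (`exists_limit`). It equals `γ` because
`∑ Λ(n) / (n log n)` over `n ≤ e^u` and `∑ 1 / n` over `n ≤ u` have Laplace transforms that agree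
asymptotically (`limit_eq_gamma`), which only uses the residue of `ζ` at `1`.

**Small `N`.** If `N` is less than the product of the primes up to `q`, then `N / φ(N)` is at most the
product of `p / (p - 1)` over the primes `p < q` (`ratio_le`). It thus suffices to check the inequality
at the beginning of each of a list of blocks between primorials, reaching up to `2 ^ 52394`. The checks
`chk1` and `chk2` are integer computations evaluated by the kernel. Numbers between `223092870` and
`6469693230` are treated separately (`good_nine`), since `223092870` itself violates the inequality.
-/

namespace RS

open Complex Set Filter Topology Metric MeasureTheory
open ArithmeticFunction (vonMangoldt)

/-! ### Entire functions of growth order below two -/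

/-- A nonvanishing holomorphic function on a disc is the exponential of a holomorphic function. -/
lemma exists_log_on_ball {g : ℂ → ℂ} {R : ℝ} (hR : 0 < R) (hg : DifferentiableOn ℂ g (ball 0 R))
    (hne : ∀ z ∈ ball (0 : ℂ) R, g z ≠ 0) :
    ∃ h : ℂ → ℂ, h 0 = 0 ∧ (∀ z ∈ ball (0 : ℂ) R, HasDerivAt h (logDeriv g z) z) ∧
      ∀ z ∈ ball (0 : ℂ) R, g z = g 0 * Complex.exp (h z) := by
  have hd : DifferentiableOn ℂ (logDeriv g) (ball 0 R) := by
    have : DifferentiableOn ℂ (deriv g) (ball 0 R) := hg.deriv isOpen_ball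
    exact this.div hg hne
  obtain ⟨h, h0, hh⟩ := hd.isExactOn_ball.with_val_at 0 0
  refine ⟨h, h0, hh, ?_⟩
  have h00 : (0 : ℂ) ∈ ball (0 : ℂ) R := mem_ball_self hR
  have key : ∀ z ∈ ball (0 : ℂ) R, HasDerivAt (fun z => g z * Complex.exp (-h z)) 0 z := by
    intro z hz
    have h1 := (hg.differentiableAt (isOpen_ball.mem_nhds hz)).hasDerivAt
    have h2 := (hh z hz).neg.cexp
    refine (h1.mul h2).congr_deriv ?_
    have := hne z hz
    rw [logDeriv_apply]
    simp only [Pi.neg_apply]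
    field_simp
    ring
  intro z hz
  have hc := (convex_ball (0 : ℂ) R).is_const_of_fderivWithin_eq_zero (𝕜 := ℂ)
    (f := fun z => g z * Complex.exp (-h z))
    (fun z hz => (key z hz).differentiableAt.differentiableWithinAt)
    (fun z hz => by
      rw [fderivWithin_of_isOpen isOpen_ball hz]
      have := (key z hz).hasFDerivAt.fderiv
      rw [this]; ext; simp) hz h00
  simp only [h0, neg_zero, Complex.exp_zero, mul_one] at hc
  rw [← hc, mul_assoc, ← Complex.exp_add]; simp

/-- Borel–Carathéodory for the logarithm: a zero-free function whose modulus is at most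
`exp K` times its value at the centre has a slowly varying logarithmic derivative. -/
lemma logDeriv_sub_le {g : ℂ → ℂ} {R K : ℝ} (hR : 0 < R) (hK : 0 < K)
    (hg : DifferentiableOn ℂ g (ball 0 R)) (hne : ∀ z ∈ ball (0 : ℂ) R, g z ≠ 0)
    (hb : ∀ z ∈ ball (0 : ℂ) R, ‖g z‖ ≤ ‖g 0‖ * Real.exp K) {s s' : ℂ}
    (hs : ‖s‖ < R / 8) (hs' : ‖s'‖ < R / 8) :
    ‖logDeriv g s - logDeriv g s'‖ ≤ 64 * K / R ^ 2 * ‖s - s'‖ := by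
  obtain ⟨h, h0, hh, hexp⟩ := exists_log_on_ball hR hg hne
  have hg0 : 0 < ‖g 0‖ := norm_pos_iff.2 (hne 0 (mem_ball_self hR))
  have hdiff : DifferentiableOn ℂ h (ball 0 R) := fun z hz =>
    (hh z hz).differentiableAt.differentiableWithinAt
  have hre : MapsTo h (ball 0 R) {z | z.re ≤ K} := by
    intro z hz
    have h1 := hb z hz
    rw [hexp z hz, norm_mul, Complex.norm_exp] at h1
    exact Real.exp_le_exp.1 (le_of_mul_le_mul_left h1 hg0)
  have hbd : ∀ z : ℂ, ‖z‖ ≤ R / 2 → ‖h z‖ ≤ 2 * K := by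
    intro z hz
    have hz' : z ∈ ball (0 : ℂ) R := by simp; linarith
    refine (borelCaratheodory_zero hK hdiff hre hR hz' h0).trans ?_
    rw [div_le_iff₀ (by linarith)]
    nlinarith
  have hld : ∀ z : ℂ, ‖z‖ ≤ R / 4 → ‖logDeriv g z‖ ≤ 8 * K / R := by
    intro z hz
    have hz' : z ∈ ball (0 : ℂ) R := by simp; linarith
    rw [← (hh z hz').deriv]
    have hsub : closedBall z (R / 4) ⊆ ball 0 R := by
      intro w hw
      have : ‖w‖ ≤ ‖z‖ + ‖w - z‖ := by
        have := norm_add_le z (w - z); simpa using this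
      simp [dist_eq_norm] at hw ⊢; linarith
    refine (norm_deriv_le_of_forall_mem_sphere_norm_le (C := 2 * K) (R := R / 4) (by linarith)
      (hdiff.diffContOnCl_ball hsub) ?_).trans (le_of_eq (by field_simp; ring))
    intro w hw
    apply hbd
    have : ‖w‖ ≤ ‖z‖ + ‖w - z‖ := by
      have := norm_add_le z (w - z); simpa using this
    simp at hw; linarith
  have hdl : DifferentiableOn ℂ (logDeriv g) (ball 0 R) := by
    have : DifferentiableOn ℂ (deriv g) (ball 0 R) := hg.deriv isOpen_ball
    exact this.div hg hne
  have hldd : ∀ z ∈ ball (0 : ℂ) (R / 8), ‖deriv (logDeriv g) z‖ ≤ 64 * K / R ^ 2 := by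
    intro z hz
    simp at hz
    have hsub : closedBall z (R / 8) ⊆ ball 0 R := by
      intro w hw
      have : ‖w‖ ≤ ‖z‖ + ‖w - z‖ := by
        have := norm_add_le z (w - z); simpa using this
      simp [dist_eq_norm] at hw ⊢; linarith
    refine (norm_deriv_le_of_forall_mem_sphere_norm_le (C := 8 * K / R) (R := R / 8) (by linarith)
      (hdl.diffContOnCl_ball hsub) ?_).trans ?_
    · intro w hw
      apply hld
      have : ‖w‖ ≤ ‖z‖ + ‖w - z‖ := by
        have := norm_add_le z (w - z); simpa using this
      simp at hw; linarith
    · rw [div_div_eq_mul_div, div_mul_eq_mul_div, div_div]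
      apply le_of_eq
      congr 1 <;> ring
  have := (convex_ball (0 : ℂ) (R / 8)).norm_image_sub_le_of_norm_deriv_le (f := logDeriv g)
    (fun z hz => hdl.differentiableAt (isOpen_ball.mem_nhds
      (ball_subset_ball (by linarith) hz))) hldd (x := s') (y := s) (by simpa using hs')
      (by simpa using hs)
  exact this

lemma order_ne_top_of_entire {f : ℂ → ℂ} (hf : Differentiable ℂ f) (h0 : f 0 ≠ 0) (z : ℂ) :
    analyticOrderAt f z ≠ ⊤ := by
  intro h
  rw [analyticOrderAt_eq_top] at h
  have ha : AnalyticOnNhd ℂ f univ := fun z _ => hf.analyticAt z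
  exact h0 (ha.eqOn_zero_of_preconnected_of_eventuallyEq_zero isPreconnected_univ (mem_univ z) h
    (mem_univ 0))

lemma order_sub_pow {ρ z : ℂ} (h : z ≠ ρ) (n : ℕ) :
    analyticOrderAt (fun s : ℂ => (s - ρ) ^ n) z = 0 := by
  rw [analyticOrderAt_eq_zero]
  right
  exact pow_ne_zero _ (sub_ne_zero.2 h)

/-- Dividing an entire function by the full power of `s - ρ` leaves an entire function. -/
lemma exists_div_pow {f : ℂ → ℂ} (hf : Differentiable ℂ f) (ρ : ℂ)
    (hρ : analyticOrderAt f ρ ≠ ⊤) :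
    ∃ g : ℂ → ℂ, Differentiable ℂ g ∧ g ρ ≠ 0 ∧
      ∀ s, f s = (s - ρ) ^ analyticOrderNatAt f ρ * g s := by
  obtain ⟨g0, hg0, hne, hev⟩ := (hf.analyticAt ρ).analyticOrderAt_ne_top.1 hρ
  set n := analyticOrderNatAt f ρ
  refine ⟨fun s => if s = ρ then g0 ρ else f s / (s - ρ) ^ n, ?_, by simpa using hne, ?_⟩
  · intro z
    by_cases hz : z = ρ
    · subst hz
      refine hg0.differentiableAt.congr_of_eventuallyEq ?_
      filter_upwards [hev] with s hs
      split_ifs with h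
      · rw [h]
      · rw [hs, smul_eq_mul]
        have := pow_ne_zero n (sub_ne_zero.2 h)
        field_simp
    · have : DifferentiableAt ℂ (fun s => f s / (s - ρ) ^ n) z :=
        (hf z).div (by fun_prop) (pow_ne_zero _ (sub_ne_zero.2 hz))
      refine this.congr_of_eventuallyEq ?_
      filter_upwards [isOpen_ne.mem_nhds hz] with s hs
      simp [show s ≠ ρ from hs]
  · intro s
    by_cases hs : s = ρ
    · subst hs
      have := hev.self_of_nhds
      simpa using this
    · have := pow_ne_zero n (sub_ne_zero.2 hs)
      simp [hs]; field_simp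

/-- Finitely many zeros can be divided out of an entire function, with multiplicity. -/
lemma exists_factor {f : ℂ → ℂ} (hf : Differentiable ℂ f) (h0 : f 0 ≠ 0) (S : Finset ℂ) :
    ∃ g : ℂ → ℂ, Differentiable ℂ g ∧ (∀ ρ ∈ S, g ρ ≠ 0) ∧
      (∀ ρ ∉ S, analyticOrderAt g ρ = analyticOrderAt f ρ) ∧
      ∀ s, f s = (∏ ρ ∈ S, (s - ρ) ^ analyticOrderNatAt f ρ) * g s := by
  induction S using Finset.induction_on with
  | empty => exact ⟨f, hf, by simp, by simp, by simp⟩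
  | insert ρ S hρ ih =>
    obtain ⟨g, hg, hgne, hord, hfac⟩ := ih
    have ht : analyticOrderAt g ρ ≠ ⊤ := by
      rw [hord ρ hρ]; exact order_ne_top_of_entire hf h0 ρ
    obtain ⟨k, hk, hkne, hkf⟩ := exists_div_pow hg ρ ht
    have hn : analyticOrderNatAt g ρ = analyticOrderNatAt f ρ := by
      simp [analyticOrderNatAt, hord ρ hρ]
    rw [hn] at hkf
    refine ⟨k, hk, ?_, ?_, ?_⟩
    · intro z hz
      rcases Finset.mem_insert.1 hz with rfl | hz
      · exact hkne
      · intro hk0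
        exact hgne z hz (by rw [hkf, hk0, mul_zero])
    · intro z hz
      simp only [Finset.mem_insert, not_or] at hz
      rw [← hord z hz.2]
      have : g = (fun s => (s - ρ) ^ analyticOrderNatAt f ρ) * k := funext hkf
      conv_rhs => rw [this]
      rw [analyticOrderAt_mul (by fun_prop) (hk.analyticAt z), order_sub_pow hz.1, zero_add]
    · intro s
      rw [Finset.prod_insert hρ, hfac s, hkf s]; ring


/-- The zeros of a nonzero entire function in a disc form a finite set. -/
lemma finite_zeros {f : ℂ → ℂ} (hf : Differentiable ℂ f) (h0 : f 0 ≠ 0) (R : ℝ) :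
    {ρ : ℂ | f ρ = 0 ∧ ‖ρ‖ ≤ R}.Finite := by
  have ha : AnalyticOnNhd ℂ f univ := fun z _ => hf.analyticAt z
  have hc : IsCompact (closedBall (0 : ℂ) R) := isCompact_closedBall 0 R
  by_contra hinf
  obtain ⟨z, hz, hacc⟩ := Set.Infinite.exists_accPt_of_subset_isCompact hinf hc
    (fun z hz => by simpa using hz.2)
  have hfr : ∃ᶠ w in 𝓝[≠] z, f w = 0 := by
    rw [accPt_iff_frequently] at hacc
    rw [frequently_nhdsWithin_iff]
    exact hacc.mono fun w hw => ⟨hw.2.1, hw.1⟩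
  exact h0 (ha.eqOn_zero_of_preconnected_of_frequently_eq_zero isPreconnected_univ (mem_univ z) hfr
    (mem_univ 0))

/-- The finite set of zeros of `f` in the closed disc of radius `R` about `0`. -/
noncomputable def zerosIn (f : ℂ → ℂ) (R : ℝ) : Finset ℂ :=
  open Classical in if h : {ρ : ℂ | f ρ = 0 ∧ ‖ρ‖ ≤ R}.Finite then h.toFinset else ∅

lemma mem_zerosIn {f : ℂ → ℂ} (hf : Differentiable ℂ f) (h0 : f 0 ≠ 0) {R : ℝ} {ρ : ℂ} :
    ρ ∈ zerosIn f R ↔ f ρ = 0 ∧ ‖ρ‖ ≤ R := by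
  simp [zerosIn, finite_zeros hf h0 R]

/-- Partial fractions for the logarithmic derivative of an entire function of order less than two,
in differenced form, with the zeros taken in growing discs. -/
theorem tendsto_partial_fractions {f : ℂ → ℂ} (hf : Differentiable ℂ f) (h0 : f 0 ≠ 0)
    {C : ℝ} (hC : ∀ s, ‖f s‖ ≤ ‖f 0‖ * Real.exp (C * (1 + ‖s‖) ^ (3 / 2 : ℝ)))
    {s s' : ℂ} (hs : f s ≠ 0) (hs' : f s' ≠ 0) :
    Tendsto (fun R : ℝ => ∑ ρ ∈ zerosIn f R,
      (analyticOrderNatAt f ρ : ℂ) * (1 / (s - ρ) - 1 / (s' - ρ))) atTop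
      (𝓝 (logDeriv f s - logDeriv f s')) := by
  have hCpos : 0 ≤ C := by
    have h1 := hC 0
    have h2 : 0 < ‖f 0‖ := norm_pos_iff.2 h0
    have : 1 ≤ Real.exp (C * (1 + ‖(0 : ℂ)‖) ^ (3 / 2 : ℝ)) := by
      by_contra hlt
      push Not at hlt
      nlinarith
    have := Real.one_le_exp_iff.1 this
    simpa using this
  have hf0 : 0 < ‖f 0‖ := norm_pos_iff.2 h0
  set K : ℝ → ℝ := fun R => (C + 1) * (1 + 2 * R) ^ (3 / 2 : ℝ) with hKdef
  -- the error term at radius `R`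
  have main : ∀ R : ℝ, 8 * (‖s‖ + ‖s'‖ + 1) < R →
      ‖(∑ ρ ∈ zerosIn f R, (analyticOrderNatAt f ρ : ℂ) * (1 / (s - ρ) - 1 / (s' - ρ))) -
        (logDeriv f s - logDeriv f s')‖ ≤ 64 * K R / R ^ 2 * ‖s - s'‖ := by
    intro R hR
    have hRp : 0 < R := by have := norm_nonneg s; have := norm_nonneg s'; linarith
    obtain ⟨g, hg, hgne, -, hfac⟩ := exists_factor hf h0 (zerosIn f R)
    have hgnz : ∀ z : ℂ, ‖z‖ ≤ R → g z ≠ 0 := by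
      intro z hz
      by_cases hzS : z ∈ zerosIn f R
      · exact hgne z hzS
      · intro hg0
        exact hzS ((mem_zerosIn hf h0).2 ⟨by rw [hfac, hg0, mul_zero], hz⟩)
    have hsphere : ∀ z : ℂ, ‖z‖ = 2 * R → ‖g z‖ ≤ ‖g 0‖ * Real.exp (K R) := by
      intro z hz
      have h1 := hfac z
      have h2 := hfac 0
      have hprod : ‖∏ ρ ∈ zerosIn f R, (0 - ρ) ^ analyticOrderNatAt f ρ‖ ≤
          ‖∏ ρ ∈ zerosIn f R, (z - ρ) ^ analyticOrderNatAt f ρ‖ := by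
        rw [norm_prod, norm_prod]
        refine Finset.prod_le_prod (fun _ _ => norm_nonneg _) fun ρ hρ => ?_
        rw [norm_pow, norm_pow]
        have hρR := ((mem_zerosIn hf h0).1 hρ).2
        refine pow_le_pow_left₀ (norm_nonneg _) ?_ _
        rw [zero_sub, norm_neg]
        have := norm_sub_norm_le z ρ
        linarith
      set p := ‖∏ ρ ∈ zerosIn f R, (z - ρ) ^ analyticOrderNatAt f ρ‖
      set p0 := ‖∏ ρ ∈ zerosIn f R, (0 - ρ) ^ analyticOrderNatAt f ρ‖
      have e1 : ‖f z‖ = p * ‖g z‖ := by rw [h1, norm_mul]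
      have e2 : ‖f 0‖ = p0 * ‖g 0‖ := by rw [h2, norm_mul]
      have hp0 : 0 < p0 := by
        rcases (norm_nonneg (∏ ρ ∈ zerosIn f R, (0 - ρ) ^ analyticOrderNatAt f ρ)).lt_or_eq
          with h | h
        · exact h
        · exfalso; rw [e2, show p0 = 0 from h.symm] at hf0; simp at hf0
      have h3 := hC z
      have hKb : C * (1 + ‖z‖) ^ (3 / 2 : ℝ) ≤ K R := by
        rw [hz, hKdef]
        have : 0 ≤ (1 + 2 * R) ^ (3 / 2 : ℝ) := by positivity
        simp only; nlinarith
      have h4 : p * ‖g z‖ ≤ p0 * ‖g 0‖ * Real.exp (K R) := by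
        rw [← e1, ← e2]
        refine h3.trans ?_
        gcongr
      have h5 : p0 * ‖g z‖ ≤ p * ‖g z‖ := mul_le_mul_of_nonneg_right hprod (norm_nonneg _)
      refine le_of_mul_le_mul_left ?_ hp0
      linarith
    have hball : ∀ z ∈ ball (0 : ℂ) R, ‖g z‖ ≤ ‖g 0‖ * Real.exp (K R) := by
      intro z hz
      refine norm_le_of_forall_mem_frontier_norm_le (U := ball (0 : ℂ) (2 * R)) isBounded_ball
        hg.diffContOnCl (fun w hw => ?_) (subset_closure ?_)
      · rw [frontier_ball _ (by positivity)] at hw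
        exact hsphere w (by simpa using hw)
      · simp at hz ⊢; linarith
    have hKpos : 0 < K R := by simp only [hKdef]; positivity
    have hsR : ‖s‖ < R / 8 := by have := norm_nonneg s'; linarith
    have hsR' : ‖s'‖ < R / 8 := by have := norm_nonneg s; linarith
    have hest := logDeriv_sub_le hRp hKpos hg.differentiableOn
      (fun z hz => hgnz z (by simp at hz; exact hz.le)) hball hsR hsR'
    have hlog : ∀ w : ℂ, f w ≠ 0 → ‖w‖ ≤ R → logDeriv f w =
        (∑ ρ ∈ zerosIn f R, (analyticOrderNatAt f ρ : ℂ) * (1 / (w - ρ))) + logDeriv g w := by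
      intro w hw hwR
      have hfe : f = fun s => (∏ ρ ∈ zerosIn f R, (s - ρ) ^ analyticOrderNatAt f ρ) * g s :=
        funext hfac
      have hne : ∀ ρ ∈ zerosIn f R, w - ρ ≠ 0 := by
        intro ρ hρ h
        rw [sub_eq_zero] at h
        exact hw (h ▸ ((mem_zerosIn hf h0).1 hρ).1)
      conv_lhs => rw [hfe]
      rw [logDeriv_mul w (Finset.prod_ne_zero_iff.2 fun ρ hρ => pow_ne_zero _ (hne ρ hρ))
        (hgnz w hwR) (by fun_prop) (hg w),
        logDeriv_prod (𝕜 := ℂ) (f := fun ρ s => (s - ρ) ^ analyticOrderNatAt f ρ)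
          (fun ρ hρ => pow_ne_zero _ (hne ρ hρ)) (by intros; fun_prop)]
      congr 1
      refine Finset.sum_congr rfl fun ρ _ => ?_
      rw [logDeriv_fun_pow (𝕜 := ℂ) (f := fun s => s - ρ) (by fun_prop)]
      simp [logDeriv_apply]
    rw [hlog s hs (by linarith), hlog s' hs' (by linarith), norm_sub_rev]
    refine le_trans (le_of_eq ?_) hest
    congr 1
    have hS : ∑ ρ ∈ zerosIn f R, (analyticOrderNatAt f ρ : ℂ) * (1 / (s - ρ) - 1 / (s' - ρ)) =
        (∑ ρ ∈ zerosIn f R, (analyticOrderNatAt f ρ : ℂ) * (1 / (s - ρ))) -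
        ∑ ρ ∈ zerosIn f R, (analyticOrderNatAt f ρ : ℂ) * (1 / (s' - ρ)) := by
      rw [← Finset.sum_sub_distrib]
      exact Finset.sum_congr rfl fun _ _ => by ring
    rw [hS]; ring
  rw [tendsto_iff_norm_sub_tendsto_zero]
  have hlim : Tendsto (fun R : ℝ => (64 * (C + 1) * 3 ^ (3 / 2 : ℝ) * ‖s - s'‖) *
      R ^ (-(1 / 2) : ℝ)) atTop (𝓝 0) := by
    have := (tendsto_rpow_neg_atTop (y := 1 / 2) (by norm_num)).const_mul
      (64 * (C + 1) * 3 ^ (3 / 2 : ℝ) * ‖s - s'‖)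
    simpa using this
  refine squeeze_zero' (Eventually.of_forall fun _ => norm_nonneg _) ?_ hlim
  filter_upwards [eventually_gt_atTop (8 * (‖s‖ + ‖s'‖ + 1)), eventually_ge_atTop 1] with R hR hR1
  refine (main R hR).trans ?_
  have hRp : 0 < R := by linarith
  have h1 : (1 + 2 * R) ^ (3 / 2 : ℝ) ≤ 3 ^ (3 / 2 : ℝ) * R ^ (3 / 2 : ℝ) := by
    rw [← Real.mul_rpow (by norm_num) hRp.le]
    exact Real.rpow_le_rpow (by positivity) (by linarith) (by norm_num)
  have h2 : R ^ (-(1 / 2) : ℝ) = R ^ (3 / 2 : ℝ) / R ^ 2 := by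
    rw [← Real.rpow_natCast, ← Real.rpow_sub hRp]; norm_num
  rw [h2, hKdef]
  calc 64 * ((C + 1) * (1 + 2 * R) ^ (3 / 2 : ℝ)) / R ^ 2 * ‖s - s'‖
      ≤ 64 * ((C + 1) * (3 ^ (3 / 2 : ℝ) * R ^ (3 / 2 : ℝ))) / R ^ 2 * ‖s - s'‖ := by gcongr
    _ = _ := by ring

/-! ### The completed zeta function -/

/-- Riemann's entire function `s (s - 1) π^(-s/2) Γ(s/2) ζ(s)`, normalised so that `xi 0 = 1`. -/
noncomputable def xi (s : ℂ) : ℂ := s * (s - 1) * completedRiemannZeta₀ s + 1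

lemma differentiable_xi : Differentiable ℂ xi := by
  unfold xi
  have := differentiable_completedZeta₀
  fun_prop

@[simp] lemma xi_zero : xi 0 = 1 := by simp [xi]

@[simp] lemma xi_one : xi 1 = 1 := by simp [xi]

lemma xi_one_sub (s : ℂ) : xi (1 - s) = xi s := by
  simp only [xi, completedRiemannZeta₀_one_sub]; ring

lemma xi_eq_completed {s : ℂ} (h0 : s ≠ 0) (h1 : s ≠ 1) :
    xi s = s * (s - 1) * completedRiemannZeta s := by
  have h1' : 1 - s ≠ 0 := sub_ne_zero.2 (Ne.symm h1)
  rw [completedRiemannZeta_eq, xi]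
  field_simp
  ring

lemma xi_eq {s : ℂ} (hs : 0 < s.re) (h1 : s ≠ 1) :
    xi s = s * (s - 1) * (Gammaℝ s * riemannZeta s) := by
  have h0 : s ≠ 0 := by rintro rfl; simp at hs
  rw [xi_eq_completed h0 h1, riemannZeta_def_of_ne_zero h0,
    mul_div_cancel₀ _ (Gammaℝ_ne_zero_of_re_pos hs)]

lemma xi_ne_zero_of_one_le_re {s : ℂ} (hs : 1 ≤ s.re) : xi s ≠ 0 := by
  by_cases h1 : s = 1
  · simp [h1]
  · have h0 : s ≠ 0 := by rintro rfl; norm_num at hs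
    rw [xi_eq (by linarith) h1]
    exact mul_ne_zero (mul_ne_zero h0 (sub_ne_zero.2 h1))
      (mul_ne_zero (Gammaℝ_ne_zero_of_re_pos (by linarith))
        (riemannZeta_ne_zero_of_one_le_re hs))

lemma xi_zero_re {ρ : ℂ} (h : xi ρ = 0) : 0 < ρ.re ∧ ρ.re < 1 := by
  constructor
  · by_contra hlt
    push Not at hlt
    refine xi_ne_zero_of_one_le_re (s := 1 - ρ) (by simp; linarith) ?_
    rw [xi_one_sub, h]
  · by_contra hlt
    push Not at hlt
    exact xi_ne_zero_of_one_le_re hlt h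

lemma xi_conj (s : ℂ) : xi ((starRingEnd ℂ) s) = (starRingEnd ℂ) (xi s) := by
  have hgd : Differentiable ℂ (fun z => (starRingEnd ℂ) (xi ((starRingEnd ℂ) z))) := fun z =>
    differentiableAt_conj_conj_iff.mpr (differentiable_xi _)
  have hga : AnalyticOnNhd ℂ (fun z => (starRingEnd ℂ) (xi ((starRingEnd ℂ) z))) univ :=
    fun z _ => hgd.analyticAt z
  have hfa : AnalyticOnNhd ℂ xi univ := fun z _ => differentiable_xi.analyticAt z
  have hΓ : ∀ z : ℂ, Gammaℝ ((starRingEnd ℂ) z) = (starRingEnd ℂ) (Gammaℝ z) := by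
    intro z
    rw [Gammaℝ_def, Gammaℝ_def, map_mul, ← Complex.Gamma_conj]
    congr 1
    · have := Complex.cpow_conj (Real.pi : ℂ) (-z / 2) (by
        rw [arg_ofReal_of_nonneg Real.pi_pos.le]; exact Real.pi_pos.ne)
      rw [conj_ofReal] at this
      rw [← this]; simp [Complex.conj_ofNat]
    · simp [Complex.conj_ofNat]
  have hev : (fun z => (starRingEnd ℂ) (xi ((starRingEnd ℂ) z))) =ᶠ[𝓝 2] xi := by
    have : {z : ℂ | 1 < z.re} ∈ 𝓝 (2 : ℂ) :=
      (isOpen_lt continuous_const continuous_re).mem_nhds (by simp)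
    filter_upwards [this] with z hz
    have hz' : 1 < z.re := hz
    have h1 : z ≠ 1 := by rintro rfl; simp at hz'
    have h1' : (starRingEnd ℂ) z ≠ 1 := by
      intro h; apply h1; rw [← conj_conj z, h, map_one]
    rw [xi_eq (by simp; linarith) h1', xi_eq (by linarith) h1, hΓ, riemannZeta_conj]
    simp
  have := hga.eqOn_of_preconnected_of_eventuallyEq hfa isPreconnected_univ (mem_univ 2) hev
    (mem_univ s)
  simp only at this
  rw [← this, conj_conj]

/-- In the strip `1/2 ≤ Re s ≤ 2` the completed zeta function is bounded, being a Mellin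
transform. -/
lemma exists_bound_strip : ∃ K : ℝ, 0 ≤ K ∧ ∀ s : ℂ, 1 / 2 ≤ s.re → s.re ≤ 2 →
    ‖completedRiemannZeta₀ s‖ ≤ K := by
  set P := HurwitzZeta.hurwitzEvenFEPair 0
  have hconv : ∀ w : ℂ, MellinConvergent P.f_modif w := fun w =>
    (P.isStrongFEPair_toStrongFEPair.hasMellin w).1
  set F : ℝ → ℝ := fun t => ‖(t : ℂ) ^ ((1 / 4 : ℂ) - 1) • P.f_modif t‖ +
    ‖(t : ℂ) ^ ((1 : ℂ) - 1) • P.f_modif t‖ with hF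
  have hFint : IntegrableOn F (Ioi 0) := ((hconv (1 / 4)).norm.add (hconv 1).norm)
  refine ⟨∫ t in Ioi (0 : ℝ), F t, integral_nonneg fun t => by positivity, fun s hs1 hs2 => ?_⟩
  have h1 : completedRiemannZeta₀ s = mellin P.f_modif (s / 2) / 2 := rfl
  have h2 : ‖mellin P.f_modif (s / 2)‖ ≤ ∫ t in Ioi (0 : ℝ), F t := by
    refine (norm_integral_le_integral_norm _).trans ?_
    refine setIntegral_mono_on (hconv (s / 2)).norm hFint measurableSet_Ioi fun t ht => ?_
    have ht : 0 < t := ht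
    simp only [hF, norm_smul, norm_cpow_eq_rpow_re_of_pos ht, ← add_mul]
    gcongr
    have e1 : (s / 2 - 1).re = s.re / 2 - 1 := by simp
    have e2 : ((1 / 4 : ℂ) - 1).re = 1 / 4 - 1 := by norm_num
    rw [e1, e2, sub_self, zero_re, Real.rpow_zero]
    rcases le_total t 1 with h | h
    · have := Real.rpow_le_rpow_of_exponent_ge ht h (show (1 / 4 - 1 : ℝ) ≤ s.re / 2 - 1 by linarith)
      linarith
    · have := Real.rpow_le_rpow_of_exponent_le h (show s.re / 2 - 1 ≤ (0 : ℝ) by linarith)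
      rw [Real.rpow_zero] at this
      have : 0 ≤ t ^ (1 / 4 - 1 : ℝ) := by positivity
      linarith
  rw [h1, norm_div]
  have : 0 ≤ ‖mellin P.f_modif (s / 2)‖ := norm_nonneg _
  simp; linarith

lemma norm_Gamma_le {s : ℂ} (hs : 0 < s.re) : ‖Complex.Gamma s‖ ≤ Real.Gamma s.re := by
  rw [Complex.Gamma_eq_integral hs, Real.Gamma_eq_integral hs, Complex.GammaIntegral]
  refine (norm_integral_le_integral_norm _).trans (le_of_eq ?_)
  refine setIntegral_congr_fun measurableSet_Ioi fun t ht => ?_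
  have ht : 0 < t := ht
  simp only [norm_mul, norm_cpow_eq_rpow_re_of_pos ht, norm_real, Real.norm_eq_abs,
    abs_of_pos (Real.exp_pos _)]
  simp

lemma Gamma_le_exp {x : ℝ} (hx : 1 ≤ x) : Real.Gamma x ≤ Real.exp (2 * (x + 1) ^ (3 / 2 : ℝ)) := by
  have h1 : Real.Gamma x ≤ Real.Gamma (x + 1) := by
    rw [Real.Gamma_add_one (by linarith)]
    have := Real.Gamma_pos_of_pos (show 0 < x by linarith)
    nlinarith
  have h2 : Real.Gamma (x + 1) ≤ Real.Gamma (⌈x⌉₊ + 1) := by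
    apply Real.Gamma_strictMonoOn_Ici.monotoneOn
    · simp; linarith
    · have := Nat.le_ceil x; simp; linarith
    · have := Nat.le_ceil x; linarith
  have hn : (⌈x⌉₊ : ℝ) ≤ x + 1 := (Nat.ceil_lt_add_one (by linarith)).le
  have h3 : Real.Gamma (⌈x⌉₊ + 1) ≤ (x + 1) ^ (x + 1) := by
    rw [Real.Gamma_nat_eq_factorial]
    calc ((Nat.factorial ⌈x⌉₊ : ℕ) : ℝ) ≤ (⌈x⌉₊ : ℝ) ^ ⌈x⌉₊ := by
          exact_mod_cast Nat.factorial_le_pow _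
      _ ≤ (x + 1) ^ ⌈x⌉₊ := by gcongr
      _ = (x + 1) ^ (⌈x⌉₊ : ℝ) := (Real.rpow_natCast _ _).symm
      _ ≤ (x + 1) ^ (x + 1) := Real.rpow_le_rpow_of_exponent_le (by linarith) hn
  refine h1.trans (h2.trans (h3.trans ?_))
  rw [Real.rpow_def_of_pos (by linarith)]
  apply Real.exp_le_exp.2
  have hy : 0 < x + 1 := by linarith
  have h4 : Real.log (x + 1) ≤ 2 * (x + 1) ^ (1 / 2 : ℝ) := by
    have := Real.log_le_rpow_div hy.le (show (0 : ℝ) < 1 / 2 by norm_num)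
    linarith
  have h5 : (x + 1) ^ (3 / 2 : ℝ) = (x + 1) ^ (1 / 2 : ℝ) * (x + 1) := by
    rw [← Real.rpow_add_one hy.ne']; norm_num
  rw [h5]
  nlinarith

lemma norm_zeta_le {s : ℂ} (hs : 2 ≤ s.re) : ‖riemannZeta s‖ ≤ ∑' n : ℕ, 1 / (n : ℝ) ^ (2 : ℝ) := by
  rw [zeta_eq_tsum_one_div_nat_cpow (by linarith)]
  have hsum : Summable fun n : ℕ => 1 / (n : ℝ) ^ (2 : ℝ) :=
    Real.summable_one_div_nat_rpow.2 (by norm_num)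
  refine tsum_of_norm_bounded hsum.hasSum fun n => ?_
  rcases Nat.eq_zero_or_pos n with rfl | hn
  · have : s ≠ 0 := by rintro rfl; norm_num at hs
    simp [this]
  · rw [norm_div, norm_one, norm_natCast_cpow_of_pos hn]
    have : (1 : ℝ) ≤ n := by exact_mod_cast hn
    gcongr

/-- `xi` has order less than two. -/
lemma exists_xi_growth : ∃ C : ℝ, ∀ s, ‖xi s‖ ≤ ‖xi 0‖ * Real.exp (C * (1 + ‖s‖) ^ (3 / 2 : ℝ)) := by
  obtain ⟨K, hK0, hK⟩ := exists_bound_strip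
  set Z := ∑' n : ℕ, 1 / (n : ℝ) ^ (2 : ℝ) with hZ
  have hZ0 : 0 ≤ Z := tsum_nonneg fun n => by positivity
  set C := 5 + K + Z with hCdef
  have hu : ∀ s : ℂ, 1 + ‖s‖ ≤ (1 + ‖s‖) ^ (3 / 2 : ℝ) := fun s => by
    have := Real.rpow_le_rpow_of_exponent_le (show 1 ≤ 1 + ‖s‖ by linarith [norm_nonneg s])
      (show (1 : ℝ) ≤ 3 / 2 by norm_num)
    simpa using this
  have hquad : ∀ s : ℂ, ‖s * (s - 1)‖ ≤ Real.exp (2 * (1 + ‖s‖) ^ (3 / 2 : ℝ)) := by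
    intro s
    have h1 : ‖s * (s - 1)‖ ≤ (1 + ‖s‖) ^ 2 := by
      rw [norm_mul]
      have : ‖s - 1‖ ≤ ‖s‖ + 1 := by simpa using norm_sub_le s 1
      nlinarith [norm_nonneg s]
    have h2 : 1 + ‖s‖ ≤ Real.exp ((1 + ‖s‖) ^ (3 / 2 : ℝ)) := by
      have := Real.add_one_le_exp ((1 + ‖s‖) ^ (3 / 2 : ℝ))
      linarith [hu s]
    calc ‖s * (s - 1)‖ ≤ (1 + ‖s‖) ^ 2 := h1
      _ ≤ (Real.exp ((1 + ‖s‖) ^ (3 / 2 : ℝ))) ^ 2 := by gcongr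
      _ = _ := by rw [← Real.exp_nat_mul]; norm_num
  have half : ∀ s : ℂ, 1 / 2 ≤ s.re → ‖xi s‖ ≤ Real.exp (C * (1 + ‖s‖) ^ (3 / 2 : ℝ)) := by
    intro s hs
    have hu1 : 1 ≤ (1 + ‖s‖) ^ (3 / 2 : ℝ) := by linarith [hu s, norm_nonneg s]
    set u := (1 + ‖s‖) ^ (3 / 2 : ℝ)
    rcases le_total s.re 2 with h2 | h2
    · have h3 : ‖xi s‖ ≤ Real.exp (2 * u) * K + 1 := by
        unfold xi
        refine (norm_add_le _ _).trans ?_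
        rw [norm_mul, norm_one]
        gcongr
        · exact hquad s
        · exact hK s hs h2
      have h4 : 1 ≤ Real.exp (2 * u) := Real.one_le_exp (by linarith)
      have h5 : K + 1 ≤ Real.exp K := Real.add_one_le_exp K
      calc ‖xi s‖ ≤ Real.exp (2 * u) * (K + 1) := by linarith
        _ ≤ Real.exp (2 * u) * Real.exp K := by gcongr
        _ = Real.exp (2 * u + K) := by rw [Real.exp_add]
        _ ≤ _ := by apply Real.exp_le_exp.2; nlinarith
    · have h1 : s ≠ 1 := by rintro rfl; norm_num at h2
      rw [xi_eq (by linarith) h1, norm_mul (s * (s - 1)), norm_mul (Gammaℝ s)]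
      have hG : ‖Gammaℝ s‖ ≤ Real.exp (2 * u) := by
        rw [Gammaℝ_def, norm_mul, norm_cpow_eq_rpow_re_of_pos Real.pi_pos]
        have e1 : (-s / 2).re = -(s.re / 2) := by simp; ring
        have e2 : (s / 2).re = s.re / 2 := by simp
        have hp : Real.pi ^ (-s / 2).re ≤ 1 := by
          rw [e1]
          exact Real.rpow_le_one_of_one_le_of_nonpos (by linarith [Real.pi_gt_three]) (by linarith)
        have hg := norm_Gamma_le (s := s / 2) (by rw [e2]; linarith)
        rw [e2] at hg
        have hg2 := Gamma_le_exp (x := s.re / 2) (by linarith)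
        have hle : (s.re / 2 + 1) ^ (3 / 2 : ℝ) ≤ u := by
          apply Real.rpow_le_rpow (by linarith) _ (by norm_num)
          have := (le_abs_self _).trans (abs_re_le_norm s)
          linarith
        calc _ ≤ 1 * ‖Complex.Gamma (s / 2)‖ := by gcongr
          _ ≤ Real.exp (2 * (s.re / 2 + 1) ^ (3 / 2 : ℝ)) := by rw [one_mul]; exact hg.trans hg2
          _ ≤ _ := by gcongr
      have hz := norm_zeta_le h2
      have hz2 : Z ≤ Real.exp Z := by linarith [Real.add_one_le_exp Z]
      calc _ ≤ Real.exp (2 * u) * (Real.exp (2 * u) * Real.exp Z) := by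
            gcongr
            · exact hquad s
            · exact hz.trans hz2
        _ = Real.exp (2 * u + (2 * u + Z)) := by rw [Real.exp_add, Real.exp_add]
        _ ≤ _ := by apply Real.exp_le_exp.2; nlinarith
  refine ⟨3 * C, fun s => ?_⟩
  have hC0 : 0 ≤ C := by positivity
  rw [xi_zero, norm_one, one_mul]
  rcases le_total (1 / 2) s.re with h | h
  · refine (half s h).trans (Real.exp_le_exp.2 ?_)
    have : 0 ≤ (1 + ‖s‖) ^ (3 / 2 : ℝ) := by positivity
    nlinarith
  · rw [← xi_one_sub]
    refine (half (1 - s) (by simp; linarith)).trans (Real.exp_le_exp.2 ?_)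
    have h1 : 1 + ‖1 - s‖ ≤ 2 * (1 + ‖s‖) := by
      have : ‖1 - s‖ ≤ 1 + ‖s‖ := by simpa using norm_sub_le 1 s
      linarith [norm_nonneg s]
    have h2 : (1 + ‖1 - s‖) ^ (3 / 2 : ℝ) ≤ 3 * (1 + ‖s‖) ^ (3 / 2 : ℝ) := by
      refine (Real.rpow_le_rpow (by positivity) h1 (by norm_num)).trans ?_
      rw [Real.mul_rpow (by norm_num) (by positivity)]
      gcongr
      have h8 : ((2 : ℝ) ^ (3 / 2 : ℝ)) ^ 2 = 8 := by
        rw [← Real.rpow_natCast, ← Real.rpow_mul (by norm_num)]; norm_num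
      nlinarith [Real.rpow_pos_of_pos (show (0 : ℝ) < 2 by norm_num) (3 / 2)]
    nlinarith

/-! ### The zeros and the partial fraction expansion -/

/-- The multiplicity of `ρ` as a zero of `xi`; it vanishes when `ρ` is not a zero. -/
noncomputable def mu (ρ : ℂ) : ℝ := (analyticOrderNatAt xi ρ : ℝ)

lemma xi_zero_ne : xi 0 ≠ 0 := by simp

lemma mu_nonneg (ρ : ℂ) : 0 ≤ mu ρ := Nat.cast_nonneg _

lemma xi_order_ne_top (ρ : ℂ) : analyticOrderAt xi ρ ≠ ⊤ :=
  order_ne_top_of_entire differentiable_xi xi_zero_ne ρ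

lemma mu_eq_zero {ρ : ℂ} (h : xi ρ ≠ 0) : mu ρ = 0 := by
  simp [mu, analyticOrderNatAt, analyticOrderAt_eq_zero.2 (Or.inr h)]

lemma one_le_mu {ρ : ℂ} (h : xi ρ = 0) : 1 ≤ mu ρ := by
  unfold mu
  have h1 : analyticOrderNatAt xi ρ ≠ 0 := by
    intro h0
    have h2 : analyticOrderAt xi ρ = 0 := by
      rw [← Nat.cast_analyticOrderNatAt (xi_order_ne_top ρ), h0]; rfl
    rcases analyticOrderAt_eq_zero.1 h2 with h3 | h3
    · exact h3 (differentiable_xi.analyticAt ρ)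
    · exact h3 h
  exact_mod_cast Nat.one_le_iff_ne_zero.2 h1

lemma xi_eq_zero_of_mu {ρ : ℂ} (h : mu ρ ≠ 0) : xi ρ = 0 := by
  by_contra hne; exact h (mu_eq_zero hne)

lemma order_eq_of_factor {ρ : ℂ} {n : ℕ} {k : ℂ → ℂ} (hk : Differentiable ℂ k) (hne : k ρ ≠ 0)
    (h : ∀ s, xi s = (s - ρ) ^ n * k s) : analyticOrderNatAt xi ρ = n := by
  have : analyticOrderAt xi ρ = n :=
    ((differentiable_xi.analyticAt ρ).analyticOrderAt_eq_natCast).2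
      ⟨k, hk.analyticAt ρ, hne, Eventually.of_forall h⟩
  simp [analyticOrderNatAt, this]

lemma mu_one_sub (ρ : ℂ) : mu (1 - ρ) = mu ρ := by
  obtain ⟨g, hg, hne, hfac⟩ := exists_div_pow differentiable_xi ρ (xi_order_ne_top ρ)
  unfold mu
  congr 1
  set n := analyticOrderNatAt xi ρ
  refine order_eq_of_factor (k := fun s => (-1) ^ n * g (1 - s)) ?_ ?_ fun s => ?_
  · fun_prop
  · simpa using hne
  · rw [← xi_one_sub, hfac, ← mul_assoc, ← mul_pow]
    congr 2; ring

lemma mu_conj (ρ : ℂ) : mu ((starRingEnd ℂ) ρ) = mu ρ := by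
  obtain ⟨g, hg, hne, hfac⟩ := exists_div_pow differentiable_xi ρ (xi_order_ne_top ρ)
  unfold mu
  congr 1
  set n := analyticOrderNatAt xi ρ
  refine order_eq_of_factor (k := fun s => (starRingEnd ℂ) (g ((starRingEnd ℂ) s))) ?_ ?_
    fun s => ?_
  · exact fun z => differentiableAt_conj_conj_iff.mpr (hg _)
  · simpa using hne
  · rw [← conj_conj (xi s), ← xi_conj, hfac]
    simp

lemma xi_logDeriv_one_sub (s : ℂ) : logDeriv xi (1 - s) = -logDeriv xi s := by
  have h1 : HasDerivAt (fun z => xi (1 - z)) (-deriv xi (1 - s)) s := by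
    have := (differentiable_xi (1 - s)).hasDerivAt.comp s ((hasDerivAt_id s).const_sub 1)
    refine HasDerivAt.congr_deriv this ?_
    simp
  have h2 : (fun z => xi (1 - z)) = xi := funext xi_one_sub
  rw [h2] at h1
  rw [logDeriv_apply, logDeriv_apply, xi_one_sub, h1.deriv]
  ring

lemma tendsto_xi_partial_fractions {s s' : ℂ} (hs : xi s ≠ 0) (hs' : xi s' ≠ 0) :
    Tendsto (fun R : ℝ => ∑ ρ ∈ zerosIn xi R, (mu ρ : ℂ) * (1 / (s - ρ) - 1 / (s' - ρ))) atTop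
      (𝓝 (logDeriv xi s - logDeriv xi s')) := by
  obtain ⟨C, hC⟩ := exists_xi_growth
  have := tendsto_partial_fractions differentiable_xi xi_zero_ne hC hs hs'
  simpa [mu] using this

/-- The value of `xi'/xi` at `1`. -/
noncomputable def B : ℝ := (logDeriv xi 1).re

/-- The real part of the paired term is `β / |ρ|² + (1 - β) / |1 - ρ|²`, and both denominators are
at most `1 + γ²`. -/
lemma re_term_ge {ρ : ℂ} (h : xi ρ = 0) : 1 / (1 + ρ.im ^ 2) ≤ (1 / (1 - ρ) - 1 / (0 - ρ)).re := by
  obtain ⟨h0, h1⟩ := xi_zero_re h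
  set b := ρ.re with hb
  set g := ρ.im with hg
  have e1 : (1 / (1 - ρ) - 1 / (0 - ρ)).re = (1 - b) / ((1 - b) ^ 2 + g ^ 2) + b / (b ^ 2 + g ^ 2) := by
    simp [Complex.normSq_apply]
    simp only [← hb, ← hg]
    rw [show (1 - b) * (1 - b) + g * g = (1 - b) ^ 2 + g ^ 2 by ring,
      show b * b + g * g = b ^ 2 + g ^ 2 by ring]
  rw [e1]
  have h2 : (1 - b) / (1 + g ^ 2) ≤ (1 - b) / ((1 - b) ^ 2 + g ^ 2) := by
    apply div_le_div_of_nonneg_left (by linarith) (by nlinarith [sq_nonneg g]) (by nlinarith)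
  have h3 : b / (1 + g ^ 2) ≤ b / (b ^ 2 + g ^ 2) := by
    apply div_le_div_of_nonneg_left (by linarith) (by nlinarith [sq_nonneg g]) (by nlinarith)
  calc 1 / (1 + g ^ 2) = (1 - b) / (1 + g ^ 2) + b / (1 + g ^ 2) := by ring
    _ ≤ _ := add_le_add h2 h3

/-- The partial fraction expansion of `ξ'/ξ (1) - ξ'/ξ (0) = 2 ξ'/ξ (1)` has terms with positive real
part, so every finite set of zeros obeys this bound. -/
lemma zerosIn_partial_le (T : Finset ℂ) : ∑ ρ ∈ T, mu ρ / (1 + ρ.im ^ 2) ≤ 2 * B := by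
  classical
  have ht := tendsto_xi_partial_fractions (s := 1) (s' := 0) (by simp) (by simp)
  have hB : (logDeriv xi 1 - logDeriv xi 0).re = 2 * B := by
    have := xi_logDeriv_one_sub 1
    rw [sub_self] at this
    rw [this]; simp [B]; ring
  have ht2 := (continuous_re.tendsto _).comp ht
  rw [hB] at ht2
  refine ge_of_tendsto ht2 ?_
  obtain ⟨R0, hR0⟩ : ∃ R0 : ℝ, ∀ ρ ∈ T, ‖ρ‖ ≤ R0 := by
    obtain ⟨R, hR⟩ := (T.image fun ρ => ‖ρ‖).bddAbove
    exact ⟨R, fun ρ hρ => hR (by simpa using ⟨ρ, hρ, rfl⟩)⟩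
  filter_upwards [eventually_ge_atTop R0] with R hR
  simp only [Function.comp, re_sum, re_ofReal_mul]
  have hge : ∀ ρ ∈ zerosIn xi R, mu ρ / (1 + ρ.im ^ 2) ≤ mu ρ * (1 / (1 - ρ) - 1 / (0 - ρ)).re := by
    intro ρ hρ
    have := re_term_ge ((mem_zerosIn differentiable_xi xi_zero_ne).1 hρ).1
    rw [div_eq_mul_one_div]
    exact mul_le_mul_of_nonneg_left this (mu_nonneg ρ)
  refine le_trans ?_ (Finset.sum_le_sum hge)
  calc ∑ ρ ∈ T, mu ρ / (1 + ρ.im ^ 2)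
      = ∑ ρ ∈ T.filter (fun ρ => xi ρ = 0), mu ρ / (1 + ρ.im ^ 2) := by
        rw [Finset.sum_filter]
        refine Finset.sum_congr rfl fun ρ _ => ?_
        split_ifs with h
        · rfl
        · simp [mu_eq_zero h]
    _ ≤ _ := by
        apply Finset.sum_le_sum_of_subset_of_nonneg
        · intro ρ hρ
          simp only [Finset.mem_filter] at hρ
          exact (mem_zerosIn differentiable_xi xi_zero_ne).2 ⟨hρ.2, (hR0 ρ hρ.1).trans hR⟩
        · intro ρ _ _
          have := mu_nonneg ρ
          positivity

lemma mu_div_nonneg (ρ : ℂ) : 0 ≤ mu ρ / (1 + ρ.im ^ 2) := by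
  have := mu_nonneg ρ
  positivity

lemma summable_mu : Summable fun ρ : ℂ => mu ρ / (1 + ρ.im ^ 2) :=
  summable_of_sum_le mu_div_nonneg zerosIn_partial_le

lemma tsum_mu_le : ∑' ρ : ℂ, mu ρ / (1 + ρ.im ^ 2) ≤ 2 * B :=
  Real.tsum_le_of_sum_le mu_div_nonneg zerosIn_partial_le

lemma eventually_large (R : ℝ) : ∀ᶠ ρ : ℂ in cofinite, xi ρ ≠ 0 ∨ R < ‖ρ‖ := by
  rw [eventually_cofinite]
  refine (finite_zeros differentiable_xi xi_zero_ne R).subset fun ρ hρ => ?_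
  simp only [mem_ofPred_eq, not_or, not_not, not_lt] at hρ
  exact hρ

lemma summable_xi_partial_fractions (s s' : ℂ) :
    Summable fun ρ : ℂ => (mu ρ : ℂ) * (1 / (s - ρ) - 1 / (s' - ρ)) := by
  refine Summable.of_norm_bounded_eventually (g := fun ρ => 8 * ‖s - s'‖ * (mu ρ / (1 + ρ.im ^ 2)))
    (summable_mu.mul_left _) ?_
  filter_upwards [eventually_large (2 * (‖s‖ + ‖s'‖) + 1)] with ρ hρ
  rcases hρ with h | h
  · simp [mu_eq_zero h]
  · have a1 : ‖ρ‖ / 2 ≤ ‖s - ρ‖ := by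
      have := norm_sub_norm_le ρ s; rw [norm_sub_rev] at this
      linarith [norm_nonneg s, norm_nonneg s']
    have a2 : ‖ρ‖ / 2 ≤ ‖s' - ρ‖ := by
      have := norm_sub_norm_le ρ s'; rw [norm_sub_rev] at this
      linarith [norm_nonneg s, norm_nonneg s']
    have hp : 1 < ‖ρ‖ := by linarith [norm_nonneg s, norm_nonneg s']
    have n1 : s - ρ ≠ 0 := norm_pos_iff.1 (by linarith)
    have n2 : s' - ρ ≠ 0 := norm_pos_iff.1 (by linarith)
    have e : 1 / (s - ρ) - 1 / (s' - ρ) = (s' - s) / ((s - ρ) * (s' - ρ)) := by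
      field_simp; ring
    have him : 1 + ρ.im ^ 2 ≤ 2 * ‖ρ‖ ^ 2 := by
      have h3 : ρ.im ^ 2 ≤ ‖ρ‖ ^ 2 := by
        rw [sq_le_sq]; simpa using abs_im_le_norm ρ
      nlinarith
    rw [e, norm_mul, norm_div, norm_mul, norm_real, Real.norm_of_nonneg (mu_nonneg ρ),
      norm_sub_rev s' s]
    have h5 : (1 + ρ.im ^ 2) / 8 ≤ ‖s - ρ‖ * ‖s' - ρ‖ := by
      have : ‖ρ‖ / 2 * (‖ρ‖ / 2) ≤ ‖s - ρ‖ * ‖s' - ρ‖ := by gcongr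
      nlinarith
    calc mu ρ * (‖s - s'‖ / (‖s - ρ‖ * ‖s' - ρ‖)) ≤ mu ρ * (‖s - s'‖ / ((1 + ρ.im ^ 2) / 8)) := by
          have := mu_nonneg ρ
          gcongr
      _ = _ := by field_simp

/-- The partial fraction expansion of `xi'/xi`. -/
theorem hasSum_xi_partial_fractions {s s' : ℂ} (hs : xi s ≠ 0) (hs' : xi s' ≠ 0) :
    HasSum (fun ρ : ℂ => (mu ρ : ℂ) * (1 / (s - ρ) - 1 / (s' - ρ)))
      (logDeriv xi s - logDeriv xi s') := by
  classical
  have hsum := summable_xi_partial_fractions s s'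
  set F := fun ρ : ℂ => (mu ρ : ℂ) * (1 / (s - ρ) - 1 / (s' - ρ)) with hF
  have h1 : Tendsto (fun R : ℝ => ∑' ρ : ℂ, if ρ ∈ zerosIn xi R then F ρ else 0) atTop
      (𝓝 (∑' ρ, F ρ)) := by
    refine tendsto_tsum_of_dominated_convergence hsum.norm (fun ρ => ?_)
      (Eventually.of_forall fun R ρ => ?_)
    · refine tendsto_const_nhds.congr' ?_
      filter_upwards [eventually_ge_atTop ‖ρ‖] with R hR
      split_ifs with h
      · rfl
      · have : xi ρ ≠ 0 := fun h0 => h ((mem_zerosIn differentiable_xi xi_zero_ne).2 ⟨h0, hR⟩)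
        simp [hF, mu_eq_zero this]
    · split_ifs
      · exact le_rfl
      · simp
  have h2 := tendsto_xi_partial_fractions hs hs'
  have h3 : (fun R : ℝ => ∑' ρ : ℂ, if ρ ∈ zerosIn xi R then F ρ else 0) =
      fun R : ℝ => ∑ ρ ∈ zerosIn xi R, F ρ := by
    funext R
    rw [tsum_eq_sum (s := zerosIn xi R)]
    · exact Finset.sum_congr rfl fun ρ h => by simp [h]
    · intro ρ h; simp [h]
  rw [h3] at h1
  rw [← tendsto_nhds_unique h1 h2]
  exact hsum.hasSum

lemma re_one_div_pos {s ρ : ℂ} (hs : 1 < s.re) (h : xi ρ = 0) : 0 < (1 / (s - ρ)).re := by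
  have := (xi_zero_re h).2
  rw [one_div, Complex.inv_re]
  have h1 : 0 < (s - ρ).re := by simp; linarith
  have h2 : s - ρ ≠ 0 := by intro h0; rw [h0] at h1; simp at h1
  exact div_pos h1 (normSq_pos.2 h2)

/-- To the right of the critical strip every zero contributes positively to `Re (xi'/xi)`. -/
theorem hasSum_mu_re {s : ℂ} (hs : 1 < s.re) :
    HasSum (fun ρ : ℂ => mu ρ * (1 / (s - ρ)).re) (logDeriv xi s).re := by
  have hx : xi s ≠ 0 := xi_ne_zero_of_one_le_re hs.le
  have h1 := hasSum_xi_partial_fractions hx (s' := 1 - s) (by rwa [xi_one_sub])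
  rw [xi_logDeriv_one_sub] at h1
  have h2 := Complex.hasSum_re h1
  have e : ∀ ρ : ℂ, ((mu ρ : ℂ) * (1 / (s - ρ) - 1 / (1 - s - ρ))).re =
      mu ρ * (1 / (s - ρ)).re + mu (1 - ρ) * (1 / (s - (1 - ρ))).re := by
    intro ρ
    rw [mu_one_sub, re_ofReal_mul, ← mul_add, ← add_re]
    congr 2
    rw [show s - (1 - ρ) = -(1 - s - ρ) by ring, div_neg]; ring
  simp only [e] at h2
  have hnn : ∀ ρ : ℂ, 0 ≤ mu ρ * (1 / (s - ρ)).re := by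
    intro ρ
    by_cases h : xi ρ = 0
    · exact mul_nonneg (mu_nonneg ρ) (re_one_div_pos hs h).le
    · simp [mu_eq_zero h]
  have hS : Summable fun ρ : ℂ => mu ρ * (1 / (s - ρ)).re :=
    Summable.of_nonneg_of_le hnn (fun ρ => by linarith [hnn (1 - ρ)]) h2.summable
  have h3 := hS.hasSum
  have h4 : HasSum (fun ρ : ℂ => mu (1 - ρ) * (1 / (s - (1 - ρ))).re)
      (∑' ρ : ℂ, mu ρ * (1 / (s - ρ)).re) :=
    (Equiv.subLeft (1 : ℂ)).hasSum_iff.2 h3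
  have h5 := (h3.add h4).unique h2
  have : (logDeriv xi s - -logDeriv xi s).re = 2 * (logDeriv xi s).re := by
    simp; ring
  rw [this] at h5
  rw [show (logDeriv xi s).re = ∑' ρ : ℂ, mu ρ * (1 / (s - ρ)).re by linarith]
  exact h3

/-! ### The digamma function -/

lemma ne_neg_nat_of_re_pos {z : ℂ} (hz : 0 < z.re) (m : ℕ) : z ≠ -(m : ℂ) := by
  rintro rfl
  have : (0 : ℝ) ≤ m := m.cast_nonneg
  simp at hz; linarith

lemma digamma_ofReal {x : ℝ} (hx : 0 < x) :
    ∃ d : ℝ, digamma (x : ℂ) = d ∧ HasDerivAt (Real.log ∘ Real.Gamma) d x := by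
  have hne : ∀ m : ℕ, x ≠ -(m : ℝ) := fun m h => by
    have : (0 : ℝ) ≤ m := m.cast_nonneg
    linarith
  have h1 : HasDerivAt Real.Gamma (deriv Real.Gamma x) x :=
    (Real.differentiableAt_Gamma hne).hasDerivAt
  have h2 : HasDerivAt (fun y : ℝ => Complex.Gamma (y : ℂ)) (deriv Complex.Gamma (x : ℂ)) x :=
    ((differentiableAt_Gamma _ (ne_neg_nat_of_re_pos (by simpa using hx))).hasDerivAt).comp_ofReal
  have h3 : HasDerivAt (fun y : ℝ => Complex.Gamma (y : ℂ)) ((deriv Real.Gamma x : ℝ) : ℂ) x := by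
    simp only [Complex.Gamma_ofReal]
    exact h1.ofReal_comp
  have h4 := h2.unique h3
  have hG := Real.Gamma_pos_of_pos hx
  refine ⟨deriv Real.Gamma x / Real.Gamma x, ?_, ?_⟩
  · rw [digamma, logDeriv_apply, h4, Complex.Gamma_ofReal]; push_cast; rfl
  · exact h1.log hG.ne'

/-- Convexity of `log Γ` pins the digamma function between two logarithms. -/
lemma digamma_real_bounds {x : ℝ} (hx : 0 < x) :
    (digamma (x : ℂ)).re ≤ Real.log x ∧ Real.log x ≤ (digamma ((x : ℂ) + 1)).re := by
  have hs : slope (Real.log ∘ Real.Gamma) x (x + 1) = Real.log x := by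
    have hG := Real.Gamma_pos_of_pos hx
    rw [slope_def_field]
    simp only [Function.comp, Real.Gamma_add_one hx.ne']
    rw [Real.log_mul hx.ne' hG.ne']
    field_simp; ring
  constructor
  · obtain ⟨d, hd, hder⟩ := digamma_ofReal hx
    rw [hd, ofReal_re, ← hs]
    exact Real.convexOn_log_Gamma.le_slope_of_hasDerivAt hx (show 0 < x + 1 by linarith)
      (by linarith) hder
  · obtain ⟨d, hd, hder⟩ := digamma_ofReal (show 0 < x + 1 by linarith)
    have : (x : ℂ) + 1 = ((x + 1 : ℝ) : ℂ) := by push_cast; rfl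
    rw [this, hd, ofReal_re, ← hs]
    exact Real.convexOn_log_Gamma.slope_le_of_hasDerivAt hx (show 0 < x + 1 by linarith)
      (by linarith) hder

lemma digamma_add_nat {z : ℂ} (hz : 0 < z.re) (N : ℕ) :
    digamma (z + N) = digamma z + ∑ j ∈ Finset.range N, 1 / (z + j) := by
  induction N with
  | zero => simp
  | succ N ih =>
    have h : 0 < (z + N).re := by
      have : (0 : ℝ) ≤ N := N.cast_nonneg
      simp; linarith
    rw [Finset.sum_range_succ, ← add_assoc, ← ih, Nat.cast_succ, ← add_assoc,
      digamma_apply_add_one _ (ne_neg_nat_of_re_pos h), one_div]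

/-- The digamma function at large real points is asymptotic to the logarithm. -/
lemma tendsto_digamma_sub_log {x : ℝ} (hx : 0 < x) :
    Tendsto (fun N : ℕ => digamma ((x : ℂ) + N) - (Real.log N : ℂ)) atTop (𝓝 0) := by
  have hreal : ∀ N : ℕ, digamma ((x : ℂ) + N) = ((digamma ((x : ℂ) + N)).re : ℂ) := by
    intro N
    obtain ⟨d, hd, -⟩ := digamma_ofReal (show 0 < x + N by positivity)
    push_cast at hd
    rw [hd]; simp
  have h0 : Tendsto (fun N : ℕ => (digamma ((x : ℂ) + N)).re - Real.log N) atTop (𝓝 0) := by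
    have lim : ∀ a : ℝ, Tendsto (fun N : ℕ => Real.log (a + N) - Real.log N) atTop (𝓝 0) := by
      intro a
      have h1 : Tendsto (fun N : ℕ => Real.log (1 + a / N)) atTop (𝓝 (Real.log (1 + 0))) := by
        refine (Real.continuousAt_log (by norm_num)).tendsto.comp ?_
        exact (tendsto_const_div_atTop_nhds_zero_nat a).const_add 1
      simp only [add_zero, Real.log_one] at h1
      refine h1.congr' ?_
      obtain ⟨M, hM⟩ := exists_nat_gt |a|
      filter_upwards [eventually_ge_atTop (M + 1)] with N hN
      have hN' : (M : ℝ) + 1 ≤ N := by exact_mod_cast hN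
      have hN0 : (0 : ℝ) < N := by have := abs_nonneg a; linarith
      have haN : 0 < a + N := by have := neg_abs_le a; linarith
      rw [← Real.log_div haN.ne' hN0.ne']
      congr 1; field_simp; ring
    refine tendsto_of_tendsto_of_tendsto_of_le_of_le' (lim (x - 1)) (lim x) ?_ ?_
    · filter_upwards [eventually_ge_atTop 1] with N hN
      have hN' : (1 : ℝ) ≤ N := by exact_mod_cast hN
      have := (digamma_real_bounds (show 0 < x - 1 + N by linarith)).2
      push_cast at this
      rw [show (x : ℂ) - 1 + N + 1 = x + N by ring] at this
      linarith
    · refine Eventually.of_forall fun N => ?_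
      have := (digamma_real_bounds (show 0 < x + N by positivity)).1
      push_cast at this
      linarith
  have := (continuous_ofReal.tendsto 0).comp h0
  refine (this.congr fun N => ?_)
  simp only [Function.comp]
  rw [hreal N]; push_cast; simp

lemma norm_nat_add_ge {z : ℂ} (hz : 0 < z.re) (n : ℕ) : (n : ℝ) ≤ ‖(n : ℂ) + z‖ := by
  have := (le_abs_self _).trans (abs_re_le_norm ((n : ℂ) + z))
  simp at this; linarith

lemma digamma_series_bound {z : ℂ} {M : ℝ} (hz : 0 < z.re) (hM : ‖z‖ ≤ M) (n : ℕ) :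
    ‖1 / ((n : ℂ) + 1 + 1) - 1 / ((n : ℂ) + 1 + z)‖ ≤ (M + 1) * (1 / ((n : ℝ) + 1) ^ 2) := by
  have hn : (0 : ℝ) < (n : ℝ) + 1 := by positivity
  have a1 : (n : ℝ) + 1 ≤ ‖((n : ℂ) + 1 + 1)‖ := by
    have := norm_nat_add_ge (z := 1) (by simp) (n + 1); push_cast at this; exact this
  have a2 : (n : ℝ) + 1 ≤ ‖((n : ℂ) + 1 + z)‖ := by
    have := norm_nat_add_ge hz (n + 1); push_cast at this; exact this
  have n1 : ((n : ℂ) + 1 + 1) ≠ 0 := norm_pos_iff.1 (by linarith)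
  have n2 : ((n : ℂ) + 1 + z) ≠ 0 := norm_pos_iff.1 (by linarith)
  have e : 1 / ((n : ℂ) + 1 + 1) - 1 / ((n : ℂ) + 1 + z) =
      (z - 1) / (((n : ℂ) + 1 + 1) * ((n : ℂ) + 1 + z)) := by
    field_simp; ring
  have h3 : ‖z - 1‖ ≤ M + 1 := by
    have : ‖z - 1‖ ≤ ‖z‖ + 1 := by simpa using norm_sub_le z 1
    linarith
  have hM1 : 0 ≤ M + 1 := (norm_nonneg _).trans h3
  rw [e, norm_div, norm_mul, mul_one_div, sq]
  gcongr

lemma summable_digamma {z : ℂ} (hz : 0 < z.re) :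
    Summable fun n : ℕ => 1 / ((n : ℂ) + 1) - 1 / ((n : ℂ) + z) := by
  rw [← summable_nat_add_iff 1]
  refine Summable.of_norm_bounded (g := fun n : ℕ => (‖z‖ + 1) * (1 / ((n : ℝ) + 1) ^ 2)) ?_
    fun n => ?_
  · refine Summable.mul_left _ ?_
    have := (summable_nat_add_iff 1).2 (Real.summable_one_div_nat_pow.2 (show 1 < 2 by norm_num))
    simpa using this
  · have := digamma_series_bound hz le_rfl n
    push_cast; exact this

lemma hasSum_digamma_real {x : ℝ} (hx : 0 < x) :
    HasSum (fun n : ℕ => 1 / ((n : ℂ) + 1) - 1 / ((n : ℂ) + x)) (digamma x - digamma 1) := by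
  have hs := summable_digamma (z := x) (by simpa using hx)
  have h1 := hs.hasSum.tendsto_sum_nat
  have h2 : Tendsto (fun N : ℕ => (digamma x - digamma 1) -
      ((digamma ((x : ℂ) + N) - (Real.log N : ℂ)) - (digamma (((1 : ℝ) : ℂ) + N) - (Real.log N : ℂ))))
      atTop (𝓝 ((digamma x - digamma 1) - (0 - 0))) :=
    ((tendsto_digamma_sub_log hx).sub (tendsto_digamma_sub_log one_pos)).const_sub _
  have h3 : ∀ N : ℕ, (digamma x - digamma 1) -
      ((digamma ((x : ℂ) + N) - (Real.log N : ℂ)) - (digamma (((1 : ℝ) : ℂ) + N) - (Real.log N : ℂ)))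
      = ∑ i ∈ Finset.range N, (1 / ((i : ℂ) + 1) - 1 / ((i : ℂ) + x)) := by
    intro N
    rw [digamma_add_nat (z := x) (by simpa using hx), digamma_add_nat (z := ((1 : ℝ) : ℂ)) (by simp)]
    rw [Finset.sum_sub_distrib]
    simp only [ofReal_one, add_comm]
    ring
  rw [sub_zero, sub_zero] at h2
  have h4 := tendsto_nhds_unique h1 (h2.congr h3)
  rw [← h4]; exact hs.hasSum

/-- The series for the digamma function in the right half-plane. It holds on the positive reals by
convexity and extends by the identity theorem. -/
lemma hasSum_digamma_one {z : ℂ} (hz : 0 < z.re) :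
    HasSum (fun n : ℕ => 1 / ((n : ℂ) + 1) - 1 / ((n : ℂ) + z)) (digamma z - digamma 1) := by
  set M := ‖z‖ + 2 with hM
  set U : Set ℂ := {w | 0 < w.re} ∩ ball 0 M with hU
  have hUo : IsOpen U := (isOpen_lt continuous_const continuous_re).inter isOpen_ball
  have hUc : IsPreconnected U :=
    ((convex_halfSpace_re_gt 0).inter (convex_ball 0 M)).isPreconnected
  set F : ℂ → ℂ := fun w => (1 - 1 / w) + ∑' n : ℕ, (1 / ((n : ℂ) + 1 + 1) - 1 / ((n : ℂ) + 1 + w))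
  have hFeq : ∀ w : ℂ, 0 < w.re → F w = ∑' n : ℕ, (1 / ((n : ℂ) + 1) - 1 / ((n : ℂ) + w)) := by
    intro w hw
    rw [(summable_digamma hw).tsum_eq_zero_add]
    simp [F]
  have hFd : DifferentiableOn ℂ F U := by
    refine DifferentiableOn.add ?_ ?_
    · intro w hw
      have : w ≠ 0 := by rintro rfl; simpa using hw.1
      have : DifferentiableAt ℂ (fun w : ℂ => 1 - 1 / w) w := by fun_prop (disch := assumption)
      exact this.differentiableWithinAt
    · refine differentiableOn_tsum_of_summable_norm
        (u := fun n : ℕ => (M + 1) * (1 / ((n : ℝ) + 1) ^ 2)) ?_ ?_ hUo ?_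
      · refine Summable.mul_left _ ?_
        have := (summable_nat_add_iff 1).2
          (Real.summable_one_div_nat_pow.2 (show 1 < 2 by norm_num))
        simpa using this
      · intro n w hw
        have h1 : (n : ℂ) + 1 + w ≠ 0 := by
          have h2 := norm_nat_add_ge hw.1 (n + 1)
          push_cast at h2
          exact norm_pos_iff.1 (lt_of_lt_of_le (by positivity) h2)
        have : DifferentiableAt ℂ
            (fun w : ℂ => 1 / ((n : ℂ) + 1 + 1) - 1 / ((n : ℂ) + 1 + w)) w := by
          fun_prop (disch := assumption)
        exact this.differentiableWithinAt
      · intro n w hw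
        exact digamma_series_bound hw.1 (by have := hw.2; simp at this; exact this.le) n
  have hψd : DifferentiableOn ℂ (fun w => digamma w - digamma 1) U := by
    intro w hw
    have hV : IsOpen {w : ℂ | 0 < w.re} := isOpen_lt continuous_const continuous_re
    have hGd : DifferentiableOn ℂ Complex.Gamma {w : ℂ | 0 < w.re} := fun v hv =>
      (differentiableAt_Gamma v (ne_neg_nat_of_re_pos hv)).differentiableWithinAt
    have h1 : DifferentiableAt ℂ (deriv Complex.Gamma) w :=
      (hGd.deriv hV).differentiableAt (hV.mem_nhds hw.1)
    have h2 : DifferentiableAt ℂ Complex.Gamma w := hGd.differentiableAt (hV.mem_nhds hw.1)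
    have : DifferentiableAt ℂ digamma w :=
      h1.div h2 (Complex.Gamma_ne_zero_of_re_pos hw.1)
    exact (this.sub_const _).differentiableWithinAt
  have h1U : (1 : ℂ) ∈ U := ⟨by simp, by simp [hM]; linarith [norm_nonneg z]⟩
  have hzU : z ∈ U := ⟨hz, by simp [hM]⟩
  have hfreq : ∃ᶠ w in 𝓝[≠] (1 : ℂ), F w = digamma w - digamma 1 := by
    have htend : Tendsto (fun n : ℕ => ((1 + 1 / ((n : ℝ) + 1) : ℝ) : ℂ)) atTop (𝓝[≠] 1) := by
      refine tendsto_nhdsWithin_iff.2 ⟨?_, Eventually.of_forall fun n => ?_⟩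
      · have := (tendsto_one_div_add_atTop_nhds_zero_nat (𝕜 := ℝ)).const_add 1
        have h2 := (continuous_ofReal.tendsto _).comp this
        simpa [Function.comp_def] using h2
      · simp only [mem_compl_iff, mem_singleton_iff]
        have : (0 : ℝ) < 1 / ((n : ℝ) + 1) := by positivity
        intro h
        have h2 : (1 + 1 / ((n : ℝ) + 1) : ℝ) = 1 := by exact_mod_cast h
        linarith
    refine htend.frequently (Frequently.of_forall fun n => ?_)
    have hp : (0 : ℝ) < 1 + 1 / ((n : ℝ) + 1) := by positivity
    rw [hFeq _ (by rw [ofReal_re]; exact hp)]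
    exact (hasSum_digamma_real hp).tsum_eq
  have heq := (hFd.analyticOnNhd hUo).eqOn_of_preconnected_of_frequently_eq
    (hψd.analyticOnNhd hUo) hUc h1U hfreq hzU
  simp only at heq
  rw [← heq, hFeq z hz]
  exact (summable_digamma hz).hasSum

lemma hasSum_digamma {z w : ℂ} (hz : 0 < z.re) (hw : 0 < w.re) :
    HasSum (fun n : ℕ => 1 / ((n : ℂ) + w) - 1 / ((n : ℂ) + z)) (digamma z - digamma w) := by
  have := (hasSum_digamma_one hz).sub (hasSum_digamma_one hw)
  rw [sub_sub_sub_cancel_right] at this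
  rw [show (fun n : ℕ => 1 / ((n : ℂ) + w) - 1 / ((n : ℂ) + z)) = fun n : ℕ =>
    (1 / ((n : ℂ) + 1) - 1 / ((n : ℂ) + z)) - (1 / ((n : ℂ) + 1) - 1 / ((n : ℂ) + w)) from
    funext fun n => by ring]
  exact this

/-- A second-order comparison of `Re (1 / w)` with a difference of logarithms, used to telescope the
digamma series. -/
lemma re_one_div_ge {w : ℂ} (hw : 0 < w.re) :
    Real.log ‖w + 1‖ - Real.log ‖w‖ - 1 / (2 * ‖w‖ ^ 2) ≤ (1 / w).re := by
  have h0 : w ≠ 0 := by rintro rfl; simp at hw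
  have h1 : w + 1 ≠ 0 := by intro h; have := congrArg re h; simp at this; linarith
  have hn : 0 < ‖w‖ := norm_pos_iff.2 h0
  have hn1 : 0 < ‖w + 1‖ := norm_pos_iff.2 h1
  have e1 : ‖w + 1‖ ^ 2 = ‖w‖ ^ 2 + 2 * w.re + 1 := by
    rw [← normSq_eq_norm_sq, ← normSq_eq_norm_sq, normSq_apply, normSq_apply]; simp; ring
  have e2 : (1 / w).re = w.re / ‖w‖ ^ 2 := by
    rw [one_div, inv_re, normSq_eq_norm_sq]
  have h3 := Real.log_le_sub_one_of_pos (show 0 < ‖w + 1‖ ^ 2 / ‖w‖ ^ 2 by positivity)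
  rw [Real.log_div (by positivity) (by positivity), Real.log_pow, Real.log_pow, e1] at h3
  rw [e2]
  have h4 : (‖w‖ ^ 2 + 2 * w.re + 1) / ‖w‖ ^ 2 - 1 = 2 * (w.re / ‖w‖ ^ 2 + 1 / (2 * ‖w‖ ^ 2)) := by
    field_simp; ring
  rw [h4] at h3
  push_cast at h3
  linarith

/-- An upper bound of Stirling type for the real part of the digamma function. -/
lemma re_digamma_le {z : ℂ} (hz : 0 < z.re) {E : ℝ}
    (hE : ∀ N : ℕ, ∑ j ∈ Finset.range N, 1 / ‖z + j‖ ^ 2 ≤ E) :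
    (digamma z).re ≤ Real.log ‖z‖ + E / 2 := by
  have hzj : ∀ j : ℕ, 0 < (z + j).re := fun j => by
    have : (0 : ℝ) ≤ j := j.cast_nonneg
    simp; linarith
  have hsum : ∀ N : ℕ, Real.log ‖z + N‖ - Real.log ‖z‖ - E / 2 ≤
      (∑ j ∈ Finset.range N, 1 / (z + j)).re := by
    intro N
    have h1 : Real.log ‖z + N‖ - Real.log ‖z‖ - (∑ j ∈ Finset.range N, 1 / ‖z + j‖ ^ 2) / 2 ≤
        (∑ j ∈ Finset.range N, 1 / (z + j)).re := by
      induction N with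
      | zero => simp
      | succ N ih =>
        rw [Finset.sum_range_succ, Finset.sum_range_succ, add_re]
        have h2 := re_one_div_ge (hzj N)
        rw [show z + N + 1 = z + (N + 1 : ℕ) by push_cast; ring] at h2
        have h3 : 1 / (2 * ‖z + N‖ ^ 2) = (1 / ‖z + N‖ ^ 2) / 2 := by
          rw [div_div, mul_comm]
        linarith
    linarith [hE N]
  have hup : ∀ N : ℕ, ((digamma z).re - Real.log ‖z‖ - E / 2) ≤
      (digamma (z + N)).re - Real.log ‖z + N‖ := by
    intro N
    have := congrArg re (digamma_add_nat hz N)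
    rw [add_re] at this
    linarith [hsum N]
  have hlim : Tendsto (fun N : ℕ => (digamma (z + N)).re - Real.log N) atTop (𝓝 0) := by
    have hs := (hasSum_digamma_one hz).tendsto_sum_nat
    have h1 := tendsto_digamma_sub_log one_pos
    have h2 : Tendsto (fun N : ℕ => (digamma z - digamma 1) -
        (∑ i ∈ Finset.range N, (1 / ((i : ℂ) + 1) - 1 / ((i : ℂ) + z))) +
        (digamma (((1 : ℝ) : ℂ) + N) - (Real.log N : ℂ))) atTop
        (𝓝 ((digamma z - digamma 1) - (digamma z - digamma 1) + 0)) :=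
      (hs.const_sub _).add h1
    have h3 := (continuous_re.tendsto _).comp h2
    simp only [sub_self, add_zero, zero_re] at h3
    refine h3.congr fun N => ?_
    simp only [Function.comp]
    rw [digamma_add_nat hz, digamma_add_nat (z := ((1 : ℝ) : ℂ)) (by simp), Finset.sum_sub_distrib]
    simp only [add_comm, ofReal_one, add_re, sub_re, ofReal_re]
    ring
  have key : (digamma z).re - Real.log ‖z‖ - E / 2 ≤ 0 := by
    refine ge_of_tendsto hlim ?_
    filter_upwards [eventually_ge_atTop 1] with N hN
    refine (hup N).trans ?_
    have : (1 : ℝ) ≤ N := by exact_mod_cast hN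
    have h2 : (N : ℝ) ≤ ‖z + N‖ := by
      have := norm_nat_add_ge hz N; rwa [add_comm] at this
    have := Real.log_le_log (by linarith) h2
    linarith
  linarith

/-! ### Bounds for logarithms and for Euler's constant -/

/-- Upper bound for `log y` from the series of `2 artanh x` at `x = (y - 1) / (y + 1)`. -/
lemma log_le_of_series {y : ℝ} (n : ℕ) {x : ℝ} (h0 : 0 ≤ x) (h1 : x < 1) {b : ℝ}
    (hy : y = (1 + x) / (1 - x))
    (hb : 2 * ((∑ i ∈ Finset.range n, x ^ (2 * i + 1) / (2 * i + 1)) +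
      x ^ (2 * n + 1) / (1 - x ^ 2)) ≤ b) : Real.log y ≤ b := by
  have := Real.log_div_le_sum_range_add h0 h1 n
  rw [hy]; linarith

/-- Lower bound for `log y` from the same series. -/
lemma le_log_of_series {y : ℝ} (n : ℕ) {x : ℝ} (h0 : 0 ≤ x) (h1 : x < 1) {b : ℝ}
    (hy : y = (1 + x) / (1 - x))
    (hb : b ≤ 2 * (∑ i ∈ Finset.range n, x ^ (2 * i + 1) / (2 * i + 1))) : b ≤ Real.log y := by
  have := Real.sum_range_le_log_div h0 h1 n
  rw [hy]; linarith

lemma log_succ_div_le {n : ℕ} (hn : 1 ≤ n) :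
    Real.log ((n + 1 : ℕ) : ℝ) - Real.log n ≤ (1 / n + 1 / (n + 1)) / 2 := by
  have hn' : (0 : ℝ) < n := by exact_mod_cast hn
  have hx : (0 : ℝ) < (n + 1) / n := by positivity
  have h1 : (0 : ℝ) ≤ Real.log ((n + 1) / n) := Real.log_nonneg (by rw [le_div_iff₀ hn']; linarith)
  have := Real.self_le_sinh_iff.2 h1
  rw [Real.sinh_eq, Real.exp_log hx, Real.exp_neg, Real.exp_log hx, Real.log_div (by positivity)
    (by positivity)] at this
  push_cast
  refine this.trans (le_of_eq ?_)
  field_simp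
  ring

lemma log_succ_div_ge {n : ℕ} (hn : 1 ≤ n) :
    (1 / n + 1 / (n + 1)) / 2 - (1 / n ^ 2 - 1 / (n + 1) ^ 2) / 12 ≤
      Real.log ((n + 1 : ℕ) : ℝ) - Real.log n := by
  have hn' : (1 : ℝ) ≤ n := by exact_mod_cast hn
  rw [← Real.log_div (by positivity) (by positivity)]
  refine le_log_of_series 2 (x := 1 / (2 * n + 1)) (by positivity) ?_ ?_ ?_
  · rw [div_lt_one (by positivity)]; linarith
  · push_cast
    have : (2 * (n : ℝ) + 1) ≠ 0 := by positivity
    have h2 : (1 - 1 / (2 * (n : ℝ) + 1)) ≠ 0 := by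
      rw [one_sub_div this]; apply div_ne_zero _ this; simp; linarith
    field_simp
    ring
  · simp only [Finset.sum_range_succ, Finset.sum_range_zero]
    norm_num
    rw [← sub_nonneg]
    have : 2 * ((2 * (n : ℝ) + 1)⁻¹ + ((2 * (n : ℝ) + 1) ^ 3)⁻¹ / 3) +
      (((n : ℝ) ^ 2)⁻¹ - ((n + 1 : ℝ) ^ 2)⁻¹) / 12 - ((n : ℝ)⁻¹ + (n + 1 : ℝ)⁻¹) / 2 =
      (1 + 2 * n + 2 * n ^ 2) / (12 * n ^ 2 * (n + 1) ^ 2 * (2 * n + 1) ^ 3) := by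
      field_simp; ring
    rw [this]; positivity

/-- Euler's constant to within `1 / (12 n ^ 2)`. -/
lemma gamma_bounds {n : ℕ} (hn : 1 ≤ n) :
    (harmonic n : ℝ) - Real.log n - 1 / (2 * n) ≤ Real.eulerMascheroniConstant ∧
    Real.eulerMascheroniConstant ≤
      (harmonic n : ℝ) - Real.log n - 1 / (2 * n) + 1 / (12 * n ^ 2) := by
  have hH : ∀ m : ℕ, (harmonic (m + 1) : ℝ) = harmonic m + 1 / (m + 1) := by
    intro m; rw [harmonic_succ]; push_cast; ring
  have hinv : Tendsto (fun m : ℕ => 1 / (2 * (m : ℝ))) atTop (𝓝 0) := by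
    have := (tendsto_one_div_atTop_nhds_zero_nat (𝕜 := ℝ)).const_mul (1 / 2)
    rw [mul_zero] at this
    exact this.congr fun m => by rw [one_div_mul_one_div]
  have hinv2 : Tendsto (fun m : ℕ => 1 / (12 * (m : ℝ) ^ 2)) atTop (𝓝 0) := by
    have := ((tendsto_one_div_atTop_nhds_zero_nat (𝕜 := ℝ)).pow 2).const_mul (1 / 12)
    norm_num at this
    exact this.congr fun m => by field_simp
  have h1 := Real.tendsto_harmonic_sub_log.sub hinv
  have h2 := h1.add hinv2
  rw [sub_zero] at h1 h2
  rw [add_zero] at h2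
  have up : ∀ m : ℕ, n ≤ m → (harmonic n : ℝ) - Real.log n - 1 / (2 * n) ≤
      (harmonic m : ℝ) - Real.log m - 1 / (2 * m) := by
    intro m hm
    induction m, hm using Nat.le_induction with
    | base => exact le_rfl
    | succ m hm ih =>
      have := log_succ_div_le (hn.trans hm)
      have hm0 : (0 : ℝ) < m := by exact_mod_cast hn.trans hm
      rw [hH]
      have e : (1 : ℝ) / (2 * m) = (1 / m) / 2 := by field_simp
      have e' : (1 : ℝ) / (2 * (m + 1 : ℕ)) = (1 / (m + 1)) / 2 := by push_cast; field_simp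
      rw [e'] ; rw [e] at ih
      linarith
  have dn : ∀ m : ℕ, n ≤ m →
      (harmonic m : ℝ) - Real.log m - 1 / (2 * m) + 1 / (12 * m ^ 2) ≤
      (harmonic n : ℝ) - Real.log n - 1 / (2 * n) + 1 / (12 * n ^ 2) := by
    intro m hm
    induction m, hm using Nat.le_induction with
    | base => exact le_rfl
    | succ m hm ih =>
      have := log_succ_div_ge (hn.trans hm)
      have hm0 : (0 : ℝ) < m := by exact_mod_cast hn.trans hm
      rw [hH]
      have e : (1 : ℝ) / (2 * m) = (1 / m) / 2 := by field_simp
      have e' : (1 : ℝ) / (2 * (m + 1 : ℕ)) = (1 / (m + 1)) / 2 := by push_cast; field_simp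
      have e2 : (1 : ℝ) / (12 * m ^ 2) = (1 / m ^ 2) / 12 := by field_simp
      have e2' : (1 : ℝ) / (12 * (m + 1 : ℕ) ^ 2) = (1 / (m + 1) ^ 2) / 12 := by
        push_cast; field_simp
      rw [e', e2'] ; rw [e, e2] at ih
      linarith
  exact ⟨ge_of_tendsto h1 (eventually_atTop.2 ⟨n, up⟩),
    le_of_tendsto h2 (eventually_atTop.2 ⟨n, dn⟩)⟩

lemma gamma_num : 0.577214 ≤ Real.eulerMascheroniConstant ∧
    Real.eulerMascheroniConstant ≤ 0.577216 := by
  obtain ⟨h1, h2⟩ := gamma_bounds (n := 256) (by norm_num)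
  have h3 : Real.log ((256 : ℕ) : ℝ) = 8 * Real.log 2 := by
    rw [show ((256 : ℕ) : ℝ) = 2 ^ 8 by norm_num, Real.log_pow]; norm_num
  have h4 : (6.12434496 : ℝ) ≤ harmonic 256 ∧ (harmonic 256 : ℝ) ≤ 6.12434497 := by
    have : (612434496 / 100000000 : ℚ) ≤ harmonic 256 ∧
        (harmonic 256 : ℚ) ≤ 612434497 / 100000000 := by
      decide +kernel
    have h := (Rat.cast_le (K := ℝ)).2 this.1
    have h' := (Rat.cast_le (K := ℝ)).2 this.2
    push_cast at h h'
    constructor <;> linarith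
  rw [h3] at h1 h2
  have := Real.log_two_gt_d9
  have := Real.log_two_lt_d9
  generalize (harmonic 256 : ℝ) = h at *
  norm_num at h1 h2
  constructor
  · linarith [h4.1]
  · linarith [h4.2]

/-! ### The Gamma factor and the sum of `1 / ρ` -/

/-- The archimedean factor `s Γℝ(s)` of `ξ`, written so that it is visibly regular at `0`. -/
noncomputable def gfac (s : ℂ) : ℂ := (Real.pi : ℂ) ^ (-(s / 2)) * (2 * Complex.Gamma (s / 2 + 1))

/-- The logarithmic derivative of `gfac`. -/
noncomputable def GG (s : ℂ) : ℂ := -(Real.log Real.pi : ℂ) / 2 + digamma (s / 2 + 1) / 2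

lemma gfac_eq {s : ℂ} (hs : 0 < s.re) : gfac s = s * Gammaℝ s := by
  have h0 : s ≠ 0 := by rintro rfl; simp at hs
  rw [gfac, Gammaℝ_def, Complex.Gamma_add_one _ (by simpa using h0)]
  rw [neg_div]; field_simp

lemma half_re_pos {s : ℂ} (hs : -2 < s.re) : 0 < (s / 2 + 1).re := by
  simp; linarith

lemma gfac_ne_zero {s : ℂ} (hs : -2 < s.re) : gfac s ≠ 0 := by
  rw [gfac]
  have h1 : (Real.pi : ℂ) ≠ 0 := by exact_mod_cast Real.pi_ne_zero
  have := Complex.Gamma_ne_zero_of_re_pos (half_re_pos hs)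
  simp [cpow_eq_zero_iff, h1, this]

lemma hasDerivAt_gfac {s : ℂ} (hs : -2 < s.re) : HasDerivAt gfac (gfac s * GG s) s := by
  have hp : (Real.pi : ℂ) ≠ 0 := by exact_mod_cast Real.pi_ne_zero
  have h1 : HasDerivAt (fun s : ℂ => s / 2 + 1) (1 / 2) s := ((hasDerivAt_id s).div_const 2).add_const 1
  have h2 : HasDerivAt (fun s : ℂ => Complex.Gamma (s / 2 + 1))
      (deriv Complex.Gamma (s / 2 + 1) * (1 / 2)) s :=
    (differentiableAt_Gamma _ (ne_neg_nat_of_re_pos (half_re_pos hs))).hasDerivAt.comp s h1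
  have h3 : HasDerivAt (fun s : ℂ => -(s / 2)) (-(1 / 2)) s := ((hasDerivAt_id s).div_const 2).neg
  have h4 := h3.const_cpow (c := (Real.pi : ℂ)) (Or.inl hp)
  have h5 := h4.mul (h2.const_mul 2)
  refine HasDerivAt.congr_deriv (f := gfac) h5 ?_
  have := Complex.Gamma_ne_zero_of_re_pos (half_re_pos hs)
  rw [gfac, GG, digamma_def, logDeriv_apply, Complex.ofReal_log Real.pi_pos.le]
  generalize Complex.Gamma (s / 2 + 1) = u at *
  field_simp

lemma logDeriv_gfac {s : ℂ} (hs : -2 < s.re) : logDeriv gfac s = GG s := by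
  rw [logDeriv_apply, (hasDerivAt_gfac hs).deriv, mul_div_cancel_left₀ _ (gfac_ne_zero hs)]

lemma xi_eq_gfac {s : ℂ} (hs : 0 < s.re) (h1 : s ≠ 1) :
    xi s = gfac s * ((s - 1) * riemannZeta s) := by
  rw [xi_eq hs h1, gfac_eq hs]; ring

lemma logDeriv_xi_eq {s : ℂ} (hs : 1 < s.re) :
    logDeriv xi s = GG s + 1 / (s - 1) + deriv riemannZeta s / riemannZeta s := by
  have h1 : s ≠ 1 := by rintro rfl; simp at hs
  have hz : riemannZeta s ≠ 0 := riemannZeta_ne_zero_of_one_lt_re hs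
  have hev : xi =ᶠ[𝓝 s] fun s => gfac s * ((s - 1) * riemannZeta s) := by
    filter_upwards [(isOpen_lt continuous_const continuous_re).mem_nhds hs] with w hw
    have hw : 1 < w.re := hw
    exact xi_eq_gfac (by linarith) (by rintro rfl; simp at hw)
  have hd := differentiableAt_riemannZeta h1
  rw [logDeriv_apply, hev.deriv_eq, hev.eq_of_nhds, ← logDeriv_apply
    (fun s => gfac s * ((s - 1) * riemannZeta s))]
  have e1 : logDeriv (fun s => (s - 1) * riemannZeta s) s =
      1 / (s - 1) + deriv riemannZeta s / riemannZeta s := by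
    have := logDeriv_mul (f := fun s : ℂ => s - 1) (g := riemannZeta) s (sub_ne_zero.2 h1) hz
      (by fun_prop) hd
    rw [this]
    simp [logDeriv_apply]
  have e2 := logDeriv_mul (f := gfac) (g := fun s => (s - 1) * riemannZeta s) s
    (gfac_ne_zero (by linarith)) (mul_ne_zero (sub_ne_zero.2 h1) hz)
    (hasDerivAt_gfac (by linarith)).differentiableAt
    ((differentiableAt_id.sub_const 1).mul hd)
  rw [e2, e1, logDeriv_gfac (by linarith), add_assoc]

lemma gfac_one : gfac 1 = 1 := by rw [gfac_eq (by simp)]; simp [Gammaℝ_one]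

lemma logDeriv_xi_one : logDeriv xi 1 = GG 1 + Real.eulerMascheroniConstant := by
  have hg := hasDerivAt_gfac (s := 1) (by norm_num)
  have hx : HasDerivAt xi (deriv xi 1) 1 := (differentiable_xi 1).hasDerivAt
  have hq := hx.div hg (gfac_ne_zero (by norm_num))
  rw [gfac_one, xi_one] at hq
  have ht := hasDerivAt_iff_tendsto_slope.1 hq
  have h2 : Tendsto (fun s => riemannZeta s - 1 / (s - 1)) (𝓝[≠] 1)
      (𝓝 ((deriv xi 1 * 1 - 1 * (1 * GG 1)) / 1 ^ 2)) := by
    refine ht.congr' ?_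
    have : {s : ℂ | 0 < s.re} ∈ 𝓝 (1 : ℂ) :=
      (isOpen_lt continuous_const continuous_re).mem_nhds (by simp)
    filter_upwards [self_mem_nhdsWithin, mem_nhdsWithin_of_mem_nhds this] with s hs hs0
    have hs1 : s - 1 ≠ 0 := sub_ne_zero.2 hs
    have hs0 : 0 < s.re := hs0
    simp only [slope, vsub_eq_sub, smul_eq_mul, Pi.div_apply, gfac_one, xi_one]
    rw [xi_eq_gfac hs0 hs, mul_div_cancel_left₀ _ (gfac_ne_zero (by linarith))]
    field_simp
  have := tendsto_nhds_unique h2 tendsto_riemannZeta_sub_one_div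
  rw [logDeriv_apply, xi_one, div_one, ← this]
  ring

/-- The classical closed form of `ξ'/ξ (1)`, which equals `∑ 1 / ρ`. -/
lemma B_eq : B = 1 + Real.eulerMascheroniConstant / 2 - Real.log Real.pi / 2 - Real.log 2 := by
  have h : digamma ((1 : ℂ) / 2 + 1) =
      ((-2 * Real.log 2 - Real.eulerMascheroniConstant + 2 : ℝ) : ℂ) := by
    rw [digamma_apply_add_one _ (fun m => ne_neg_nat_of_re_pos (by norm_num) m), digamma_one_half]
    push_cast [Complex.ofReal_log]
    norm_num
  rw [B, logDeriv_xi_one, GG, h]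
  rw [show -(Real.log Real.pi : ℂ) / 2 + ((-2 * Real.log 2 - Real.eulerMascheroniConstant + 2 : ℝ) : ℂ) / 2
    + (Real.eulerMascheroniConstant : ℂ) = ((-Real.log Real.pi / 2 +
      (-2 * Real.log 2 - Real.eulerMascheroniConstant + 2) / 2 + Real.eulerMascheroniConstant : ℝ) : ℂ)
    by push_cast; ring, ofReal_re]
  ring

lemma log_pi_bounds : 1.14472 ≤ Real.log Real.pi ∧ Real.log Real.pi ≤ 1.14474 := by
  have h1 : Real.log Real.pi = Real.log 3 + Real.log (Real.pi / 3) := by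
    rw [← Real.log_mul (by norm_num) (by positivity)]; congr 1; ring
  have h2 : 1.098612 ≤ Real.log 3 ∧ Real.log 3 ≤ 1.098613 := by
    constructor
    · exact le_log_of_series 10 (x := 1 / 2) (by norm_num) (by norm_num) (by norm_num)
        (by norm_num [Finset.sum_range_succ])
    · exact log_le_of_series 12 (x := 1 / 2) (by norm_num) (by norm_num) (by norm_num)
        (by norm_num [Finset.sum_range_succ])
  have h3 : 0.046116 ≤ Real.log (3.14159 / 3) :=
    le_log_of_series 4 (x := 14159 / 614159) (by norm_num) (by norm_num) (by norm_num)
        (by norm_num [Finset.sum_range_succ])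
  have h4 : Real.log (3.141593 / 3) ≤ 0.046119 :=
    log_le_of_series 4 (x := 141593 / 6141593) (by norm_num) (by norm_num) (by norm_num)
        (by norm_num [Finset.sum_range_succ])
  have h5 : Real.log (3.14159 / 3) ≤ Real.log (Real.pi / 3) :=
    Real.log_le_log (by norm_num) (by linarith [Real.pi_gt_d6])
  have h6 : Real.log (Real.pi / 3) ≤ Real.log (3.141593 / 3) :=
    Real.log_le_log (by positivity) (by linarith [Real.pi_lt_d6])
  constructor <;> linarith

lemma B_le : B ≤ 0.02311 := by
  rw [B_eq]
  linarith [log_pi_bounds.1, gamma_num.2, Real.log_two_gt_d9]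

/-! ### The sum of `1 / |ρ|²` -/

/-- A zero `ρ` and its conjugate together contribute `2 / (1 + γ²)` to a sum that is at most `2 B`;
since `B` is tiny, `γ` cannot be small. -/
lemma im_sq_ge {ρ : ℂ} (h : xi ρ = 0) : 42 ≤ ρ.im ^ 2 := by
  have hB := B_le
  have hm := one_le_mu h
  have h1 := zerosIn_partial_le {ρ}
  rw [Finset.sum_singleton, div_le_iff₀ (by positivity)] at h1
  have him : ρ.im ≠ 0 := by
    intro h0; rw [h0] at h1; nlinarith
  have hne : ρ ≠ (starRingEnd ℂ) ρ := by
    intro h0; have := congrArg im h0; rw [conj_im] at this; apply him; linarith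
  have h2 := zerosIn_partial_le {ρ, (starRingEnd ℂ) ρ}
  rw [Finset.sum_pair hne, mu_conj, conj_im, neg_sq, ← add_div, div_le_iff₀ (by positivity)] at h2
  nlinarith [sq_nonneg ρ.im]

/-- `Σ 1/γ²` over all zeros, in terms of `Σ 1/(1+γ²)`. -/
lemma mu_div_sq_le (ρ : ℂ) : mu ρ / ρ.im ^ 2 ≤ (43 / 42) * (mu ρ / (1 + ρ.im ^ 2)) := by
  by_cases h : xi ρ = 0
  · have h1 := im_sq_ge h
    have h2 := mu_nonneg ρ
    rw [div_le_iff₀ (by linarith), mul_div_assoc', div_mul_eq_mul_div, le_div_iff₀ (by linarith)]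
    nlinarith
  · simp [mu_eq_zero h]

lemma summable_mu_sq : Summable fun ρ : ℂ => mu ρ / ρ.im ^ 2 :=
  Summable.of_nonneg_of_le (fun ρ => div_nonneg (mu_nonneg ρ) (sq_nonneg _)) mu_div_sq_le
    (summable_mu.mul_left _)

lemma tsum_mu_sq_le : ∑' ρ : ℂ, mu ρ / ρ.im ^ 2 ≤ 0.04733 := by
  have := summable_mu_sq.tsum_le_tsum mu_div_sq_le (summable_mu.mul_left _)
  rw [tsum_mul_left] at this
  linarith [tsum_mu_le, B_le]

/-! ### A zero-free region -/

open ArithmeticFunction in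
lemma hasSum_vonMangoldt_re {σ : ℝ} (hσ : 1 < σ) (t : ℝ) :
    HasSum (fun n : ℕ => vonMangoldt n * (Real.exp (-(σ * Real.log n)) * Real.cos (t * Real.log n)))
      (-deriv riemannZeta (σ + t * I) / riemannZeta (σ + t * I)).re := by
  have hs : 1 < ((σ : ℂ) + t * I).re := by simpa using hσ
  rw [← LSeries_vonMangoldt_eq_deriv_riemannZeta_div hs]
  have h := (LSeriesSummable_vonMangoldt hs).LSeriesHasSum
  refine (Complex.hasSum_re h).congr_fun fun n => ?_
  rcases eq_or_ne n 0 with rfl | hn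
  · simp
  have hn0 : (n : ℂ) ≠ 0 := by exact_mod_cast hn
  rw [LSeries.term_of_ne_zero hn, cpow_def_of_ne_zero hn0, div_eq_mul_inv, ← Complex.exp_neg,
    re_ofReal_mul]
  have e : -(log (n : ℂ) * ((σ : ℂ) + t * I)) =
      ((-(σ * Real.log n) : ℝ) : ℂ) + ((-(t * Real.log n) : ℝ) : ℂ) * I := by
    rw [← natCast_log]; push_cast; ring
  rw [e, Complex.exp_re]
  simp only [add_re, ofReal_re, re_ofReal_mul, I_re, mul_zero, add_zero, add_im, ofReal_im,
    im_ofReal_mul, I_im, mul_one, zero_add, Real.cos_neg]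

/-- The inequality `3 + 4 cos θ + cos 2θ ≥ 0` applied to `-ζ'/ζ`. -/
lemma three_four_one {σ : ℝ} (hσ : 1 < σ) (t : ℝ) :
    0 ≤ 3 * (-deriv riemannZeta σ / riemannZeta σ).re +
      4 * (-deriv riemannZeta (σ + t * I) / riemannZeta (σ + t * I)).re +
      (-deriv riemannZeta (σ + (2 * t : ℝ) * I) / riemannZeta (σ + (2 * t : ℝ) * I)).re := by
  have h0 := hasSum_vonMangoldt_re hσ 0
  rw [ofReal_zero, zero_mul, add_zero] at h0
  have h := ((h0.mul_left 3).add ((hasSum_vonMangoldt_re hσ t).mul_left 4)).add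
    (hasSum_vonMangoldt_re hσ (2 * t))
  refine h.nonneg fun n => ?_
  have h1 : 0 ≤ ArithmeticFunction.vonMangoldt n := ArithmeticFunction.vonMangoldt_nonneg
  have h2 := Real.exp_pos (-(σ * Real.log n))
  rw [zero_mul, Real.cos_zero, mul_assoc 2 t, Real.cos_two_mul]
  have h3 : 0 ≤ (Real.cos (t * Real.log n) + 1) ^ 2 := sq_nonneg _
  have := mul_nonneg (mul_nonneg h1 h2.le) h3
  nlinarith

lemma neg_zeta_logDeriv_re {s : ℂ} (hs : 1 < s.re) :
    (-deriv riemannZeta s / riemannZeta s).re =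
      (GG s).re + (1 / (s - 1)).re - (logDeriv xi s).re := by
  rw [logDeriv_xi_eq hs, neg_div]
  simp

lemma re_GG (s : ℂ) : (GG s).re = (digamma (s / 2 + 1)).re / 2 - Real.log Real.pi / 2 := by
  rw [GG, add_re, show -(Real.log Real.pi : ℂ) / 2 = ((-Real.log Real.pi / 2 : ℝ) : ℂ) by push_cast; ring,
    ofReal_re, show digamma (s / 2 + 1) / 2 = ((1 / 2 : ℝ) : ℂ) * digamma (s / 2 + 1) by push_cast; ring,
    re_ofReal_mul]
  ring

lemma re_GG_real {σ : ℝ} (h : 0 ≤ σ) :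
    (GG σ).re ≤ Real.log (σ / 2 + 1) / 2 - Real.log Real.pi / 2 := by
  have := (digamma_real_bounds (x := σ / 2 + 1) (by linarith)).1
  rw [re_GG]
  push_cast at this
  linarith

lemma re_GG_le {σ t : ℝ} (h1 : 1 ≤ σ) (h2 : σ ≤ 3 / 2) :
    (GG (σ + t * I)).re ≤ Real.log (4 + t ^ 2 / 4) / 4 + 1 / 4 - Real.log Real.pi / 2 := by
  set z : ℂ := (σ + t * I) / 2 + 1 with hz
  have hre : z.re = σ / 2 + 1 := by simp [hz]
  have him : z.im = t / 2 := by simp [hz]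
  have hE : ∀ N : ℕ, ∑ j ∈ Finset.range N, 1 / ‖z + j‖ ^ 2 ≤ 1 := by
    intro N
    have h : ∑ j ∈ Finset.range N, 1 / ‖z + j‖ ^ 2 ≤ 1 - 1 / ((N : ℝ) + 1) := by
      induction N with
      | zero => simp
      | succ N ih =>
        rw [Finset.sum_range_succ]
        have : 1 / ‖z + N‖ ^ 2 ≤ 1 / (((N : ℝ) + 1) * (N + 2)) := by
          apply one_div_le_one_div_of_le (by positivity)
          rw [← normSq_eq_norm_sq, normSq_apply]
          simp only [add_re, natCast_re, add_im, natCast_im, hre]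
          have : (0 : ℝ) ≤ N := N.cast_nonneg
          nlinarith [mul_self_nonneg (z.im + 0)]
        have e : 1 / (((N : ℝ) + 1) * (N + 2)) = 1 / ((N : ℝ) + 1) - 1 / ((N + 1 : ℕ) + 1) := by
          push_cast; field_simp; ring
        linarith
    have : 0 < 1 / ((N : ℝ) + 1) := by positivity
    linarith
  have h := re_digamma_le (z := z) (by rw [hre]; linarith) hE
  have hn : Real.log ‖z‖ ≤ Real.log (4 + t ^ 2 / 4) / 2 := by
    have hz0 : 0 < ‖z‖ := norm_pos_iff.2 (by rintro h0; rw [h0] at hre; simp at hre; linarith)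
    have : 2 * Real.log ‖z‖ = Real.log (‖z‖ ^ 2) := by rw [Real.log_pow]; norm_num
    have h3 : ‖z‖ ^ 2 ≤ 4 + t ^ 2 / 4 := by
      rw [← normSq_eq_norm_sq, normSq_apply, hre, him]; nlinarith
    have := Real.log_le_log (by positivity) h3
    linarith
  rw [re_GG]
  linarith

set_option maxHeartbeats 1000000 in
/-- Classical zero-free region for zeros to the right of the critical line. -/
lemma zero_free_right {ρ : ℂ} (h : xi ρ = 0) (hβ : 1 / 2 < ρ.re) :
    1 / (1 - ρ.re) ≤ 14 + 35 / 2 * Real.log (1 + ρ.im ^ 2 / 256) := by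
  obtain ⟨hβ0, hβ1⟩ := xi_zero_re h
  have hg := im_sq_ge h
  set γ := ρ.im with hγ
  set β := ρ.re with hβd
  have hlog0 : 0 ≤ Real.log (1 + γ ^ 2 / 256) := Real.log_nonneg (by linarith [sq_nonneg γ])
  set A : ℝ := 1 + 5 / 4 * Real.log (1 + γ ^ 2 / 256) with hA
  have hA1 : 1 ≤ A := by linarith
  -- At `σ = 1 + η` the pole contributes `3 / η = 6 A`; all other terms together stay below `A`.
  set η : ℝ := 1 / (2 * A) with hη
  have hη0 : 0 < η := by positivity
  have hη1 : η ≤ 1 / 2 := by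
    rw [hη, div_le_iff₀ (by positivity)]; linarith
  set σ : ℝ := 1 + η with hσ
  have hσ1 : 1 < σ := by linarith
  have h341 := three_four_one hσ1 γ
  have r0 : 1 < ((σ : ℝ) : ℂ).re := by simpa using hσ1
  have r1 : 1 < ((σ : ℂ) + γ * I).re := by simpa using hσ1
  have r2 : 1 < ((σ : ℂ) + (2 * γ : ℝ) * I).re := by simpa using hσ1
  rw [neg_zeta_logDeriv_re r0, neg_zeta_logDeriv_re r1, neg_zeta_logDeriv_re r2] at h341
  -- the sums over zeros
  have hx : ∀ s : ℂ, 1 < s.re → ∀ ρ : ℂ, 0 ≤ mu ρ * (1 / (s - ρ)).re := by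
    intro s hs ρ
    by_cases h0 : xi ρ = 0
    · exact mul_nonneg (mu_nonneg _) (re_one_div_pos hs h0).le
    · simp [mu_eq_zero h0]
  have s0 : 0 ≤ (logDeriv xi σ).re := (hasSum_mu_re r0).nonneg (hx _ r0)
  have s2 : 0 ≤ (logDeriv xi (σ + (2 * γ : ℝ) * I)).re := (hasSum_mu_re r2).nonneg (hx _ r2)
  set ρ' : ℂ := 1 - (starRingEnd ℂ) ρ with hρ'
  have hre' : ρ'.re = 1 - β := by simp [hρ', hβd]
  have him' : ρ'.im = γ := by simp [hρ', hγ]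
  have hne : ρ ≠ ρ' := by
    intro h0; have := congrArg re h0; rw [hre'] at this; linarith
  have hmu' : mu ρ' = mu ρ := by rw [hρ', mu_one_sub, mu_conj]
  have e1 : (1 / ((σ : ℂ) + γ * I - ρ)).re = 1 / (σ - β) := by
    have : (σ : ℂ) + γ * I - ρ = ((σ - β : ℝ) : ℂ) := by
      apply Complex.ext <;> simp [hβd, hγ]
    rw [this, ← ofReal_one, ← ofReal_div, ofReal_re]
  have e2 : (1 / ((σ : ℂ) + γ * I - ρ')).re = 1 / (σ - (1 - β)) := by
    have : (σ : ℂ) + γ * I - ρ' = ((σ - (1 - β) : ℝ) : ℂ) := by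
      apply Complex.ext <;> simp [hre', him']
    rw [this, ← ofReal_one, ← ofReal_div, ofReal_re]
  have s1 : 1 / (σ - β) + 1 / (σ - (1 - β)) ≤ (logDeriv xi (σ + γ * I)).re := by
    have := sum_le_hasSum {ρ, ρ'} (fun ρ _ => hx _ r1 ρ) (hasSum_mu_re r1)
    rw [Finset.sum_pair hne, e1, e2, hmu'] at this
    have hm := one_le_mu h
    have p1 : 0 ≤ 1 / (σ - β) := by apply one_div_nonneg.2; linarith
    have p2 : 0 ≤ 1 / (σ - (1 - β)) := by apply one_div_nonneg.2; linarith
    nlinarith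
  -- the pole
  have p0 : (1 / ((σ : ℂ) - 1)).re = 2 * A := by
    have : (σ : ℂ) - 1 = ((η : ℝ) : ℂ) := by rw [hσ]; push_cast; ring
    rw [this, ← ofReal_one, ← ofReal_div, ofReal_re, hη, one_div_one_div]
  have pole : ∀ t : ℝ, 42 ≤ t ^ 2 → (1 / ((σ : ℂ) + t * I - 1)).re ≤ 0.012 := by
    intro t ht
    rw [one_div, inv_re, normSq_apply]
    have : ((σ : ℂ) + t * I - 1).re = η := by simp [hσ]
    have h2 : ((σ : ℂ) + t * I - 1).im = t := by simp
    rw [this, h2, div_le_iff₀ (by nlinarith)]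
    nlinarith
  have p1 := pole γ hg
  have p2 := pole (2 * γ) (by nlinarith)
  -- the archimedean part
  have g0 := re_GG_real (σ := σ) (by linarith)
  have g1 := re_GG_le (σ := σ) (t := γ) (by linarith) (by linarith)
  have g2 := re_GG_le (σ := σ) (t := 2 * γ) (by linarith) (by linarith)
  have l0 : Real.log (σ / 2 + 1) ≤ 0.56 := by
    refine (Real.log_le_log (by linarith) (show σ / 2 + 1 ≤ 7 / 4 by linarith)).trans ?_
    exact log_le_of_series 4 (x := 3 / 11) (by norm_num) (by norm_num) (by norm_num)
        (by norm_num [Finset.sum_range_succ])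
  have hl2 := Real.log_two_lt_d9
  have l1 : Real.log (4 + γ ^ 2 / 4) ≤ 6 * Real.log 2 + Real.log (1 + γ ^ 2 / 256) := by
    rw [show 6 * Real.log 2 = Real.log (2 ^ 6) by rw [Real.log_pow]; norm_num,
      ← Real.log_mul (by norm_num) (by positivity)]
    exact Real.log_le_log (by positivity) (by linarith)
  have l2 : Real.log (4 + (2 * γ) ^ 2 / 4) ≤ 8 * Real.log 2 + Real.log (1 + γ ^ 2 / 256) := by
    rw [show 8 * Real.log 2 = Real.log (2 ^ 8) by rw [Real.log_pow]; norm_num,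
      ← Real.log_mul (by norm_num) (by positivity)]
    exact Real.log_le_log (by positivity) (by linarith)
  have hpi := log_pi_bounds.1
  have q : 2 / 3 ≤ 1 / (σ - (1 - β)) := by
    rw [div_le_div_iff₀ (by norm_num) (by linarith)]; linarith
  have main : 4 * (1 / (σ - β)) ≤ 7 * A := by
    rw [p0] at h341
    linarith
  have hd : 0 < 1 - β := by linarith
  have hsb : σ - β = η + (1 - β) := by rw [hσ]; ring
  rw [hsb, ← mul_div_assoc, mul_one, div_le_iff₀ (by linarith)] at main
  have hAη : A * η = 1 / 2 := by rw [hη]; field_simp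
  rw [div_le_iff₀ hd]
  nlinarith

/-- Distance from `ρ` to the boundary of the critical strip. -/
noncomputable def dd (ρ : ℂ) : ℝ := min ρ.re (1 - ρ.re)

lemma zero_free {ρ : ℂ} (h : xi ρ = 0) :
    1 / dd ρ ≤ 14 + 35 / 2 * Real.log (1 + ρ.im ^ 2 / 256) := by
  have hlog0 : 0 ≤ Real.log (1 + ρ.im ^ 2 / 256) := Real.log_nonneg (by linarith [sq_nonneg ρ.im])
  rcases lt_trichotomy ρ.re (1 / 2) with h1 | h1 | h1
  · have h2 : xi (1 - ρ) = 0 := by rw [xi_one_sub, h]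
    have := zero_free_right h2 (by simp; linarith)
    rw [dd, min_eq_left (by linarith)]
    simpa using this
  · rw [dd, h1]; norm_num; linarith
  · rw [dd, min_eq_right (by linarith)]
    exact zero_free_right h h1

lemma dd_pos {ρ : ℂ} (h : xi ρ = 0) : 0 < dd ρ := by
  obtain ⟨h0, h1⟩ := xi_zero_re h
  exact lt_min h0 (by linarith)

/-! ### Sums over zeros weighted by `exp (-dd u)` -/

lemma logDeriv_xi_real_le {b : ℝ} (hb : 1 < b) :
    (logDeriv xi b).re ≤ 1 / (b - 1) + Real.log ((b + 2) / (2 * Real.pi)) / 2 := by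
  have hs : 1 < ((b : ℝ) : ℂ).re := by simpa using hb
  have h1 := neg_zeta_logDeriv_re hs
  have h2 := re_GG_real (σ := b) (by linarith)
  have h3 := hasSum_vonMangoldt_re hb 0
  rw [ofReal_zero, zero_mul, add_zero] at h3
  have h4 := h3.nonneg fun n => by
    simp only [zero_mul, Real.cos_zero, mul_one]
    exact mul_nonneg ArithmeticFunction.vonMangoldt_nonneg (Real.exp_pos _).le
  have h5 : (1 / ((b : ℂ) - 1)).re = 1 / (b - 1) := by
    rw [← ofReal_one, ← ofReal_sub, ← ofReal_div, ofReal_re]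
  rw [h5] at h1
  have h6 : Real.log ((b + 2) / (2 * Real.pi)) = Real.log (b / 2 + 1) - Real.log Real.pi := by
    rw [← Real.log_div (by positivity) (by positivity)]
    congr 1
    have := Real.pi_pos
    field_simp
  linarith

/-- The density of zeros, measured by `Σ 1/(b²+γ²)`. -/
lemma sum_density_le {b : ℝ} (hb : 1 < b) (T : Finset ℂ) :
    ∑ ρ ∈ T, mu ρ / (b ^ 2 + ρ.im ^ 2) ≤
      (1 / (b - 1) + Real.log ((b + 2) / (2 * Real.pi)) / 2) / (b - 1) := by
  have hs : 1 < ((b : ℝ) : ℂ).re := by simpa using hb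
  have hH := hasSum_mu_re hs
  rw [le_div_iff₀ (by linarith), Finset.sum_mul]
  refine le_trans ?_ (logDeriv_xi_real_le hb)
  refine le_trans (Finset.sum_le_sum (g := fun ρ => mu ρ * (1 / ((b : ℂ) - ρ)).re) fun ρ _ => ?_)
    (sum_le_hasSum T (fun ρ _ => ?_) hH)
  · by_cases h : xi ρ = 0
    · obtain ⟨h0, h1⟩ := xi_zero_re h
      rw [div_mul_eq_mul_div, mul_div_assoc]
      refine mul_le_mul_of_nonneg_left ?_ (mu_nonneg _)
      rw [one_div, inv_re, normSq_apply]
      simp only [sub_re, ofReal_re, sub_im, ofReal_im]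
      have : 0 < (b - ρ.re) := by linarith
      apply div_le_div₀ <;> nlinarith [sq_nonneg ρ.im, mul_pos this this]
    · simp [mu_eq_zero h]
  · by_cases h0 : xi ρ = 0
    · exact mul_nonneg (mu_nonneg _) (re_one_div_pos hs h0).le
    · simp [mu_eq_zero h0]

/-- The density bound at the dyadic heights `b = 16 · 2 ^ k`. -/
lemma density_pow_le (T : Finset ℂ) (k : ℕ) :
    ∑ ρ ∈ T, mu ρ / (256 * 4 ^ k + ρ.im ^ 2) ≤
      (1 / 15 : ℝ) * ((1 / 15) * (1 / 4) ^ k + (1 / 2) ^ k * (0.5264 + 0.3466 * k)) := by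
  have h2k : (1 : ℝ) ≤ 2 ^ k := one_le_pow₀ (by norm_num)
  have h := sum_density_le (b := 16 * 2 ^ k) (by linarith) T
  have e : (16 * 2 ^ k : ℝ) ^ 2 = 256 * 4 ^ k := by
    rw [mul_pow, ← pow_mul, mul_comm k 2, pow_mul]; norm_num
  rw [e] at h
  refine h.trans ?_
  have h1 : 15 * (2 : ℝ) ^ k ≤ 16 * 2 ^ k - 1 := by linarith
  have hl : Real.log ((16 * 2 ^ k + 2) / (2 * Real.pi)) ≤ 1.0528 + 0.6932 * k := by
    have h3 : (16 * (2 : ℝ) ^ k + 2) / (2 * Real.pi) ≤ (18 / (2 * 3.1415)) * 2 ^ k := by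
      have := Real.pi_gt_d4
      rw [div_mul_eq_mul_div, div_le_div_iff₀ (by positivity) (by norm_num)]
      nlinarith
    have h4 := Real.log_le_log (by positivity) h3
    rw [Real.log_mul (by norm_num) (by positivity), Real.log_pow] at h4
    have h5 : Real.log (18 / (2 * 3.1415)) ≤ 1.0528 := 
      log_le_of_series 8 (x := 11717 / 24283) (by norm_num) (by norm_num) (by norm_num)
        (by norm_num [Finset.sum_range_succ])
    have h6 := Real.log_two_lt_d9
    have : (k : ℝ) * Real.log 2 ≤ 0.6932 * k := by
      rw [mul_comm]; exact mul_le_mul_of_nonneg_right (by linarith) k.cast_nonneg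
    linarith
  have h7 : 1 / (16 * (2 : ℝ) ^ k - 1) ≤ (1 / 15) * (1 / 2) ^ k := by
    rw [one_div_pow, one_div_mul_one_div]
    exact one_div_le_one_div_of_le (by positivity) h1
  have h8 : (1 / 4 : ℝ) ^ k = (1 / 2) ^ k * (1 / 2) ^ k := by rw [← mul_pow]; norm_num
  have h9 : (0 : ℝ) < (1 / 2) ^ k := by positivity
  have hk : (0 : ℝ) ≤ k := k.cast_nonneg
  rw [div_eq_mul_one_div]
  calc _ ≤ ((1 / 15 : ℝ) * (1 / 2) ^ k + (1.0528 + 0.6932 * k) / 2) * ((1 / 15) * (1 / 2) ^ k) := by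
        apply mul_le_mul _ h7 (by apply one_div_nonneg.2; linarith) (by positivity)
        linarith
    _ = _ := by rw [h8]; ring

lemma density_sum_le (T : Finset ℂ) (N : ℕ) :
    ∑ k ∈ Finset.range N, ∑ ρ ∈ T, mu ρ / (256 * 4 ^ k + ρ.im ^ 2) ≤ 0.12233 := by
  have h : ∑ k ∈ Finset.range N, (1 / 15 : ℝ) * ((1 / 15) * (1 / 4) ^ k +
      (1 / 2) ^ k * (0.5264 + 0.3466 * k)) =
      (1 / 15) * ((1 / 15) * (4 / 3) * (1 - (1 / 4) ^ N) + 2 * 0.5264 * (1 - (1 / 2) ^ N) +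
        0.3466 * (2 - (1 / 2) ^ N * (2 * N + 2))) := by
    induction N with
    | zero => norm_num
    | succ N ih =>
      rw [Finset.sum_range_succ, ih]
      push_cast
      ring
  refine (Finset.sum_le_sum fun k _ => density_pow_le T k).trans ?_
  rw [h]
  have h1 : (0 : ℝ) ≤ (1 / 4) ^ N := by positivity
  have h2 : (0 : ℝ) ≤ (1 / 2) ^ N := by positivity
  have h3 : (0 : ℝ) ≤ (1 / 2) ^ N * (2 * N + 2) := by positivity
  linarith

lemma log_ratio_le {v : ℝ} (hv : 0 ≤ v) :
    Real.log (1 + v) - Real.log (1 + v / 4) ≤ Real.log 4 * (v / (1 + v)) := by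
  have hc := strictConcaveOn_log_Ioi.concaveOn.2 (show (1 / 4 : ℝ) ∈ Ioi 0 by norm_num)
    (show (1 : ℝ) ∈ Ioi 0 by norm_num) (show 0 ≤ v / (1 + v) by positivity)
    (show 0 ≤ 1 / (1 + v) by positivity) (by field_simp; ring)
  simp only [smul_eq_mul, Real.log_one, mul_zero, add_zero, mul_one] at hc
  have e : v / (1 + v) * (1 / 4) + 1 / (1 + v) = (1 + v / 4) / (1 + v) := by
    field_simp
    ring
  rw [e, Real.log_div (by positivity) (by positivity), Real.log_one,
    Real.log_div (by positivity) (by positivity)] at hc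
  linarith

/-- Writing `log (1 + u)` as a sum over the scales `4 ^ k` turns a logarithmic weight on the zeros into
a series of densities. -/
lemma log_telescope {u : ℝ} (hu : 0 ≤ u) (N : ℕ) :
    Real.log (1 + u) ≤ Real.log (1 + u / 4 ^ N) +
      Real.log 4 * ∑ k ∈ Finset.range N, u / (4 ^ k + u) := by
  induction N with
  | zero => simp
  | succ N ih =>
    have h := log_ratio_le (v := u / 4 ^ N) (by positivity)
    rw [Finset.sum_range_succ, mul_add]
    have e : u / 4 ^ N / (1 + u / 4 ^ N) = u / (4 ^ N + u) := by field_simp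
    have e2 : u / 4 ^ N / 4 = u / 4 ^ (N + 1) := by rw [pow_succ, div_div]
    rw [e, e2] at h
    linarith

/-- The logarithm from the zero-free region, averaged over the zeros: after `log_telescope` the sum
over zeros is `log 4` times a sum of the densities at the heights `16 · 2 ^ k`. -/
lemma sum_mu_log_le (T : Finset ℂ) :
    ∑ ρ ∈ T, mu ρ / ρ.im ^ 2 * Real.log (1 + ρ.im ^ 2 / 256) ≤ 0.1696 := by
  have h4 : 0 ≤ Real.log 4 ∧ Real.log 4 ≤ 1.38630 := by
    rw [show (4 : ℝ) = 2 ^ 2 by norm_num, Real.log_pow]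
    have := Real.log_two_lt_d9
    have := Real.log_two_gt_d9
    constructor <;> norm_num <;> linarith
  have key : ∀ N : ℕ, ∑ ρ ∈ T, mu ρ / ρ.im ^ 2 * Real.log (1 + ρ.im ^ 2 / 256) ≤
      0.1696 + ∑ ρ ∈ T, mu ρ / ρ.im ^ 2 * Real.log (1 + ρ.im ^ 2 / 256 / 4 ^ N) := by
    intro N
    have h1 : ∀ ρ ∈ T, mu ρ / ρ.im ^ 2 * Real.log (1 + ρ.im ^ 2 / 256) ≤
        mu ρ / ρ.im ^ 2 * Real.log (1 + ρ.im ^ 2 / 256 / 4 ^ N) + Real.log 4 *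
          ∑ k ∈ Finset.range N, mu ρ / (256 * 4 ^ k + ρ.im ^ 2) := by
      intro ρ _
      by_cases h : xi ρ = 0
      · have hg := im_sq_ge h
        have := mul_le_mul_of_nonneg_left (log_telescope (u := ρ.im ^ 2 / 256) (by positivity) N)
          (div_nonneg (mu_nonneg ρ) (sq_nonneg ρ.im))
        refine this.trans (le_of_eq ?_)
        rw [mul_add, ← mul_assoc, mul_comm _ (Real.log 4), mul_assoc, Finset.mul_sum]
        congr 2
        refine Finset.sum_congr rfl fun k _ => ?_
        have : ρ.im ≠ 0 := by rintro h0; rw [h0] at hg; norm_num at hg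
        field_simp
      · simp [mu_eq_zero h]
    refine (Finset.sum_le_sum h1).trans ?_
    rw [Finset.sum_add_distrib, ← Finset.mul_sum, Finset.sum_comm]
    have h2 := density_sum_le T N
    have h3 : 0 ≤ ∑ k ∈ Finset.range N, ∑ ρ ∈ T, mu ρ / (256 * 4 ^ k + ρ.im ^ 2) :=
      Finset.sum_nonneg fun k _ => Finset.sum_nonneg fun ρ _ =>
        div_nonneg (mu_nonneg _) (by positivity)
    nlinarith
  have hlim : Tendsto (fun N : ℕ => 0.1696 + ∑ ρ ∈ T, mu ρ / ρ.im ^ 2 *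
      Real.log (1 + ρ.im ^ 2 / 256 / 4 ^ N)) atTop (𝓝 (0.1696 + ∑ ρ ∈ T, mu ρ / ρ.im ^ 2 *
      Real.log (1 + 0))) := by
    refine tendsto_const_nhds.add (tendsto_finsetSum _ fun ρ _ => ?_)
    refine tendsto_const_nhds.mul ?_
    refine (Real.continuousAt_log (by norm_num)).tendsto.comp ?_
    refine tendsto_const_nhds.add ?_
    exact tendsto_const_nhds.div_atTop (tendsto_pow_atTop_atTop_of_one_lt (by norm_num))
  have := ge_of_tendsto' hlim key
  simpa using this

lemma inv_dd_le {ρ : ℂ} (h : xi ρ = 0) : mu ρ / (ρ.im ^ 2 * dd ρ) ≤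
    14 * (mu ρ / ρ.im ^ 2) + 35 / 2 * (mu ρ / ρ.im ^ 2 * Real.log (1 + ρ.im ^ 2 / 256)) := by
  have h1 := mul_le_mul_of_nonneg_left (zero_free h) (div_nonneg (mu_nonneg ρ) (sq_nonneg ρ.im))
  rw [← div_div, div_eq_mul_one_div (mu ρ / ρ.im ^ 2)]
  linarith

/-- Combines the zero-free region with the two weighted sums: `14 · 0.04733 + (35 / 2) · 0.1696`. -/
lemma sum_mu_dd_le (T : Finset ℂ) : ∑ ρ ∈ T, mu ρ / (ρ.im ^ 2 * dd ρ) ≤ 3.631 := by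
  have h0 : ∑ ρ ∈ T, mu ρ / ρ.im ^ 2 ≤ 0.04733 :=
    (summable_mu_sq.sum_le_tsum T fun ρ _ => div_nonneg (mu_nonneg _) (sq_nonneg _)).trans
      tsum_mu_sq_le
  have h1 := sum_mu_log_le T
  have : ∀ ρ ∈ T, mu ρ / (ρ.im ^ 2 * dd ρ) ≤
    14 * (mu ρ / ρ.im ^ 2) + 35 / 2 * (mu ρ / ρ.im ^ 2 * Real.log (1 + ρ.im ^ 2 / 256)) := by
    intro ρ _
    by_cases h : xi ρ = 0
    · exact inv_dd_le h
    · simp [mu_eq_zero h]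
  refine (Finset.sum_le_sum this).trans ?_
  rw [Finset.sum_add_distrib, ← Finset.mul_sum, ← Finset.mul_sum]
  linarith

/-- The inequality `x e^{-x} ≤ 1 / e` at `x = u d`. -/
lemma mul_exp_neg_le {u d : ℝ} (hu : 0 < u) (hd : 0 < d) :
    Real.exp (-(u * d)) ≤ 1 / (2.7182 * u * d) := by
  have h1 := Real.add_one_le_exp (u * d - 1)
  rw [Real.exp_sub, sub_add_cancel, le_div_iff₀ (Real.exp_pos 1)] at h1
  rw [Real.exp_neg, ← one_div]
  apply one_div_le_one_div_of_le (by positivity)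
  have := Real.exp_one_gt_d9
  have h2 : 0 < u * d := mul_pos hu hd
  nlinarith

/-- Bound for the oscillating terms of the explicit formula, a zero `ρ` being grouped with
`1 - conj ρ`. -/
lemma sum_zero_exp_le (T : Finset ℂ) {u : ℝ} (hu : 0 < u) :
    ∑ ρ ∈ T, mu ρ / ρ.im ^ 2 * (Real.exp (u * (ρ.re - 1)) + Real.exp (-(u * ρ.re))) ≤
      1.3359 / u + 0.04733 * Real.exp (-(u / 2)) := by
  have h0 : ∑ ρ ∈ T, mu ρ / ρ.im ^ 2 ≤ 0.04733 :=
    (summable_mu_sq.sum_le_tsum T fun ρ _ => div_nonneg (mu_nonneg _) (sq_nonneg _)).trans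
      tsum_mu_sq_le
  have h1 := sum_mu_dd_le T
  have : ∀ ρ ∈ T, mu ρ / ρ.im ^ 2 * (Real.exp (u * (ρ.re - 1)) + Real.exp (-(u * ρ.re))) ≤
      1 / (2.7182 * u) * (mu ρ / (ρ.im ^ 2 * dd ρ)) + Real.exp (-(u / 2)) * (mu ρ / ρ.im ^ 2) := by
    intro ρ _
    by_cases h : xi ρ = 0
    · have hd := dd_pos h
      have h2 := mul_exp_neg_le hu hd
      have h3 : Real.exp (u * (ρ.re - 1)) + Real.exp (-(u * ρ.re)) ≤
          Real.exp (-(u * dd ρ)) + Real.exp (-(u / 2)) := by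
        rw [dd]
        rcases le_total ρ.re (1 / 2) with h4 | h4
        · rw [min_eq_left (by linarith), add_comm]
          have := Real.exp_le_exp.2 (show u * (ρ.re - 1) ≤ -(u / 2) by nlinarith)
          linarith
        · rw [min_eq_right (by linarith), show -(u * (1 - ρ.re)) = u * (ρ.re - 1) by ring]
          have := Real.exp_le_exp.2 (show -(u * ρ.re) ≤ -(u / 2) by nlinarith)
          linarith
      refine (mul_le_mul_of_nonneg_left (h3.trans (add_le_add_left h2 _))
        (div_nonneg (mu_nonneg ρ) (sq_nonneg ρ.im))).trans (le_of_eq ?_)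
      rw [mul_add, mul_comm _ (Real.exp _)]
      congr 1
      rw [one_div_mul_eq_div, div_mul_div_comm, mul_one, div_div]
      congr 1; ring
    · simp [mu_eq_zero h]
  refine (Finset.sum_le_sum this).trans ?_
  rw [Finset.sum_add_distrib, ← Finset.mul_sum, ← Finset.mul_sum]
  have h5 : 1 / (2.7182 * u) * ∑ ρ ∈ T, mu ρ / (ρ.im ^ 2 * dd ρ) ≤ 1.3359 / u := by
    rw [one_div_mul_eq_div, div_le_div_iff₀ (by positivity) hu]
    nlinarith
  have := mul_le_mul_of_nonneg_left h0 (Real.exp_pos (-(u / 2))).le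
  linarith

/-! ### Laplace transforms and their uniqueness -/

/-- `f` has an absolutely convergent Laplace transform at `s`, of value `F`. -/
def HasLap (f : ℝ → ℂ) (s F : ℂ) : Prop :=
  IntegrableOn (fun u : ℝ => Complex.exp (-(s * u)) * f u) (Ioi 0) ∧
    ∫ u in Ioi (0 : ℝ), Complex.exp (-(s * u)) * f u = F

lemma HasLap.add {f g : ℝ → ℂ} {s F G : ℂ} (hf : HasLap f s F) (hg : HasLap g s G) :
    HasLap (fun u => f u + g u) s (F + G) := by
  refine ⟨?_, ?_⟩
  · simp only [mul_add]; exact hf.1.add hg.1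
  · simp only [mul_add]; rw [integral_add hf.1 hg.1, hf.2, hg.2]

lemma HasLap.const_mul {f : ℝ → ℂ} {s F : ℂ} (c : ℂ) (hf : HasLap f s F) :
    HasLap (fun u => c * f u) s (c * F) := by
  have e : (fun u : ℝ => Complex.exp (-(s * u)) * (c * f u)) =
    fun u : ℝ => c * (Complex.exp (-(s * u)) * f u) := by ext u; ring
  refine ⟨?_, ?_⟩
  · rw [e]; exact hf.1.const_mul c
  · rw [e, integral_const_mul, hf.2]

lemma HasLap.congr_val {f : ℝ → ℂ} {s F G : ℂ} (hf : HasLap f s F) (h : F = G) : HasLap f s G :=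
  h ▸ hf

lemma HasLap.congr_fun {f g : ℝ → ℂ} {s F : ℂ} (hf : HasLap f s F) (h : ∀ u, 0 < u → g u = f u) :
    HasLap g s F := by
  have e : EqOn (fun u : ℝ => Complex.exp (-(s * u)) * f u)
    (fun u : ℝ => Complex.exp (-(s * u)) * g u) (Ioi 0) := fun u hu => by simp only [h u hu]
  refine ⟨hf.1.congr_fun e measurableSet_Ioi, ?_⟩
  rw [← hf.2]
  exact setIntegral_congr_fun measurableSet_Ioi e.symm

lemma hasLap_exp {a s : ℂ} (h : 0 < (s + a).re) :
    HasLap (fun u => Complex.exp (-(a * u))) s (1 / (s + a)) := by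
  have e : ∀ u : ℝ, Complex.exp (-(s * u)) * Complex.exp (-(a * u)) =
      Complex.exp (-(s + a) * u) := fun u => by rw [← Complex.exp_add]; congr 1; ring
  have h' : (-(s + a)).re < 0 := by rw [neg_re]; linarith
  refine ⟨?_, ?_⟩
  · simp only [e]; exact integrableOn_exp_mul_complex_Ioi h' 0
  · simp only [e]; rw [integral_exp_mul_complex_Ioi h' 0, ofReal_zero, mul_zero, Complex.exp_zero, neg_div_neg_eq]

lemma hasLap_one {s : ℂ} (h : 0 < s.re) : HasLap (fun _ => 1) s (1 / s) := by
  have := hasLap_exp (a := 0) (s := s) (by simpa using h)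
  simpa using this

lemma hasLap_id {s : ℂ} (h : 0 < s.re) : HasLap (fun u => (u : ℂ)) s (1 / s ^ 2) := by
  have hs0 : s ≠ 0 := by rintro rfl; simp at h
  have hF : ∀ x ∈ Ici (0:ℝ), HasDerivAt (fun x : ℝ => -((x : ℂ) / s + 1 / s ^ 2) * Complex.exp (-(s * x)))
      (Complex.exp (-(s * x)) * x) x := by
    intro x _
    have h1 : HasDerivAt (fun x : ℝ => (x : ℂ)) 1 x := Complex.ofRealCLM.hasDerivAt
    have h2 := (((h1.div_const s).add_const (1 / s ^ 2)).neg).mul ((h1.const_mul s).neg.cexp)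
    refine h2.congr_deriv ?_
    simp only [Pi.neg_apply, mul_one]
    field_simp
    ring
  have hint : IntegrableOn (fun x : ℝ => Complex.exp (-(s * x)) * x) (Ioi 0) := by
    have h3 := integrableOn_rpow_mul_exp_neg_mul_rpow (p := 1) (s := 1) (b := s.re) (by norm_num) one_pos h
    refine Integrable.mono' h3 (by fun_prop) ?_
    refine (ae_restrict_iff' measurableSet_Ioi).2 (Eventually.of_forall fun x hx => ?_)
    have hx0 : (0 : ℝ) < x := hx
    rw [norm_mul, Complex.norm_exp, Complex.norm_real, Real.norm_of_nonneg hx0.le]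
    simp [mul_comm]
  refine ⟨hint, ?_⟩
  have hlim : Tendsto (fun x : ℝ => -((x : ℂ) / s + 1 / s ^ 2) * Complex.exp (-(s * x))) atTop (𝓝 0) := by
    have t1 : Tendsto (fun x : ℝ => x * Real.exp (-(s.re * x))) atTop (𝓝 0) := by
      have := Real.tendsto_pow_mul_exp_neg_atTop_nhds_zero 1
      have h4 := (this.comp (tendsto_id.const_mul_atTop h)).const_mul (1 / s.re)
      rw [mul_zero] at h4
      refine h4.congr fun x => ?_
      simp only [Function.comp, id, pow_one]
      field_simp
    have t2 : Tendsto (fun x : ℝ => Real.exp (-(s.re * x))) atTop (𝓝 0) :=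
      Real.tendsto_exp_neg_atTop_nhds_zero.comp (tendsto_id.const_mul_atTop h)
    have t3 := (t1.const_mul (1 / ‖s‖)).add (t2.const_mul (1 / ‖s‖ ^ 2))
    simp only [mul_zero, add_zero] at t3
    refine squeeze_zero_norm' ?_ t3
    filter_upwards [eventually_ge_atTop 0] with x hx
    rw [norm_mul, norm_neg, Complex.norm_exp]
    have e : (-(s * (x:ℂ))).re = -(s.re * x) := by simp
    rw [e]
    refine (mul_le_mul_of_nonneg_right (norm_add_le _ _) (Real.exp_pos _).le).trans (le_of_eq ?_)
    rw [norm_div, norm_div, norm_pow, Complex.norm_real, Real.norm_of_nonneg hx, norm_one]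
    ring
  rw [integral_Ioi_of_hasDerivAt_of_tendsto' hF hint hlim]
  simp

lemma hasLap_tsum {ι : Type*} [Countable ι] {f : ι → ℝ → ℂ} {F : ι → ℂ} {s : ℂ}
    (hf : ∀ i, HasLap (f i) s (F i)) {b : ι → ℝ} (hb : Summable b)
    (hle : ∀ i, ∫ u in Ioi (0 : ℝ), ‖Complex.exp (-(s * u)) * f i u‖ ≤ b i)
    (hm : AEStronglyMeasurable (fun u => ∑' i, f i u) (volume.restrict (Ioi 0))) :
    HasLap (fun u => ∑' i, f i u) s (∑' i, F i) := by
  have hsum : Summable fun i => ∫ u in Ioi (0 : ℝ), ‖Complex.exp (-(s * u)) * f i u‖ :=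
    hb.of_nonneg_of_le (fun i => integral_nonneg fun _ => norm_nonneg _) hle
  have h1 := hasSum_integral_of_summable_integral_norm (fun i => (hf i).1) hsum
  have e : ∀ u : ℝ, ∑' i, Complex.exp (-(s * u)) * f i u = Complex.exp (-(s * u)) * ∑' i, f i u :=
    fun u => tsum_mul_left
  refine ⟨⟨?_, ?_⟩, ?_⟩
  · exact AEStronglyMeasurable.mul (by fun_prop) hm
  · simp only [← e]
    rw [hasFiniteIntegral_iff_enorm]
    calc ∫⁻ u in Ioi (0:ℝ), ‖∑' i, Complex.exp (-(s * u)) * f i u‖ₑ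
        ≤ ∫⁻ u in Ioi (0:ℝ), ∑' i, ‖Complex.exp (-(s * u)) * f i u‖ₑ :=
          lintegral_mono fun u => enorm_tsum_le_tsum_enorm
      _ = ∑' i, ∫⁻ u in Ioi (0:ℝ), ‖Complex.exp (-(s * u)) * f i u‖ₑ :=
          lintegral_tsum fun i => (hf i).1.1.enorm
      _ = ∑' i, ENNReal.ofReal (∫ u in Ioi (0:ℝ), ‖Complex.exp (-(s * u)) * f i u‖) := by
          congr 1; ext i; rw [ofReal_integral_norm_eq_lintegral_enorm (hf i).1]
      _ < ⊤ := hsum.tsum_ofReal_lt_top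
  · simp only [← e]
    rw [← h1.tsum_eq]
    exact tsum_congr fun i => (hf i).2

/-- Laplace transforms determine continuous functions on `[0, ∞)` vanishing at `0`. -/
lemma eq_zero_of_hasLap {f : ℝ → ℂ} (hc : ContinuousOn f (Ici 0)) (h0 : f 0 = 0)
    (h : ∀ s : ℂ, s.re = 1 → HasLap f s 0) {u : ℝ} (hu : 0 ≤ u) : f u = 0 := by
  set g : ℝ → ℂ := fun u => Complex.exp (-((1 : ℂ) * (max u 0 : ℝ))) * f (max u 0) with hg
  have hgc : Continuous g := by
    have : Continuous fun u : ℝ => f (max u 0) :=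
      hc.comp_continuous (by fun_prop) fun u => mem_Ici.2 (le_max_right _ _)
    exact Continuous.mul (by fun_prop) this
  have hneg : ∀ u : ℝ, u ≤ 0 → g u = 0 := fun u hu => by simp [hg, max_eq_right hu, h0]
  have hpos : ∀ u : ℝ, 0 < u → g u = Complex.exp (-((1 : ℂ) * u)) * f u := fun u hu => by
    simp only [hg, max_eq_left hu.le]
  have hsupp : Function.support g ⊆ Ioi 0 := by
    intro u hu'
    by_contra h'
    exact hu' (hneg u (not_lt.1 h'))
  have hgi : Integrable g := by
    rw [← integrableOn_iff_integrable_of_support_subset hsupp]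
    refine (h 1 (by simp)).1.congr_fun (fun u hu => (hpos u hu).symm) measurableSet_Ioi
  have hF : FourierTransform.fourier g = 0 := by
    ext w
    rw [Real.fourier_real_eq_integral_exp_smul]
    have h2 := (h (1 + 2 * Real.pi * w * I) (by simp)).2
    rw [Pi.zero_apply, ← h2, ← setIntegral_eq_integral_of_forall_compl_eq_zero (s := Ioi 0)]
    · refine setIntegral_congr_fun measurableSet_Ioi fun u hu => ?_
      simp only [smul_eq_mul, hpos u hu]
      rw [← mul_assoc, ← Complex.exp_add]
      congr 2
      push_cast; ring
    · intro u hu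
      rw [hneg u (not_lt.1 hu), smul_zero]
  have := Integrable.fourierInv_fourier_eq hgi (by rw [hF]; exact integrable_zero _ _ _) (v := u)
    hgc.continuousAt
  rw [hF] at this
  have hz : g u = 0 := by
    rw [← this, Real.fourierInv_eq']
    simp
  simpa [hg, max_eq_left hu] using hz

/-! ### The smoothed prime sum and its transform -/

/-- The function `∑_{n ≤ e^u} Λ(n) (1/n - e^{-u})`, a continuous version of `∑ Λ(n)/n`. -/
noncomputable def PP (u : ℝ) : ℝ := ∑' n : ℕ, vonMangoldt n * max 0 (1 / (n : ℝ) - Real.exp (-u))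

lemma ramp_eq_zero {n : ℕ} {u : ℝ} (h : Real.exp u ≤ n) : max 0 (1 / (n : ℝ) - Real.exp (-u)) = 0 := by
  rw [Real.exp_neg, max_eq_left]
  rw [sub_nonpos, ← one_div]
  exact one_div_le_one_div_of_le (Real.exp_pos u) h

lemma ramp_eq {n : ℕ} (hn : n ≠ 0) {u : ℝ} (h : (n : ℝ) ≤ Real.exp u) :
    max 0 (1 / (n : ℝ) - Real.exp (-u)) = 1 / (n : ℝ) - Real.exp (-u) := by
  rw [Real.exp_neg, max_eq_right]
  rw [sub_nonneg, ← one_div]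
  exact one_div_le_one_div_of_le (by positivity) h

lemma continuous_PP : Continuous PP := by
  rw [continuous_iff_continuousAt]
  intro u
  have hs : Summable fun n : ℕ => if (n : ℝ) < Real.exp (u + 1) then vonMangoldt n * (1 / (n : ℝ)) else 0 := by
    refine summable_of_ne_finset_zero (s := Finset.range (⌈Real.exp (u + 1)⌉₊)) fun n hn => ?_
    rw [Finset.mem_range, not_lt] at hn
    rw [if_neg (not_lt.2 (Nat.ceil_le.1 hn))]
  have : ContinuousOn PP (Iio (u + 1)) := by
    refine continuousOn_tsum (fun n => by fun_prop) hs fun n x hx => ?_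
    have h0 : (0 : ℝ) ≤ max 0 (1 / (n : ℝ) - Real.exp (-x)) := le_max_left _ _
    have hv : 0 ≤ vonMangoldt n := ArithmeticFunction.vonMangoldt_nonneg
    rw [Real.norm_of_nonneg (mul_nonneg hv h0)]
    split_ifs with h
    · refine mul_le_mul_of_nonneg_left (max_le (by positivity) ?_) hv
      linarith [Real.exp_pos (-x)]
    · rw [ramp_eq_zero, mul_zero]
      exact (Real.exp_le_exp.2 (le_of_lt hx)).trans (not_lt.1 h)
  exact this.continuousAt (Iio_mem_nhds (by linarith))

lemma hasLap_ramp {n : ℕ} (hn : n ≠ 0) {s : ℂ} (hs : 0 < s.re) :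
    HasLap (fun u => ((max 0 (1 / (n : ℝ) - Real.exp (-u)) : ℝ) : ℂ)) s
      ((n : ℂ) ^ (-(s + 1)) / (s * (s + 1))) := by
  have hs0 : s ≠ 0 := by rintro rfl; simp at hs
  have hs1 : s + 1 ≠ 0 := by
    intro h
    have := congrArg Complex.re h
    simp at this; linarith
  have hn0 : (n : ℂ) ≠ 0 := by exact_mod_cast hn
  have hnpos : (0 : ℝ) < n := by positivity
  have hlog : 0 ≤ Real.log n := Real.log_natCast_nonneg n
  have a1 : (-s).re < 0 := by simpa using hs
  have a2 : (-(s + 1)).re < 0 := by simp; linarith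
  set h : ℝ → ℂ := fun u => 1 / (n : ℂ) * Complex.exp (-s * u) - Complex.exp (-(s + 1) * u) with hh
  have e : (fun u : ℝ => Complex.exp (-(s * u)) * ((max 0 (1 / (n : ℝ) - Real.exp (-u)) : ℝ) : ℂ)) =
      (Ioi (Real.log n)).indicator h := by
    ext u
    by_cases hu : u ∈ Ioi (Real.log n)
    · rw [indicator_of_mem hu, ramp_eq hn ((Real.log_le_iff_le_exp hnpos).1 (le_of_lt hu)), hh]
      push_cast
      rw [show -(s + 1) * (u : ℂ) = -(s * u) + -u by ring, Complex.exp_add, neg_mul]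
      ring
    · rw [indicator_of_notMem hu, ramp_eq_zero ((Real.le_log_iff_exp_le hnpos).1 (not_lt.1 hu))]
      simp
  have i1 := (integrableOn_exp_mul_complex_Ioi a1 (Real.log n)).const_mul (1 / (n : ℂ))
  have i2 := integrableOn_exp_mul_complex_Ioi a2 (Real.log n)
  have hI : IntegrableOn h (Ioi (Real.log n)) := i1.sub i2
  have hsub : Ioi (Real.log n) ⊆ Ioi 0 := Ioi_subset_Ioi hlog
  refine ⟨?_, ?_⟩
  · rw [e]
    exact ((integrable_indicator_iff measurableSet_Ioi).2 hI).integrableOn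
  · rw [e, setIntegral_indicator measurableSet_Ioi, inter_eq_self_of_subset_right hsub, hh,
      integral_sub i1 i2, integral_const_mul, integral_exp_mul_complex_Ioi a1,
      integral_exp_mul_complex_Ioi a2]
    have l : ((Real.log n : ℝ) : ℂ) = Complex.log n := by rw [natCast_log]
    have c1 : Complex.exp (-s * (Real.log n : ℝ)) = n * (n : ℂ) ^ (-(s + 1)) := by
      rw [cpow_def_of_ne_zero hn0, l]
      nth_rewrite 2 [← Complex.exp_log hn0]
      rw [← Complex.exp_add]; congr 1; ring
    have c2 : Complex.exp (-(s + 1) * (Real.log n : ℝ)) = (n : ℂ) ^ (-(s + 1)) := by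
      rw [cpow_def_of_ne_zero hn0, l, mul_comm]
    rw [c1, c2]
    have hs2 : -s ≠ 0 := neg_ne_zero.2 hs0
    have hs3 : -(s + 1) ≠ 0 := neg_ne_zero.2 hs1
    field_simp
    ring

lemma hasLap_vonMangoldt {s : ℂ} (hs : 0 < s.re) (n : ℕ) :
    HasLap (fun u => ((vonMangoldt n * max 0 (1 / (n : ℝ) - Real.exp (-u)) : ℝ) : ℂ)) s
      (LSeries.term (fun n => (vonMangoldt n : ℂ)) (s + 1) n / (s * (s + 1))) := by
  rcases eq_or_ne n 0 with rfl | hn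
  · have := (hasLap_one hs).const_mul 0
    simpa using this
  · refine (((hasLap_ramp hn hs).const_mul (vonMangoldt n : ℂ)).congr_val ?_).congr_fun
      fun u _ => by push_cast; rfl
    rw [LSeries.term_of_ne_zero hn, cpow_neg]
    ring

/-- The transform of a sum of ramps is a Dirichlet series, here that of `-ζ'/ζ`. -/
lemma hasLap_PP {s : ℂ} (hs : s.re = 1) :
    HasLap (fun u => (PP u : ℂ)) s
      (-(deriv riemannZeta (s + 1) / riemannZeta (s + 1)) / (s * (s + 1))) := by
  have h1 : 1 < (s + 1).re := by simp [hs]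
  have h2 : 1 < ((1 : ℂ) + 1).re := by norm_num
  have hsum := (ArithmeticFunction.LSeriesSummable_vonMangoldt h2)
  have key := hasLap_tsum (fun n => hasLap_vonMangoldt (s := s) (by rw [hs]; norm_num) n)
    (b := fun n => ‖LSeries.term (fun n => (vonMangoldt n : ℂ)) (1 + 1) n / (1 * (1 + 1))‖)
    ((hsum.div_const _).norm) ?_ ?_
  · refine (key.congr_val ?_).congr_fun fun u _ => by rw [PP, ofReal_tsum]
    rw [tsum_div_const, ← neg_div, ← ArithmeticFunction.LSeries_vonMangoldt_eq_deriv_riemannZeta_div h1]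
    rfl
  · intro n
    have h3 := (hasLap_vonMangoldt (s := 1) (by simp) n).2
    rw [← h3]
    refine le_of_eq ?_
    have e : ∀ u : ℝ, Complex.exp (-(1 * (u:ℂ))) *
        ((vonMangoldt n * max 0 (1 / (n : ℝ) - Real.exp (-u)) : ℝ) : ℂ) =
        ((Real.exp (-u) * (vonMangoldt n * max 0 (1 / (n : ℝ) - Real.exp (-u))) : ℝ) : ℂ) := by
      intro u; rw [one_mul]; push_cast; rfl
    have hnn : ∀ u : ℝ, 0 ≤ Real.exp (-u) * (vonMangoldt n * max 0 (1 / (n : ℝ) - Real.exp (-u))) :=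
      fun u => mul_nonneg (Real.exp_pos _).le
        (mul_nonneg ArithmeticFunction.vonMangoldt_nonneg (le_max_left _ _))
    simp only [e]
    rw [integral_complex_ofReal, Complex.norm_real, Real.norm_of_nonneg (integral_nonneg hnn)]
    congr 1; ext u
    rw [← Real.norm_of_nonneg (hnn u), ← Complex.norm_real, ← e u, norm_mul, norm_mul,
      Complex.norm_exp, Complex.norm_exp]
    simp [hs]
  · simp only [← ofReal_tsum]
    exact (continuous_ofReal.comp continuous_PP).aestronglyMeasurable

/-! ### The explicit formula -/

lemma integral_norm_le_of_bound {f : ℝ → ℂ} {s : ℂ} (hs : s.re = 1) {C : ℝ}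
    (h : ∀ u : ℝ, 0 ≤ u → ‖f u‖ ≤ C) :
    ∫ u in Ioi (0 : ℝ), ‖Complex.exp (-(s * u)) * f u‖ ≤ C := by
  have h1 : ∫ u in Ioi (0 : ℝ), C * Real.exp (-u) = C := by
    rw [integral_const_mul, integral_exp_neg_Ioi_zero, mul_one]
  rw [← h1]
  refine integral_mono_of_nonneg (Eventually.of_forall fun _ => norm_nonneg _)
    ((integrableOn_exp_neg_Ioi 0).const_mul C) ?_
  refine (ae_restrict_iff' measurableSet_Ioi).2 (Eventually.of_forall fun u hu => ?_)
  have e : (-(s * (u : ℂ))).re = -u := by simp [hs]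
  simp only
  rw [norm_mul, Complex.norm_exp, e, mul_comm]
  exact mul_le_mul_of_nonneg_right (h u (le_of_lt hu)) (Real.exp_pos _).le

/-- The contribution of the trivial zeros to the explicit formula. -/
noncomputable def KK (u : ℝ) : ℝ :=
  ∑' n : ℕ, (Real.exp (-u) - Real.exp (-((2 * n + 3) * u))) / ((2 * n + 2) * (2 * n + 3))

/-- The contribution of a nontrivial zero to the explicit formula. -/
noncomputable def hterm (ρ : ℂ) (u : ℝ) : ℂ :=
  (mu ρ : ℂ) / (ρ * (1 - ρ)) * (Complex.exp (-((1 - ρ) * u)) - Complex.exp (-(1 * u)))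

/-- The contribution of the nontrivial zeros to the explicit formula. -/
noncomputable def HH (u : ℝ) : ℂ := ∑' ρ : ℂ, hterm ρ u

lemma kterm_bound (n : ℕ) {u : ℝ} (hu : 0 ≤ u) :
    0 ≤ (Real.exp (-u) - Real.exp (-((2 * n + 3) * u))) / ((2 * n + 2) * (2 * n + 3)) ∧
    (Real.exp (-u) - Real.exp (-((2 * n + 3) * u))) / ((2 * n + 2) * (2 * n + 3)) ≤
      Real.exp (-u) * (1 / (((n : ℝ) + 1) * (n + 2)) / 2) := by
  have hn : (0 : ℝ) ≤ n := Nat.cast_nonneg n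
  have h1 : Real.exp (-((2 * n + 3) * u)) ≤ Real.exp (-u) := Real.exp_le_exp.2 (by nlinarith)
  refine ⟨div_nonneg (by linarith) (by positivity), ?_⟩
  have h2 := Real.exp_pos (-((2 * n + 3) * u))
  have h3 := Real.exp_pos (-u)
  calc _ ≤ Real.exp (-u) / ((2 * n + 2) * (n + 2)) := by
        apply div_le_div₀ h3.le (by linarith) (by positivity)
        nlinarith
    _ = _ := by field_simp; try ring

lemma hasSum_telescope : HasSum (fun n : ℕ => 1 / (((n : ℝ) + 1) * (n + 2))) 1 := by
  rw [hasSum_iff_tendsto_nat_of_nonneg (fun i => by positivity)]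
  have h : ∀ n : ℕ, ∑ i ∈ Finset.range n, 1 / (((i : ℝ) + 1) * (i + 2)) = 1 - 1 / (n + 1) := by
    intro n
    induction n with
    | zero => simp
    | succ k ih => rw [Finset.sum_range_succ, ih]; push_cast; field_simp; ring
  simp only [h]
  simpa using tendsto_one_div_add_atTop_nhds_zero_nat.const_sub (1 : ℝ)

lemma continuousOn_KK : ContinuousOn KK (Ici 0) := by
  refine continuousOn_tsum (fun n => by fun_prop) (hasSum_telescope.summable.div_const 2) fun n u hu => ?_
  have h := kterm_bound n (mem_Ici.1 hu)
  rw [Real.norm_of_nonneg h.1]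
  refine h.2.trans (mul_le_of_le_one_left (by positivity) ?_)
  exact Real.exp_le_one_iff.2 (by simpa using hu)

lemma KK_bounds {u : ℝ} (hu : 0 ≤ u) : 0 ≤ KK u ∧ KK u ≤ Real.exp (-u) / 2 := by
  refine ⟨tsum_nonneg fun n => (kterm_bound n hu).1, ?_⟩
  have h2 : HasSum (fun n : ℕ => Real.exp (-u) * (1 / (((n : ℝ) + 1) * (n + 2)) / 2)) (Real.exp (-u) / 2) := by
    have := (hasSum_telescope.div_const 2).mul_left (Real.exp (-u))
    rwa [mul_one_div] at this
  have hs := h2.summable.of_nonneg_of_le (fun n => (kterm_bound n hu).1) (fun n => (kterm_bound n hu).2)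
  rw [← h2.tsum_eq]
  exact hs.tsum_le_tsum (fun n => (kterm_bound n hu).2) h2.summable

lemma hasLap_kterm {s : ℂ} (hs : s.re = 1) (n : ℕ) :
    HasLap (fun u => (((Real.exp (-u) - Real.exp (-((2 * n + 3) * u))) /
      ((2 * n + 2) * (2 * n + 3)) : ℝ) : ℂ)) s
      (1 / ((2 * n + 3) * (s + 1) * (s + (2 * n + 3)))) := by
  have hn : (0 : ℝ) ≤ n := Nat.cast_nonneg n
  have r2 : (s + (2 * (n : ℂ) + 3)).re = 2 * n + 4 := by simp [hs]; ring
  have p1 : 0 < (s + 1).re := by simp [hs]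
  have p2 : 0 < (s + (2 * (n : ℂ) + 3)).re := by rw [r2]; positivity
  have n1 : s + 1 ≠ 0 := fun h => by rw [h] at p1; simp at p1
  have n2 : s + (2 * (n : ℂ) + 3) ≠ 0 := fun h => by rw [h] at p2; simp at p2
  have n3 : (2 * (n : ℂ) + 3) ≠ 0 := by exact_mod_cast (by positivity : (2 * (n : ℝ) + 3) ≠ 0)
  have n4 : (2 * (n : ℂ) + 2) ≠ 0 := by exact_mod_cast (by positivity : (2 * (n : ℝ) + 2) ≠ 0)
  have := ((hasLap_exp p1).add ((hasLap_exp p2).const_mul (-1))).const_mul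
    (1 / ((2 * (n : ℂ) + 2) * (2 * n + 3)))
  refine (this.congr_val ?_).congr_fun fun u _ => ?_
  · field_simp; ring
  · push_cast; rw [one_mul]; ring

lemma hasLap_KK {s : ℂ} (hs : s.re = 1) :
    HasLap (fun u => (KK u : ℂ)) s (∑' n : ℕ, 1 / ((2 * n + 3) * (s + 1) * (s + (2 * n + 3)))) := by
  have key := hasLap_tsum (fun n => hasLap_kterm hs n) (hasSum_telescope.summable.div_const 2)
    (fun n => integral_norm_le_of_bound hs fun u hu => ?_) ?_
  · exact key.congr_fun fun u _ => by rw [KK, ofReal_tsum]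
  · have h := kterm_bound n hu
    rw [Complex.norm_real, Real.norm_of_nonneg h.1]
    refine h.2.trans (mul_le_of_le_one_left (by positivity) ?_)
    exact Real.exp_le_one_iff.2 (by simpa using hu)
  · simp only [← ofReal_tsum]
    exact (continuous_ofReal.comp_continuousOn (continuousOn_KK.mono Ioi_subset_Ici_self)).aestronglyMeasurable
      measurableSet_Ioi

lemma hterm_zero_of_mu {ρ : ℂ} (h : mu ρ = 0) (u : ℝ) : hterm ρ u = 0 := by simp [hterm, h]

lemma norm_rho_mul_ge (ρ : ℂ) : ρ.im ^ 2 ≤ ‖ρ * (1 - ρ)‖ := by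
  rw [norm_mul]
  have h1 := abs_im_le_norm ρ
  have h2 := abs_im_le_norm (1 - ρ)
  rw [sub_im, one_im, zero_sub, abs_neg] at h2
  calc ρ.im ^ 2 = |ρ.im| * |ρ.im| := by rw [← sq, sq_abs]
    _ ≤ _ := mul_le_mul h1 h2 (abs_nonneg _) (norm_nonneg _)

lemma norm_coef_le (ρ : ℂ) : ‖(mu ρ : ℂ) / (ρ * (1 - ρ))‖ ≤ mu ρ / ρ.im ^ 2 := by
  by_cases h : xi ρ = 0
  · rw [norm_div, Complex.norm_real, Real.norm_of_nonneg (mu_nonneg ρ)]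
    exact div_le_div_of_nonneg_left (mu_nonneg ρ) (by linarith [im_sq_ge h]) (norm_rho_mul_ge ρ)
  · simp [mu_eq_zero h]

lemma norm_hterm_le (ρ : ℂ) {u : ℝ} (hu : 0 ≤ u) : ‖hterm ρ u‖ ≤ 2 * (mu ρ / ρ.im ^ 2) := by
  by_cases h : xi ρ = 0
  · obtain ⟨h0, h1⟩ := xi_zero_re h
    rw [hterm, norm_mul, mul_comm]
    refine mul_le_mul ?_ (norm_coef_le ρ) (norm_nonneg _) (by norm_num)
    refine (norm_sub_le _ _).trans ?_
    rw [Complex.norm_exp, Complex.norm_exp]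
    have e1 : (-((1 - ρ) * (u : ℂ))).re = -((1 - ρ.re) * u) := by simp
    have e2 : (-(1 * (u : ℂ))).re = -u := by simp
    rw [e1, e2]
    have := Real.exp_le_one_iff.2 (show -((1 - ρ.re) * u) ≤ 0 by nlinarith)
    have := Real.exp_le_one_iff.2 (show -u ≤ 0 by linarith)
    linarith
  · simp [hterm, mu_eq_zero h]

lemma continuousOn_HH : ContinuousOn HH (Ici 0) :=
  continuousOn_tsum (fun ρ => by unfold hterm; fun_prop) (summable_mu_sq.mul_left 2)
    fun ρ _ hu => norm_hterm_le ρ (mem_Ici.1 hu)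

/-- The zeros form a countable set because `∑ mu ρ / (1 + γ²)` converges; this makes termwise
integration over the zeros possible. -/
lemma countable_zeros : Countable {ρ : ℂ // mu ρ ≠ 0} := by
  have h := summable_mu.countable_support
  refine (Set.Countable.mono ?_ h).to_subtype
  intro ρ hρ
  have : 0 < 1 + ρ.im ^ 2 := by positivity
  exact div_ne_zero hρ this.ne'

lemma hasLap_hterm {s : ℂ} (hs : s.re = 1) (ρ : ℂ) :
    HasLap (hterm ρ) s ((mu ρ : ℂ) / ((1 - ρ) * (s + 1) * (s + (1 - ρ)))) := by
  by_cases h : xi ρ = 0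
  · obtain ⟨h0, h1⟩ := xi_zero_re h
    have p1 : 0 < (s + 1).re := by simp [hs]
    have p2 : 0 < (s + (1 - ρ)).re := by simp [hs]; linarith
    have n1 : s + 1 ≠ 0 := fun h => by rw [h] at p1; simp at p1
    have n2 : s + (1 - ρ) ≠ 0 := fun h => by rw [h] at p2; simp at p2
    have n3 : ρ ≠ 0 := by rintro rfl; simp at h0
    have n4 : 1 - ρ ≠ 0 := by
      intro h2
      have := congrArg Complex.re h2
      simp at this; linarith
    have := ((hasLap_exp p2).add ((hasLap_exp p1).const_mul (-1))).const_mul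
      ((mu ρ : ℂ) / (ρ * (1 - ρ)))
    refine (this.congr_val ?_).congr_fun fun u _ => ?_
    · field_simp; ring
    · rw [hterm]; ring
  · have := (hasLap_one (s := s) (by rw [hs]; norm_num)).const_mul 0
    refine (this.congr_val ?_).congr_fun fun u _ => ?_
    · simp [mu_eq_zero h]
    · simp [hterm, mu_eq_zero h]

lemma hasLap_HH {s : ℂ} (hs : s.re = 1) :
    HasLap HH s (∑' ρ : ℂ, (mu ρ : ℂ) / ((1 - ρ) * (s + 1) * (s + (1 - ρ)))) := by
  have := countable_zeros
  have e : ∀ u, HH u = ∑' ρ : {ρ : ℂ // mu ρ ≠ 0}, hterm ρ u := fun u => by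
    rw [HH]
    refine (tsum_subtype_eq_of_support_subset (s := {ρ : ℂ | mu ρ ≠ 0}) ?_).symm
    intro ρ hρ h0
    exact hρ (hterm_zero_of_mu h0 u)
  have key := hasLap_tsum (fun ρ : {ρ : ℂ // mu ρ ≠ 0} => hasLap_hterm hs ρ)
    (b := fun ρ => 2 * (mu ρ / (ρ : ℂ).im ^ 2))
    ((summable_mu_sq.mul_left 2).comp_injective Subtype.val_injective)
    (fun n => integral_norm_le_of_bound hs fun u hu => norm_hterm_le _ hu) ?_
  · refine (key.congr_val ?_).congr_fun fun u _ => e u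
    refine tsum_subtype_eq_of_support_subset (s := {ρ : ℂ | mu ρ ≠ 0}) (f := fun ρ : ℂ =>
      (mu ρ : ℂ) / ((1 - ρ) * (s + 1) * (s + (1 - ρ)))) ?_
    intro ρ hρ h0
    apply hρ
    have h0' : mu ρ = 0 := h0
    simp [h0']
  · simp only [← e]
    exact (continuousOn_HH.mono Ioi_subset_Ici_self).aestronglyMeasurable measurableSet_Ioi

/-- The explicit formula for `∑ Λ(n) (1/n - 1/x)` with `x = e^u`, obtained by comparing Laplace
transforms. -/
theorem explicit_formula {u : ℝ} (hu : 0 ≤ u) :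
    (PP u : ℂ) = u - (1 + Real.eulerMascheroniConstant) * (1 - Complex.exp (-(1 * u))) + KK u + HH u := by
  set γ : ℂ := (Real.eulerMascheroniConstant : ℂ) with hγ
  have hc : ContinuousOn (fun u : ℝ => (PP u : ℂ) + (-1) * (((u : ℂ) + (-(1 + γ)) * (1 + (-1) *
      Complex.exp (-(1 * u)))) + (KK u + HH u))) (Ici 0) := by
    have h1 := (continuous_ofReal.comp continuous_PP).continuousOn (s := Ici 0)
    have h2 := continuous_ofReal.comp_continuousOn continuousOn_KK
    have h3 := continuousOn_HH
    simp only [Function.comp_def] at h1 h2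
    have h4 : ContinuousOn (fun u : ℝ => ((u : ℂ) + (-(1 + γ)) * (1 + (-1) *
      Complex.exp (-(1 * u))))) (Ici 0) := by fun_prop
    exact h1.add (continuousOn_const.mul (h4.add (h2.add h3)))
  have := eq_zero_of_hasLap hc ?_ ?_ hu
  · rw [add_eq_zero_iff_eq_neg] at this
    rw [this]; ring
  · have a : PP 0 = 0 := by
      rw [PP]
      refine (tsum_congr fun n => ?_).trans tsum_zero
      rcases eq_or_ne n 0 with rfl | hn
      · simp
      · rw [ramp_eq_zero, mul_zero]
        rw [Real.exp_zero]
        exact_mod_cast Nat.one_le_iff_ne_zero.2 hn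
    have b : KK 0 = 0 := by simp [KK]
    have c : HH 0 = 0 := by simp [HH, hterm]
    simp [a, b, c]
  · intro s hs
    have p0 : 0 < s.re := by rw [hs]; norm_num
    have p1 : 0 < (s + 1).re := by simp [hs]
    have p2 : 1 < (s + 1).re := by simp [hs]
    have n0 : s ≠ 0 := fun h => by rw [h] at p0; simp at p0
    have n1 : s + 1 ≠ 0 := fun h => by rw [h] at p1; simp at p1
    refine ((hasLap_PP hs).add ((((hasLap_id p0).add (((hasLap_one p0).add
      ((hasLap_exp p1).const_mul (-1))).const_mul (-(1 + γ)))).add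
      ((hasLap_KK hs).add (hasLap_HH hs))).const_mul (-1))).congr_val ?_
    have xs : xi (s + 1) ≠ 0 := xi_ne_zero_of_one_le_re p2.le
    have x1 : xi 1 ≠ 0 := by simp
    have hH : ∑' ρ : ℂ, (mu ρ : ℂ) / ((1 - ρ) * (s + 1) * (s + (1 - ρ))) =
        (logDeriv xi 1 - logDeriv xi (s + 1)) / (s * (s + 1)) := by
      rw [← ((hasSum_xi_partial_fractions x1 xs).div_const (s * (s + 1))).tsum_eq]
      refine tsum_congr fun ρ => ?_
      by_cases h : xi ρ = 0
      · obtain ⟨h0, h1⟩ := xi_zero_re h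
        have n2 : s + (1 - ρ) ≠ 0 := fun h => by
          have := congrArg Complex.re h
          simp [hs] at this; linarith
        have n2' : s + 1 - ρ ≠ 0 := by rwa [add_sub_assoc]
        have n4 : 1 - ρ ≠ 0 := by
          intro h2
          have := congrArg Complex.re h2
          simp at this; linarith
        field_simp
        ring
      · simp [mu_eq_zero h]
    have hK : ∑' n : ℕ, 1 / ((2 * n + 3) * (s + 1) * (s + (2 * n + 3))) =
        (GG (s + 1) - GG 1) / (s * (s + 1)) := by
      have q1 : 0 < ((s + 1) / 2 + 1).re := half_re_pos (by linarith)
      have q2 : 0 < ((1 : ℂ) / 2 + 1).re := half_re_pos (by rw [one_re]; norm_num)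
      have e : GG (s + 1) - GG 1 = (digamma ((s + 1) / 2 + 1) - digamma (1 / 2 + 1)) / 2 := by
        simp only [GG]; ring
      rw [e, ← (((hasSum_digamma q1 q2).div_const 2).div_const (s * (s + 1))).tsum_eq]
      refine tsum_congr fun n => ?_
      have hn : (0 : ℝ) ≤ n := Nat.cast_nonneg n
      have n2 : s + (2 * (n : ℂ) + 3) ≠ 0 := fun h => by
        have := congrArg Complex.re h
        simp [hs] at this; linarith
      have n3 : (2 * (n : ℂ) + 3) ≠ 0 := by exact_mod_cast (by positivity : (2 * (n : ℝ) + 3) ≠ 0)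
      have e1 : (n : ℂ) + (1 / 2 + 1) = (2 * n + 3) / 2 := by ring
      have e2 : (n : ℂ) + ((s + 1) / 2 + 1) = (s + (2 * n + 3)) / 2 := by ring
      rw [e1, e2]
      field_simp
      ring
    rw [hH, hK, logDeriv_xi_one, logDeriv_xi_eq p2, add_sub_cancel_right]
    set zz := deriv riemannZeta (s + 1) / riemannZeta (s + 1)
    rw [← hγ]
    field_simp
    ring

/-! ### The size of the remainder -/

/-- The remainder in `∑ Λ(n) (1/n - 1/x) ≈ log x - 1 - γ`, as a function of `u = log x`. -/
noncomputable def RR (u : ℝ) : ℝ := PP u - u + 1 + Real.eulerMascheroniConstant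

/-- The reflection of the plane in the critical line. -/
noncomputable def refl : ℂ ≃ ℂ :=
  Function.Involutive.toPerm (fun ρ => 1 - (starRingEnd ℂ) ρ) fun ρ => by simp

lemma refl_apply (ρ : ℂ) : refl ρ = 1 - (starRingEnd ℂ) ρ := rfl

lemma mu_refl (ρ : ℂ) : mu (refl ρ) = mu ρ := by rw [refl_apply, mu_one_sub, mu_conj]

lemma summable_zero_exp {u : ℝ} (hu : 0 ≤ u) :
    Summable fun ρ : ℂ => mu ρ / ρ.im ^ 2 * Real.exp (u * (ρ.re - 1)) := by
  refine summable_mu_sq.of_nonneg_of_le (fun ρ => mul_nonneg (div_nonneg (mu_nonneg ρ) (sq_nonneg _))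
    (Real.exp_pos _).le) fun ρ => ?_
  by_cases h : xi ρ = 0
  · refine mul_le_of_le_one_right (div_nonneg (mu_nonneg ρ) (sq_nonneg _)) (Real.exp_le_one_iff.2 ?_)
    have := (xi_zero_re h).2
    nlinarith
  · simp [mu_eq_zero h]

/-- The zeros `ρ` and `1 - conj ρ` are paired, which halves the sum. -/
lemma tsum_zero_exp_le {u : ℝ} (hu : 0 < u) :
    ∑' ρ : ℂ, mu ρ / ρ.im ^ 2 * Real.exp (u * (ρ.re - 1)) ≤
      0.66795 / u + 0.02367 * Real.exp (-(u / 2)) := by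
  have hs := summable_zero_exp hu.le
  have e : (fun ρ : ℂ => mu ρ / ρ.im ^ 2 * Real.exp (-(u * ρ.re))) =
      (fun ρ : ℂ => mu ρ / ρ.im ^ 2 * Real.exp (u * (ρ.re - 1))) ∘ refl := by
    ext ρ
    simp only [Function.comp, mu_refl]
    simp [refl_apply]
  have hs2 : Summable fun ρ : ℂ => mu ρ / ρ.im ^ 2 * Real.exp (-(u * ρ.re)) := by
    rw [e]; exact refl.summable_iff.2 hs
  have ht : ∑' ρ : ℂ, mu ρ / ρ.im ^ 2 * Real.exp (-(u * ρ.re)) =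
      ∑' ρ : ℂ, mu ρ / ρ.im ^ 2 * Real.exp (u * (ρ.re - 1)) := by
    rw [e]; exact refl.tsum_eq (fun ρ : ℂ => mu ρ / ρ.im ^ 2 * Real.exp (u * (ρ.re - 1)))
  have hb : ∑' ρ : ℂ, (mu ρ / ρ.im ^ 2 * Real.exp (u * (ρ.re - 1)) +
      mu ρ / ρ.im ^ 2 * Real.exp (-(u * ρ.re))) ≤ 1.3359 / u + 0.04733 * Real.exp (-(u / 2)) := by
    refine Summable.tsum_le_of_sum_le (hs.add hs2) fun T => ?_
    simp only [← mul_add]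
    exact sum_zero_exp_le T hu
  rw [hs.tsum_add hs2, ht] at hb
  have := Real.exp_pos (-(u / 2))
  have h3 : 1.3359 / u = 2 * (0.66795 / u) := by ring
  rw [h3] at hb
  linarith

lemma norm_HH_le {u : ℝ} (hu : 0 < u) :
    ‖HH u‖ ≤ 0.66795 / u + 0.02367 * Real.exp (-(u / 2)) + 0.04733 * Real.exp (-u) := by
  have hs := summable_zero_exp hu.le
  have h1 : ∀ ρ, ‖hterm ρ u‖ ≤ mu ρ / ρ.im ^ 2 * Real.exp (u * (ρ.re - 1)) +
      mu ρ / ρ.im ^ 2 * Real.exp (-u) := fun ρ => by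
    rw [hterm, norm_mul, ← mul_add]
    refine mul_le_mul (norm_coef_le ρ) ((norm_sub_le _ _).trans (le_of_eq ?_)) (norm_nonneg _)
      (div_nonneg (mu_nonneg ρ) (sq_nonneg _))
    rw [Complex.norm_exp, Complex.norm_exp]
    have e1 : (-((1 - ρ) * (u : ℂ))).re = u * (ρ.re - 1) := by simp; ring
    have e2 : (-(1 * (u : ℂ))).re = -u := by simp
    rw [e1, e2]
  have hs2 := hs.add (summable_mu_sq.mul_right (Real.exp (-u)))
  refine (tsum_of_norm_bounded hs2.hasSum h1).trans ?_
  rw [hs.tsum_add (summable_mu_sq.mul_right _), tsum_mul_right]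
  have := mul_le_mul_of_nonneg_right tsum_mu_sq_le (Real.exp_pos (-u)).le
  linarith [tsum_zero_exp_le hu]

lemma abs_RR_le {u : ℝ} (hu : 0 < u) :
    |RR u| ≤ 0.66795 / u + 0.02367 * Real.exp (-(u / 2)) + 2.125 * Real.exp (-u) := by
  have h := explicit_formula hu.le
  have e : ((RR u : ℝ) : ℂ) = (((1 + Real.eulerMascheroniConstant) * Real.exp (-u) + KK u : ℝ) : ℂ) + HH u := by
    rw [RR]
    push_cast
    rw [h, one_mul]
    ring
  have h1 : |RR u| ≤ |(1 + Real.eulerMascheroniConstant) * Real.exp (-u) + KK u| + ‖HH u‖ := by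
    have h0 := norm_add_le (((1 + Real.eulerMascheroniConstant) * Real.exp (-u) + KK u : ℝ) : ℂ) (HH u)
    rwa [← e, Complex.norm_real, Complex.norm_real, Real.norm_eq_abs, Real.norm_eq_abs] at h0
  have h2 := norm_HH_le hu
  have h3 := KK_bounds hu.le
  have h4 := gamma_num
  have h5 := Real.exp_pos (-u)
  have h6 : 0 ≤ (1 + Real.eulerMascheroniConstant) * Real.exp (-u) + KK u :=
    add_nonneg (mul_nonneg (by linarith) h5.le) h3.1
  rw [abs_of_nonneg h6] at h1
  nlinarith

lemma exp_ten_half : Real.exp (-(21 / 4)) ≤ 0.005248 ∧ Real.exp (-(21 / 2)) ≤ 0.0000276 := by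
  have h1 : Real.exp (-(21 / 4)) ≤ 0.005248 := by
    have h := Real.exp_one_gt_d9
    have h2 : (190.56 : ℝ) ≤ Real.exp (21 / 4) := by
      have e : Real.exp (21 / 4) = Real.exp 1 ^ 5 * Real.exp (1 / 4) := by
        rw [← Real.exp_nat_mul, ← Real.exp_add]; norm_num
      have h3 := Real.quadratic_le_exp_of_nonneg (x := (1 / 4 : ℝ)) (by norm_num)
      have h3' : (1.284 : ℝ) ≤ Real.exp (1 / 4) := by
        have := Real.sum_le_exp_of_nonneg (x := (1 / 4 : ℝ)) (by norm_num) 5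
        norm_num [Finset.sum_range_succ, Nat.factorial] at this
        linarith
      rw [e]
      have h4 : (2.7182818 : ℝ) ^ 5 ≤ Real.exp 1 ^ 5 := by gcongr; linarith
      calc (190.56 : ℝ) ≤ 2.7182818 ^ 5 * 1.284 := by norm_num
        _ ≤ _ := by gcongr
    rw [Real.exp_neg]
    exact inv_le_of_inv_le₀ (by norm_num) (le_trans (by norm_num) h2)
  refine ⟨h1, ?_⟩
  have : Real.exp (-(21 / 2)) = Real.exp (-(21 / 4)) ^ 2 := by
    rw [← Real.exp_nat_mul]; norm_num
  rw [this]
  have h0 := Real.exp_pos (-(21 / 4))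
  nlinarith

lemma abs_RR_le' {u : ℝ} (hu : 21 / 2 ≤ u) : |RR u| ≤ 0.67 / u := by
  have hu0 : 0 < u := by linarith
  refine (abs_RR_le hu0).trans ?_
  have aux : ∀ a : ℝ, 1 / 2 ≤ a → u * Real.exp (-(a * u)) ≤ 21 / 2 * Real.exp (-(a * (21 / 2))) := by
    intro a ha
    have e : Real.exp (-(a * (21 / 2))) = Real.exp (-(a * u)) * Real.exp (a * (u - 21 / 2)) := by
      rw [← Real.exp_add]; congr 1; ring
    have h1 := Real.add_one_le_exp (a * (u - 21 / 2))
    rw [e, mul_comm, mul_left_comm]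
    refine mul_le_mul_of_nonneg_left ?_ (Real.exp_pos _).le
    nlinarith
  have h1 := aux (1 / 2) le_rfl
  have h2 := aux 1 (by norm_num)
  obtain ⟨h3, h4⟩ := exp_ten_half
  rw [show (1 / 2 * (21 / 2) : ℝ) = 21 / 4 by norm_num, show 1 / 2 * u = u / 2 by ring] at h1
  rw [one_mul, one_mul] at h2
  rw [le_div_iff₀ hu0, add_mul, add_mul, div_mul_cancel₀ _ hu0.ne']
  nlinarith

/-! ### From the smoothed sum to `∑ Λ(n) / (n log n)` -/

/-- The number-theoretic weight `n ↦ Λ(n) / (n log n)` summed over `n ≤ e^u`. -/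
noncomputable def At (u : ℝ) : ℝ :=
  ∑ n ∈ Finset.range (⌊Real.exp u⌋₊ + 1), vonMangoldt n / (n * Real.log n)

lemma le_exp_of_mem {n : ℕ} {u : ℝ} (h : n ∈ Finset.range (⌊Real.exp u⌋₊ + 1)) :
    (n : ℝ) ≤ Real.exp u := by
  rw [Finset.mem_range, Nat.lt_succ_iff] at h
  exact (Nat.le_floor_iff (Real.exp_pos u).le).1 h

lemma PP_eq_sum {u v : ℝ} (h : v ≤ u) :
    PP v = ∑ n ∈ Finset.range (⌊Real.exp u⌋₊ + 1),
      vonMangoldt n * max 0 (1 / (n : ℝ) - Real.exp (-v)) := by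
  refine tsum_eq_sum fun n hn => ?_
  rw [ramp_eq_zero, mul_zero]
  rw [Finset.mem_range, not_lt] at hn
  exact (Real.exp_le_exp.2 h).trans (Nat.lt_of_floor_lt (Nat.lt_of_succ_le hn)).le

/-- The partial-summation weight whose negative derivative is `1/u² + 2/u³`. -/
noncomputable def qq (u : ℝ) : ℝ := 1 / u + 1 / u ^ 2

lemma hasDerivAt_inv_pow (k : ℕ) {u : ℝ} (hu : u ≠ 0) :
    HasDerivAt (fun v : ℝ => 1 / v ^ k) (-k / u ^ (k + 1)) u := by
  rcases k with _ | k
  · simpa using hasDerivAt_const u (1 : ℝ)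
  refine (((hasDerivAt_pow (k + 1) u).inv (pow_ne_zero _ hu)).congr_of_eventuallyEq
    (Eventually.of_forall fun x => by simp)).congr_deriv ?_
  simp only [Nat.add_sub_cancel]
  field_simp
  ring

lemma ramp_integral {n : ℕ} (hn : 2 ≤ n) {u : ℝ} (h : (n : ℝ) ≤ Real.exp u) :
    (∫ v in (1 / 2 : ℝ)..u, max 0 (1 / (n : ℝ) - Real.exp (-v)) * (1 / v ^ 2 + 2 / v ^ 3)) +
      max 0 (1 / (n : ℝ) - Real.exp (-u)) * qq u =
      1 / (n * Real.log n) - Real.exp (-u) / u := by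
  have hn0 : n ≠ 0 := by omega
  have hnpos : (0 : ℝ) < n := by positivity
  have hlog : 1 / 2 < Real.log n := by
    have h2 : Real.log 2 ≤ Real.log n := Real.log_le_log (by norm_num) (by exact_mod_cast hn)
    linarith [Real.log_two_gt_d9]
  have hlu : Real.log n ≤ u := (Real.log_le_iff_le_exp hnpos).2 h
  have cont : ∀ a b : ℝ, 1 / 2 ≤ a → 1 / 2 ≤ b → IntervalIntegrable
      (fun v : ℝ => max 0 (1 / (n : ℝ) - Real.exp (-v)) * (1 / v ^ 2 + 2 / v ^ 3)) volume a b := by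
    intro a b ha hb
    apply ContinuousOn.intervalIntegrable
    have : ∀ v ∈ uIcc a b, v ≠ 0 := by
      intro v hv
      have : min a b ≤ v := hv.1
      have : (1 / 2 : ℝ) ≤ min a b := le_min ha hb
      linarith
    refine ContinuousOn.mul (by fun_prop) (ContinuousOn.add ?_ ?_)
    · exact continuousOn_const.div (by fun_prop) fun v hv => pow_ne_zero _ (this v hv)
    · exact continuousOn_const.div (by fun_prop) fun v hv => pow_ne_zero _ (this v hv)
  have i1 : (∫ v in (1 / 2 : ℝ)..Real.log n,
      max 0 (1 / (n : ℝ) - Real.exp (-v)) * (1 / v ^ 2 + 2 / v ^ 3)) = 0 := by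
    rw [intervalIntegral.integral_congr (g := fun _ => (0 : ℝ)) ?_]
    · simp
    intro v hv
    rw [uIcc_of_le hlog.le] at hv
    have : Real.exp v ≤ n := (Real.le_log_iff_exp_le hnpos).1 hv.2
    simp only [ramp_eq_zero this, zero_mul]
  have i2 : (∫ v in (Real.log n)..u,
      max 0 (1 / (n : ℝ) - Real.exp (-v)) * (1 / v ^ 2 + 2 / v ^ 3)) =
      (-((1 / (n : ℝ) - Real.exp (-u)) * (1 / u + 1 / u ^ 2)) - Real.exp (-u) / u) -
      (-((1 / (n : ℝ) - Real.exp (-Real.log n)) * (1 / Real.log n + 1 / Real.log n ^ 2)) -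
        Real.exp (-Real.log n) / Real.log n) := by
    refine intervalIntegral.integral_eq_sub_of_hasDerivAt
      (f := fun v => -((1 / (n : ℝ) - Real.exp (-v)) * (1 / v + 1 / v ^ 2)) - Real.exp (-v) / v)
      (fun v hv => ?_) (cont _ _ hlog.le (by linarith))
    rw [uIcc_of_le hlu] at hv
    have hv0 : v ≠ 0 := by have := hv.1; intro h; linarith
    have hvexp : (n : ℝ) ≤ Real.exp v := (Real.log_le_iff_le_exp hnpos).1 hv.1
    rw [ramp_eq hn0 hvexp]
    have d1 : HasDerivAt (fun v : ℝ => Real.exp (-v)) (-Real.exp (-v)) v := by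
      have := (hasDerivAt_neg v).exp
      simpa using this
    have d2 : HasDerivAt (fun v : ℝ => 1 / v) (-1 / v ^ 2) v := by
      simpa [neg_div] using hasDerivAt_inv hv0
    have d3 : HasDerivAt (fun v : ℝ => 1 / v ^ 2) (-2 / v ^ 3) v := by
      simpa using hasDerivAt_inv_pow 2 hv0
    refine ((((d1.const_sub (1 / (n : ℝ))).mul (d2.add d3)).neg).sub
      (d1.div (hasDerivAt_id v) hv0)).congr_deriv ?_
    simp only [id_eq, Pi.add_apply]
    field_simp
    ring
  rw [← intervalIntegral.integral_add_adjacent_intervals (cont _ _ le_rfl hlog.le)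
    (cont _ _ hlog.le (by linarith)), i1, i2, ramp_eq hn0 h, Real.exp_neg (Real.log n),
    Real.exp_log hnpos, qq]
  have : Real.log n ≠ 0 := by linarith
  have hu0 : u ≠ 0 := by intro h; linarith
  field_simp
  ring

/-- Integral of `PP` against the weight `-q'`. -/
noncomputable def WW (u : ℝ) : ℝ := ∫ v in (1 / 2 : ℝ)..u, PP v * (1 / v ^ 2 + 2 / v ^ 3)

/-- Partial summation: integrating each ramp `max 0 (1 / n - e^{-v})` against the weight converts
the smoothed sum `PP` into `At`, up to a boundary term with `ψ`. -/
lemma WW_eq {u : ℝ} (hu : 1 / 2 ≤ u) :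
    WW u + PP u * qq u = At u - Chebyshev.psi (Real.exp u) * (Real.exp (-u) / u) := by
  have e1 : WW u = ∫ v in (1 / 2 : ℝ)..u, ∑ n ∈ Finset.range (⌊Real.exp u⌋₊ + 1),
      vonMangoldt n * (max 0 (1 / (n : ℝ) - Real.exp (-v)) * (1 / v ^ 2 + 2 / v ^ 3)) := by
    refine intervalIntegral.integral_congr fun v hv => ?_
    rw [uIcc_of_le hu] at hv
    rw [PP_eq_sum hv.2, Finset.sum_mul]
    exact Finset.sum_congr rfl fun n _ => by ring
  rw [e1, intervalIntegral.integral_finsetSum]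
  swap
  · intro n _
    apply ContinuousOn.intervalIntegrable
    have : ∀ v ∈ uIcc (1 / 2) u, v ≠ 0 := by
      intro v hv
      rw [uIcc_of_le hu] at hv
      have := hv.1
      intro h; rw [h] at this; norm_num at this
    refine continuousOn_const.mul (ContinuousOn.mul (by fun_prop) (ContinuousOn.add ?_ ?_))
    · exact continuousOn_const.div (by fun_prop) fun v hv => pow_ne_zero _ (this v hv)
    · exact continuousOn_const.div (by fun_prop) fun v hv => pow_ne_zero _ (this v hv)
  rw [PP_eq_sum le_rfl, At, Chebyshev.psi_eq_sum_Icc, ← Nat.range_succ_eq_Icc_zero, Finset.sum_mul,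
    Finset.sum_mul, ← Finset.sum_add_distrib, ← Finset.sum_sub_distrib]
  refine Finset.sum_congr rfl fun n hn => ?_
  rw [intervalIntegral.integral_const_mul, mul_assoc, ← mul_add]
  by_cases h2 : 2 ≤ n
  · rw [ramp_integral h2 (le_exp_of_mem hn)]
    ring
  · have : vonMangoldt n = 0 := by
      interval_cases n <;> simp
    rw [this]; simp

/-- This is `At u - ψ(e^u) e^{-u} / u - log u + 1 / u - RR u * qq u`, see `VV_eq`. It is written so that
its derivative, by `hasDerivAt_VV`, involves only the remainder `RR`. -/
noncomputable def VV (u : ℝ) : ℝ :=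
  WW u + (u - 1 - Real.eulerMascheroniConstant) * qq u - Real.log u + 1 / u

lemma VV_eq {u : ℝ} (hu : 1 / 2 ≤ u) :
    VV u = At u - Chebyshev.psi (Real.exp u) * (Real.exp (-u) / u) - Real.log u + 1 / u
      - RR u * qq u := by
  have := WW_eq hu
  rw [VV, RR]
  linear_combination this

lemma hasDerivAt_VV {u : ℝ} (hu : 1 / 2 < u) :
    HasDerivAt VV (RR u * (1 / u ^ 2 + 2 / u ^ 3)) u := by
  have hu0 : u ≠ 0 := by intro h; rw [h] at hu; norm_num at hu
  have hc : ContinuousOn (fun v => PP v * (1 / v ^ 2 + 2 / v ^ 3)) (Ioi 0) := by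
    refine continuous_PP.continuousOn.mul (ContinuousOn.add ?_ ?_)
    · exact continuousOn_const.div (by fun_prop) fun v hv => pow_ne_zero _ (ne_of_gt hv)
    · exact continuousOn_const.div (by fun_prop) fun v hv => pow_ne_zero _ (ne_of_gt hv)
  have hup : (0 : ℝ) < u := by linarith
  have dW : HasDerivAt WW (PP u * (1 / u ^ 2 + 2 / u ^ 3)) u := by
    refine intervalIntegral.integral_hasDerivAt_right ?_ ?_ (hc.continuousAt (Ioi_mem_nhds hup))
    · refine (hc.mono ?_).intervalIntegrable
      rw [uIcc_of_le hu.le]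
      intro v hv
      exact lt_of_lt_of_le (by norm_num) hv.1
    · exact hc.stronglyMeasurableAtFilter isOpen_Ioi u hup
  have d1 := hasDerivAt_inv_pow 1 hu0
  have d2 := hasDerivAt_inv_pow 2 hu0
  have dq : HasDerivAt qq (-(1 / u ^ 2 + 2 / u ^ 3)) u := by
    refine ((d1.add d2).congr_of_eventuallyEq (Eventually.of_forall fun x => by simp [qq])).congr_deriv ?_
    push_cast; ring
  have dlin : HasDerivAt (fun u : ℝ => u - 1 - Real.eulerMascheroniConstant) 1 u :=
    ((hasDerivAt_id u).sub_const _).sub_const _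
  have := ((dW.add (dlin.mul dq)).sub (Real.hasDerivAt_log hu0)).add d1
  refine (this.congr_of_eventuallyEq (Eventually.of_forall fun x => by simp [VV])).congr_deriv ?_
  rw [RR, qq]
  field_simp
  push_cast
  ring

/-- The error function bounding the tail of `VV`. -/
noncomputable def bb (u : ℝ) : ℝ := 0.67 * (1 / (2 * u ^ 2) + 2 / (3 * u ^ 3))

lemma hasDerivAt_bb {u : ℝ} (hu : u ≠ 0) :
    HasDerivAt bb (-(0.67 / u * (1 / u ^ 2 + 2 / u ^ 3))) u := by
  have := (((hasDerivAt_inv_pow 2 hu).const_mul (1 / 2)).add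
    ((hasDerivAt_inv_pow 3 hu).const_mul (2 / 3))).const_mul 0.67
  refine (this.congr_of_eventuallyEq (Eventually.of_forall fun x => ?_)).congr_deriv ?_
  · simp only [bb, Pi.add_apply]
    ring
  · field_simp
    push_cast
    ring

lemma RR_weight {u : ℝ} (hu : 21 / 2 ≤ u) :
    |RR u * (1 / u ^ 2 + 2 / u ^ 3)| ≤ 0.67 / u * (1 / u ^ 2 + 2 / u ^ 3) := by
  have : 0 < u := by linarith
  have hp : 0 ≤ 1 / u ^ 2 + 2 / u ^ 3 := by positivity
  rw [abs_mul, abs_of_nonneg hp]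
  exact mul_le_mul_of_nonneg_right (abs_RR_le' hu) hp

lemma VV_sub_bb_mono : MonotoneOn (fun u => VV u - bb u) (Ici (21 / 2)) := by
  have hd : ∀ u : ℝ, 21 / 2 ≤ u → HasDerivAt (fun u => VV u - bb u)
      (RR u * (1 / u ^ 2 + 2 / u ^ 3) - -(0.67 / u * (1 / u ^ 2 + 2 / u ^ 3))) u := fun u hu =>
    (hasDerivAt_VV (by linarith)).sub (hasDerivAt_bb (by linarith))
  refine monotoneOn_of_deriv_nonneg (convex_Ici _)
    (fun u hu => (hd u hu).continuousAt.continuousWithinAt)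
    (fun u hu => (hd u (interior_subset hu)).differentiableAt.differentiableWithinAt) fun u hu => ?_
  have hu' : 21 / 2 ≤ u := interior_subset hu
  rw [(hd u hu').deriv]
  linarith [(abs_le.1 (RR_weight hu')).1]

lemma VV_add_bb_anti : AntitoneOn (fun u => VV u + bb u) (Ici (21 / 2)) := by
  have hd : ∀ u : ℝ, 21 / 2 ≤ u → HasDerivAt (fun u => VV u + bb u)
      (RR u * (1 / u ^ 2 + 2 / u ^ 3) + -(0.67 / u * (1 / u ^ 2 + 2 / u ^ 3))) u := fun u hu =>
    (hasDerivAt_VV (by linarith)).add (hasDerivAt_bb (by linarith))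
  refine antitoneOn_of_deriv_nonpos (convex_Ici _)
    (fun u hu => (hd u hu).continuousAt.continuousWithinAt)
    (fun u hu => (hd u (interior_subset hu)).differentiableAt.differentiableWithinAt) fun u hu => ?_
  have hu' : 21 / 2 ≤ u := interior_subset hu
  rw [(hd u hu').deriv]
  linarith [(abs_le.1 (RR_weight hu')).2]

lemma tendsto_bb : Tendsto bb atTop (𝓝 0) := by
  have h1 : Tendsto (fun u : ℝ => 1 / (2 * u ^ 2)) atTop (𝓝 0) :=
    (Tendsto.const_mul_atTop (by norm_num) (tendsto_pow_atTop (by norm_num))).const_div_atTop 1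
  have h2 : Tendsto (fun u : ℝ => 2 / (3 * u ^ 3)) atTop (𝓝 0) :=
    (Tendsto.const_mul_atTop (by norm_num) (tendsto_pow_atTop (by norm_num))).const_div_atTop 2
  have := (h1.add h2).const_mul 0.67
  rw [add_zero, mul_zero] at this
  exact this

lemma bb_nonneg {u : ℝ} (hu : 21 / 2 ≤ u) : 0 ≤ bb u := by
  have : 0 < u := by linarith
  unfold bb; positivity

/-- `VV` is trapped between a monotone and an antitone function that differ by `2 bb → 0`. -/
lemma exists_limit : ∃ C : ℝ, Tendsto VV atTop (𝓝 C) ∧ ∀ u, 21 / 2 ≤ u → VV u ≤ C + bb u := by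
  -- A monotone function that stays below the value of an antitone one converges.
  have hmono : Monotone (fun u => VV (max (21 / 2) u) - bb (max (21 / 2) u)) := fun a b h =>
    VV_sub_bb_mono (mem_Ici.2 (le_max_left _ _)) (mem_Ici.2 (le_max_left _ _)) (max_le_max le_rfl h)
  have hbd : BddAbove (range fun u => VV (max (21 / 2) u) - bb (max (21 / 2) u)) := by
    refine ⟨VV (21 / 2) + bb (21 / 2), ?_⟩
    rintro _ ⟨u, rfl⟩
    have h1 := VV_add_bb_anti (mem_Ici.2 le_rfl) (mem_Ici.2 (le_max_left (21 / 2) u)) (le_max_left (21 / 2) u)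
    simp only at h1 ⊢
    linarith [bb_nonneg (le_max_left (21 / 2) u)]
  have ht := tendsto_atTop_ciSup hmono hbd
  set C := ⨆ u, VV (max (21 / 2) u) - bb (max (21 / 2) u) with hC
  refine ⟨C, ?_, fun u hu => ?_⟩
  · have := (ht.congr' (f₂ := fun u => VV u - bb u) ?_).add tendsto_bb
    · simpa using this
    · filter_upwards [eventually_ge_atTop (21 / 2 : ℝ)] with u hu
      rw [max_eq_right hu]
  · have := le_ciSup hbd u
    simp only [max_eq_right hu] at this
    linarith

/-! ### Identification of the limit with Euler's constant -/

/-- The coefficients `Λ(n) / (n log n)` of `log ζ(1 + s)`. -/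
noncomputable def aa (n : ℕ) : ℝ := vonMangoldt n / (n * Real.log n)

lemma aa_nonneg (n : ℕ) : 0 ≤ aa n :=
  div_nonneg ArithmeticFunction.vonMangoldt_nonneg
    (mul_nonneg (Nat.cast_nonneg n) (Real.log_natCast_nonneg n))

/-- The step function `∑_{n ≤ u} 1/n`. -/
noncomputable def harm (u : ℝ) : ℝ := ∑ n ∈ Finset.range (⌊u⌋₊ + 1), 1 / (n : ℝ)

lemma harm_eq (u : ℝ) : harm u = (harmonic ⌊u⌋₊ : ℝ) := by
  rw [harm, Finset.sum_range_succ', harmonic]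
  push_cast
  simp

lemma tendsto_harm : Tendsto (fun u => harm u - Real.log u) atTop (𝓝 Real.eulerMascheroniConstant) := by
  have h1 := Real.tendsto_harmonic_sub_log.comp (tendsto_nat_floor_atTop (α := ℝ))
  have h2 : Tendsto (fun u : ℝ => Real.log ((⌊u⌋₊ : ℝ) / u)) atTop (𝓝 0) := by
    have := (Real.continuousAt_log one_ne_zero).tendsto.comp (tendsto_nat_floor_div_atTop (R := ℝ))
    rwa [Real.log_one] at this
  have := h1.add h2
  rw [add_zero] at this
  refine this.congr' ?_
  filter_upwards [eventually_ge_atTop (1 : ℝ)] with u hu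
  have hf : (⌊u⌋₊ : ℝ) ≠ 0 := by
    have := (Nat.one_le_floor_iff u).2 hu
    positivity
  simp only [Function.comp_apply]
  rw [harm_eq, Real.log_div hf (by linarith)]
  ring

/-- The difference of the two step functions `At` and `harm`. It has a limit, whose value is detected
by Laplace transforms. -/
noncomputable def gg (u : ℝ) : ℝ := At u - harm u

lemma tendsto_At {C : ℝ} (hC : Tendsto VV atTop (𝓝 C)) :
    Tendsto (fun u => At u - Real.log u) atTop (𝓝 C) := by
  have h1 : Tendsto (fun u : ℝ => 1 / u) atTop (𝓝 0) := tendsto_const_nhds.div_atTop tendsto_id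
  have hψ : Tendsto (fun u : ℝ => Chebyshev.psi (Real.exp u) * (Real.exp (-u) / u)) atTop (𝓝 0) := by
    have h2 := h1.const_mul (Real.log 4 + 4)
    rw [mul_zero] at h2
    refine squeeze_zero' ?_ ?_ h2
    · filter_upwards [eventually_gt_atTop (0 : ℝ)] with u hu
      exact mul_nonneg (Chebyshev.psi_nonneg _) (by positivity)
    · filter_upwards [eventually_gt_atTop (0 : ℝ)] with u hu
      calc _ ≤ (Real.log 4 + 4) * Real.exp u * (Real.exp (-u) / u) :=
            mul_le_mul_of_nonneg_right (Chebyshev.psi_le_const_mul_self (Real.exp_pos u).le) (by positivity)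
        _ = _ := by rw [Real.exp_neg]; field_simp
  have hR : Tendsto (fun u : ℝ => RR u * qq u) atTop (𝓝 0) := by
    have h3 : Tendsto (fun u : ℝ => 0.67 * (1 / u) * qq u) atTop (𝓝 0) := by
      have : Tendsto qq atTop (𝓝 0) := by
        have := h1.add (h1.pow 2)
        rw [zero_pow (by norm_num), add_zero] at this
        refine this.congr fun u => ?_
        rw [qq]; ring
      have := (h1.const_mul 0.67).mul this
      simpa only [mul_zero] using this
    refine squeeze_zero_norm' ?_ h3
    filter_upwards [eventually_ge_atTop (21 / 2 : ℝ)] with u hu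
    have hu0 : 0 < u := by linarith
    have hq : 0 ≤ qq u := by unfold qq; positivity
    rw [Real.norm_eq_abs, abs_mul, abs_of_nonneg hq]
    refine mul_le_mul_of_nonneg_right ((abs_RR_le' hu).trans (le_of_eq (by ring))) hq
  have := ((hC.add hψ).sub h1).add hR
  rw [add_zero, sub_zero, add_zero] at this
  refine this.congr' ?_
  filter_upwards [eventually_ge_atTop (21 / 2 : ℝ)] with u hu
  rw [VV_eq (by linarith)]
  ring

lemma tendsto_gg {C : ℝ} (hC : Tendsto VV atTop (𝓝 C)) :
    Tendsto gg atTop (𝓝 (C - Real.eulerMascheroniConstant)) := by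
  refine ((tendsto_At hC).sub tendsto_harm).congr fun u => ?_
  rw [gg]; ring

lemma measurable_gg : Measurable gg := by
  have h1 : Measurable fun u : ℝ => ⌊Real.exp u⌋₊ := Nat.measurable_floor.comp Real.measurable_exp
  have h2 : Measurable fun u : ℝ => ⌊u⌋₊ := Nat.measurable_floor
  have m1 : Measurable At := (measurable_from_top (f := fun k : ℕ =>
    ∑ n ∈ Finset.range (k + 1), vonMangoldt n / (n * Real.log n))).comp h1
  have m2 : Measurable harm := (measurable_from_top (f := fun k : ℕ =>
    ∑ n ∈ Finset.range (k + 1), 1 / (n : ℝ))).comp h2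
  exact m1.sub m2

lemma gg_bounded {ℓ : ℝ} (h : Tendsto gg atTop (𝓝 ℓ)) : ∃ B, ∀ u, |gg u| ≤ B := by
  have hev : ∀ᶠ u in atTop, |gg u| < |ℓ| + 1 :=
    (h.abs).eventually (gt_mem_nhds (by linarith))
  obtain ⟨T, hT⟩ := eventually_atTop.1 hev
  refine ⟨max (|ℓ| + 1) (At T + harm T), fun u => ?_⟩
  rcases le_total T u with hu | hu
  · exact (hT u hu).le.trans (le_max_left _ _)
  · refine le_trans ?_ (le_max_right _ _)
    have p1 : ∀ v, 0 ≤ At v := fun v => Finset.sum_nonneg fun n _ => aa_nonneg n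
    have p2 : ∀ v, 0 ≤ harm v := fun v => Finset.sum_nonneg fun n _ => by positivity
    have m1 : At u ≤ At T := by
      refine Finset.sum_le_sum_of_subset_of_nonneg ?_ fun n _ _ => aa_nonneg n
      exact Finset.range_mono (Nat.succ_le_succ (Nat.floor_mono (Real.exp_le_exp.2 hu)))
    have m2 : harm u ≤ harm T := by
      refine Finset.sum_le_sum_of_subset_of_nonneg ?_ fun n _ _ => by positivity
      exact Finset.range_mono (Nat.succ_le_succ (Nat.floor_mono hu))
    rw [gg, abs_le]
    constructor <;> linarith [p1 u, p2 u]

/-- The `n`-th term in the expansion of `gg (x v) e^{-v}`. -/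
noncomputable def FF (x : ℝ) (n : ℕ) (v : ℝ) : ℝ :=
  aa n * (Ici (Real.log n / x)).indicator (fun v => Real.exp (-v)) v -
    1 / n * (Ici ((n : ℝ) / x)).indicator (fun v => Real.exp (-v)) v

lemma integrable_step {c : ℝ} : Integrable ((Ici c).indicator fun v => Real.exp (-v))
    (volume.restrict (Ioi 0)) := by
  have h1 : IntegrableOn (fun v : ℝ => Real.exp (-v)) (Ioi c) := by
    have := integrableOn_exp_mul_Ioi (a := -1) (by norm_num) c
    simpa using this
  have := (integrable_indicator_iff (measurableSet_Ici (a := c))).2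
    ((integrableOn_Ici_iff_integrableOn_Ioi).2 h1)
  exact this.integrableOn

lemma integral_step {c : ℝ} (hc : 0 ≤ c) :
    ∫ v in Ioi 0, (Ici c).indicator (fun v => Real.exp (-v)) v = Real.exp (-c) := by
  rw [← integral_Ici_eq_integral_Ioi, setIntegral_indicator measurableSet_Ici,
    inter_eq_self_of_subset_right (Ici_subset_Ici.2 hc), integral_Ici_eq_integral_Ioi,
    integral_exp_neg_Ioi]

/-- The transform of `At` is `log ζ (1 + 1 / x)`, by the Euler product. -/
lemma summable_aa {x : ℝ} (hx : 0 < x) : HasSum (fun n => aa n * Real.exp (-(Real.log n / x)))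
    (Real.log (riemannZeta ((1 + 1 / x : ℝ) : ℂ)).re) := by
  have hs : 1 < 1 + 1 / x := by have : 0 < 1 / x := by positivity
                                linarith
  have e : ∀ n : ℕ, aa n * Real.exp (-(Real.log n / x)) =
      vonMangoldt n / ((n : ℝ) ^ (1 + 1 / x) * Real.log n) := by
    intro n
    rcases Nat.eq_zero_or_pos n with rfl | hn
    · simp [aa]
    have hn' : (0 : ℝ) < n := by positivity
    rw [aa, Real.rpow_add hn', Real.rpow_one, Real.rpow_def_of_pos hn', Real.exp_neg, mul_one_div]
    field_simp
  have hsum : Summable fun n : ℕ => vonMangoldt n / ((n : ℝ) ^ (1 + 1 / x) * Real.log n) := by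
    refine Summable.of_nonneg_of_le (fun n => ?_) (fun n => ?_)
      (Real.summable_one_div_nat_rpow.2 hs)
    · rw [← e]; exact mul_nonneg (aa_nonneg n) (Real.exp_pos _).le
    · rcases (Real.log_natCast_nonneg n).eq_or_lt with h | h
      · rw [← h, mul_zero, div_zero]; positivity
      · have hn : (0 : ℝ) < (n : ℝ) := by
          rcases Nat.eq_zero_or_pos n with rfl | hn
          · simp at h
          · positivity
        have hp := Real.rpow_pos_of_pos hn (1 + 1 / x)
        rw [div_le_div_iff₀ (mul_pos hp h) hp, one_mul]
        nlinarith [ArithmeticFunction.vonMangoldt_le_log (n := n)]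
  rw [log_riemannZeta_eq hs]
  exact hsum.hasSum.congr_fun e

/-- The transform of the harmonic sum is the series of `-log (1 - y)` at `y = e^{-1/x}`. -/
lemma summable_harm {x : ℝ} (hx : 0 < x) : HasSum (fun n : ℕ => 1 / (n : ℝ) * Real.exp (-(n / x)))
    (-Real.log (1 - Real.exp (-(1 / x)))) := by
  have h1 : |Real.exp (-(1 / x))| < 1 := by
    rw [abs_of_pos (Real.exp_pos _), Real.exp_lt_one_iff]
    have : 0 < 1 / x := by positivity
    linarith
  have := Real.hasSum_pow_div_log_of_abs_lt_one h1
  refine (hasSum_nat_add_iff' 1).1 ?_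
  simp only [Finset.range_one, Finset.sum_singleton, Nat.cast_zero, div_zero, zero_mul, sub_zero]
  refine this.congr_fun fun n => ?_
  rw [← Real.exp_nat_mul]
  push_cast
  rw [show -(((n : ℝ) + 1) / x) = ((n : ℝ) + 1) * -(1 / x) by ring]
  ring

/-- The average of `gg` at scale `x`, obtained by integrating the two step functions term by term. -/
lemma integral_gg {x : ℝ} (hx : 0 < x) : ∫ v in Ioi 0, gg (x * v) * Real.exp (-v) =
    Real.log (riemannZeta ((1 + 1 / x : ℝ) : ℂ)).re + Real.log (1 - Real.exp (-(1 / x))) := by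
  have hs1 := summable_aa hx
  have hs2 := summable_harm hx
  have c1 : ∀ n : ℕ, 0 ≤ Real.log n / x := fun n => div_nonneg (Real.log_natCast_nonneg n) hx.le
  have c2 : ∀ n : ℕ, 0 ≤ (n : ℝ) / x := fun n => by positivity
  have i1 : ∀ n, Integrable (fun v => aa n * (Ici (Real.log n / x)).indicator (fun v => Real.exp (-v)) v)
    (volume.restrict (Ioi 0)) := fun n => integrable_step.const_mul _
  have i2 : ∀ n : ℕ, Integrable (fun v => 1 / n * (Ici ((n : ℝ) / x)).indicator (fun v => Real.exp (-v)) v)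
    (volume.restrict (Ioi 0)) := fun n => integrable_step.const_mul _
  have hI : ∀ n, Integrable (FF x n) (volume.restrict (Ioi 0)) := fun n => (i1 n).sub (i2 n)
  have hval : ∀ n, ∫ v in Ioi 0, FF x n v =
      aa n * Real.exp (-(Real.log n / x)) - 1 / (n : ℝ) * Real.exp (-(n / x)) := by
    intro n
    unfold FF
    rw [integral_sub (i1 n) (i2 n), integral_const_mul, integral_const_mul, integral_step (c1 n),
      integral_step (c2 n)]
  have hnorm : ∀ n, ∫ v in Ioi 0, ‖FF x n v‖ ≤
      aa n * Real.exp (-(Real.log n / x)) + 1 / (n : ℝ) * Real.exp (-(n / x)) := by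
    intro n
    calc _ ≤ ∫ v in Ioi 0, (aa n * (Ici (Real.log n / x)).indicator (fun v => Real.exp (-v)) v +
          1 / n * (Ici ((n : ℝ) / x)).indicator (fun v => Real.exp (-v)) v) := by
          refine integral_mono (hI n).norm ((i1 n).add (i2 n)) fun v => ?_
          have p1 : 0 ≤ aa n * (Ici (Real.log n / x)).indicator (fun v => Real.exp (-v)) v :=
            mul_nonneg (aa_nonneg n) (indicator_nonneg (fun _ _ => (Real.exp_pos _).le) _)
          have p2 : 0 ≤ 1 / (n : ℝ) * (Ici ((n : ℝ) / x)).indicator (fun v => Real.exp (-v)) v :=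
            mul_nonneg (by positivity) (indicator_nonneg (fun _ _ => (Real.exp_pos _).le) _)
          simp only [FF, Real.norm_eq_abs]
          rw [abs_le]
          constructor <;> linarith
      _ = _ := by
          rw [integral_add (i1 n) (i2 n), integral_const_mul, integral_const_mul,
            integral_step (c1 n), integral_step (c2 n)]
  have key := hasSum_integral_of_summable_integral_norm hI
    (Summable.of_nonneg_of_le (fun n => integral_nonneg fun v => norm_nonneg _) hnorm
      (hs1.add hs2).summable)
  simp only [hval] at key
  have := (hs1.sub hs2).unique key
  rw [sub_neg_eq_add] at this
  rw [this]
  refine setIntegral_congr_fun measurableSet_Ioi fun v hv => ?_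
  have hxv : 0 ≤ x * v := mul_nonneg hx.le (le_of_lt hv)
  -- Both step functions are finite sums for each `v`.
  have t1 : HasSum (fun n : ℕ => aa n * (Ici (Real.log n / x)).indicator (fun v => Real.exp (-v)) v)
      (At (x * v) * Real.exp (-v)) := by
    rw [At, Finset.sum_mul]
    have : ∀ n ∈ Finset.range (⌊Real.exp (x * v)⌋₊ + 1),
        vonMangoldt n / (n * Real.log n) * Real.exp (-v) =
        aa n * (Ici (Real.log n / x)).indicator (fun v => Real.exp (-v)) v := by
      intro n hn
      rcases Nat.eq_zero_or_pos n with rfl | hn0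
      · simp [aa]
      have h := (Real.log_le_iff_le_exp (by positivity)).2 (le_exp_of_mem hn)
      rw [indicator_of_mem (mem_Ici.2 ((div_le_iff₀' hx).2 h)), aa]
    rw [Finset.sum_congr rfl this]
    refine hasSum_sum_of_ne_finset_zero fun n hn => ?_
    rw [Finset.mem_range, not_lt] at hn
    have h1 := Nat.lt_of_floor_lt (Nat.lt_of_succ_le hn)
    rw [indicator_of_notMem, mul_zero]
    rw [mem_Ici, not_le, lt_div_iff₀' hx]
    exact (Real.lt_log_iff_exp_lt (lt_trans (Real.exp_pos _) h1)).2 h1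
  have t2 : HasSum (fun n : ℕ => 1 / n * (Ici ((n : ℝ) / x)).indicator (fun v => Real.exp (-v)) v)
      (harm (x * v) * Real.exp (-v)) := by
    rw [harm, Finset.sum_mul]
    have : ∀ n ∈ Finset.range (⌊x * v⌋₊ + 1), 1 / (n : ℝ) * Real.exp (-v) =
        1 / n * (Ici ((n : ℝ) / x)).indicator (fun v => Real.exp (-v)) v := by
      intro n hn
      rw [Finset.mem_range, Nat.lt_succ_iff] at hn
      have h := (Nat.le_floor_iff hxv).1 hn
      rw [indicator_of_mem (mem_Ici.2 ((div_le_iff₀' hx).2 h))]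
    rw [Finset.sum_congr rfl this]
    refine hasSum_sum_of_ne_finset_zero fun n hn => ?_
    rw [Finset.mem_range, not_lt] at hn
    have h1 := Nat.lt_of_floor_lt (Nat.lt_of_succ_le hn)
    rw [indicator_of_notMem, mul_zero]
    rw [mem_Ici, not_le, lt_div_iff₀' hx]
    exact h1
  simp only [FF]
  rw [(t1.sub t2).tsum_eq, gg]
  ring

/-- Both `ζ (1 + s)` and `1 / (1 - e^{-s})` are asymptotic to `1 / s` as `s → 0⁺`. -/
lemma tendsto_zeta_side : Tendsto (fun x : ℝ =>
    Real.log (riemannZeta ((1 + 1 / x : ℝ) : ℂ)).re + Real.log (1 - Real.exp (-(1 / x)))) atTop (𝓝 0) := by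
  have h1 : Tendsto (fun x : ℝ => 1 / x) atTop (𝓝[>] 0) := by
    simpa only [one_div] using tendsto_inv_atTop_nhdsGT_zero (𝕜 := ℝ)
  have hz : Tendsto (fun s : ℝ => s * (riemannZeta ((1 + s : ℝ) : ℂ)).re) (𝓝[>] 0) (𝓝 1) := by
    have hm : Tendsto (fun s : ℝ => ((1 + s : ℝ) : ℂ)) (𝓝[>] 0) (𝓝[≠] 1) := by
      refine tendsto_nhdsWithin_iff.2 ⟨?_, ?_⟩
      · have : Continuous fun s : ℝ => ((1 + s : ℝ) : ℂ) := by fun_prop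
        have := (this.tendsto 0).mono_left (nhdsWithin_le_nhds (s := Ioi 0))
        simpa using this
      · filter_upwards [self_mem_nhdsWithin] with s hs
        have : s ≠ 0 := ne_of_gt hs
        simp [this]
    have := (Complex.continuous_re.tendsto 1).comp (riemannZeta_residue_one.comp hm)
    refine this.congr fun s => ?_
    simp only [Function.comp_apply]
    rw [show ((1 + s : ℝ) : ℂ) - 1 = (s : ℂ) by push_cast; ring, re_ofReal_mul]
  have he : Tendsto (fun s : ℝ => (1 - Real.exp (-s)) / s) (𝓝[>] 0) (𝓝 1) := by
    have hd : HasDerivAt (fun s : ℝ => 1 - Real.exp (-s)) 1 0 := by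
      have := ((hasDerivAt_neg (0 : ℝ)).exp).const_sub 1
      simpa using this
    have := hd.tendsto_slope.mono_left (nhdsWithin_mono 0 (fun s (hs : s ∈ Ioi (0 : ℝ)) => ne_of_gt hs))
    refine this.congr fun s => ?_
    simp [slope_def_field]
  have hm := hz.mul he
  rw [one_mul] at hm
  have hl := (Real.continuousAt_log one_ne_zero).tendsto.comp hm
  have hfin := hl.comp h1
  rw [Real.log_one] at hfin
  have hzpos : ∀ᶠ s in 𝓝[>] (0 : ℝ), 0 < s * (riemannZeta ((1 + s : ℝ) : ℂ)).re :=
    hz.eventually (lt_mem_nhds one_pos)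
  refine hfin.congr' ?_
  filter_upwards [h1.eventually hzpos, h1.eventually self_mem_nhdsWithin] with x hx hx1
  have hx1 : 0 < 1 / x := hx1
  simp only [Function.comp_apply]
  have p1 : 0 < (riemannZeta ((1 + 1 / x : ℝ) : ℂ)).re := (pos_iff_pos_of_mul_pos hx).1 hx1
  have p2 : 0 < 1 - Real.exp (-(1 / x)) := by
    have : Real.exp (-(1 / x)) < 1 := Real.exp_lt_one_iff.2 (by linarith)
    linarith
  rw [← Real.log_mul p1.ne' p2.ne']
  have hx0 : x ≠ 0 := by rintro rfl; simp at hx1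
  congr 1
  field_simp

/-- The averages of `gg` tend to its limit `C - γ` by dominated convergence, and to `0` by the
behaviour of `ζ` near `1`. -/
lemma limit_eq_gamma {C : ℝ} (hC : Tendsto VV atTop (𝓝 C)) : C = Real.eulerMascheroniConstant := by
  have hg := tendsto_gg hC
  obtain ⟨B, hB⟩ := gg_bounded hg
  have hint : Integrable (fun v : ℝ => Real.exp (-v)) (volume.restrict (Ioi 0)) := by
    have := integrableOn_exp_mul_Ioi (a := -1) (by norm_num) 0
    simpa [IntegrableOn] using this
  have hdom : Tendsto (fun x : ℝ => ∫ v in Ioi 0, gg (x * v) * Real.exp (-v)) atTop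
      (𝓝 (∫ v in Ioi 0, (C - Real.eulerMascheroniConstant) * Real.exp (-v))) := by
    refine tendsto_integral_filter_of_dominated_convergence (fun v => B * Real.exp (-v)) ?_ ?_
      (hint.const_mul B) ?_
    · refine Eventually.of_forall fun x => ?_
      exact ((measurable_gg.comp (measurable_const_mul x)).mul
        (by fun_prop)).aestronglyMeasurable
    · refine Eventually.of_forall fun x => Eventually.of_forall fun v => ?_
      rw [norm_mul, Real.norm_eq_abs, Real.norm_of_nonneg (Real.exp_pos _).le]
      exact mul_le_mul_of_nonneg_right (hB _) (Real.exp_pos _).le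
    · filter_upwards [ae_restrict_mem measurableSet_Ioi] with v hv
      exact (hg.comp (tendsto_id.atTop_mul_const hv)).mul_const _
  rw [integral_const_mul, integral_exp_neg_Ioi, neg_zero, Real.exp_zero, mul_one] at hdom
  have hz := tendsto_zeta_side.congr' (f₂ := fun x : ℝ => ∫ v in Ioi 0, gg (x * v) * Real.exp (-v)) (by
    filter_upwards [eventually_gt_atTop (0 : ℝ)] with x hx
    rw [integral_gg hx])
  linarith [tendsto_nhds_unique hdom hz]

/-- A sharp form of Mertens' theorem for the sum `∑_{n ≤ e^u} Λ(n) / (n log n)`; the term with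
`ψ` is kept, because with `e^u = log N` it cancels against the Chebyshev function in the bound
for `log (N / φ(N))`. -/
lemma At_le {u : ℝ} (hu : 21 / 2 ≤ u) :
    At u - Chebyshev.psi (Real.exp u) * (Real.exp (-u) / u) ≤
      Real.log u - 1 / u + Real.eulerMascheroniConstant + 0.67 * (3 / (2 * u ^ 2) + 5 / (3 * u ^ 3)) := by
  obtain ⟨C, hC, hle⟩ := exists_limit
  rw [limit_eq_gamma hC] at hle
  have h1 := hle u hu
  rw [VV_eq (by linarith)] at h1
  have hu0 : 0 < u := by linarith
  have hq : 0 ≤ qq u := by unfold qq; positivity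
  have h2 : RR u * qq u ≤ 0.67 / u * qq u :=
    mul_le_mul_of_nonneg_right ((le_abs_self _).trans (abs_RR_le' hu)) hq
  have e : 0.67 / u * qq u + bb u = 0.67 * (3 / (2 * u ^ 2) + 5 / (3 * u ^ 3)) := by
    rw [qq, bb]; field_simp; ring
  linarith

/-! ### Reduction of `N / φ(N)` to sums over primes -/

/-- The contribution `log (p / (p - 1))` of a prime `p` to `log (N / φ(N))`. -/
noncomputable def ww (p : ℕ) : ℝ := -Real.log (1 - 1 / p)

lemma one_sub_pos {p : ℕ} (hp : 2 ≤ p) : (0 : ℝ) < 1 - 1 / p := by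
  have : (2 : ℝ) ≤ p := by exact_mod_cast hp
  rw [sub_pos, div_lt_one (by linarith)]
  linarith

lemma one_div_le_ww {p : ℕ} (hp : 2 ≤ p) : 1 / (p : ℝ) ≤ ww p := by
  have := Real.log_le_sub_one_of_pos (one_sub_pos hp)
  rw [ww]; linarith

lemma ww_le {p : ℕ} (hp : 2 ≤ p) : ww p ≤ 1 / ((p : ℝ) - 1) := by
  have h := Real.one_sub_inv_le_log_of_pos (one_sub_pos hp)
  have h2 : (2 : ℝ) ≤ p := by exact_mod_cast hp
  have : (p : ℝ) - 1 ≠ 0 := by linarith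
  have e : (1 - 1 / (p : ℝ))⁻¹ = 1 + 1 / ((p : ℝ) - 1) := by
    have : (p : ℝ) ≠ 0 := by linarith
    field_simp
    ring
  rw [ww]; rw [e] at h; linarith

lemma log_ratio {N : ℕ} (hN : N ≠ 0) :
    Real.log ((N : ℝ) / (Nat.totient N : ℝ)) = ∑ p ∈ N.primeFactors, ww p := by
  have h := Nat.totient_eq_mul_prod_factors N
  have h' : (Nat.totient N : ℝ) = N * ∏ p ∈ N.primeFactors, (1 - (p : ℝ)⁻¹) := by
    have := congrArg (fun q : ℚ => (q : ℝ)) h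
    push_cast at this
    exact this
  have hne : ∀ p ∈ N.primeFactors, (1 - (p : ℝ)⁻¹) ≠ 0 := by
    intro p hp
    have := one_sub_pos (Nat.prime_of_mem_primeFactors hp).two_le
    rw [one_div] at this
    exact this.ne'
  have hN' : (N : ℝ) ≠ 0 := by exact_mod_cast hN
  rw [h', div_mul_eq_div_div, div_self hN', one_div, Real.log_inv, Real.log_prod hne,
    ← Finset.sum_neg_distrib]
  simp [ww]

lemma sum_log_primeFactors_le {N : ℕ} (hN : N ≠ 0) :
    ∑ p ∈ N.primeFactors, Real.log p ≤ Real.log N := by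
  rw [← Real.log_prod fun p hp => by
    exact_mod_cast (Nat.prime_of_mem_primeFactors hp).ne_zero]
  have h := Nat.le_of_dvd (Nat.pos_of_ne_zero hN) (Nat.prod_primeFactors_dvd N)
  have h0 : 0 < ∏ p ∈ N.primeFactors, p := Finset.prod_pos fun p hp =>
    (Nat.prime_of_mem_primeFactors hp).pos
  rw [← Nat.cast_prod]
  exact Real.log_le_log (by exact_mod_cast h0) (by exact_mod_cast h)

/-- A linear-programming bound, with multiplier `l'` for the primes in `P` missing from `N` and `l` for
the prime factors of `N` outside `P`. The constraint is that the sum of `log p` over the prime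
factors of `N` is at most `log N`. -/
lemma tangent {N : ℕ} (hN : N ≠ 0) (P : Finset ℕ) {l l' : ℝ} (hl : l' ≤ l)
    (h1 : ∀ p ∈ P, 2 ≤ p → l' * Real.log p ≤ ww p)
    (hP : ∀ p ∈ P, 2 ≤ p) (hl0 : 0 ≤ l)
    (h2 : ∀ p ∈ N.primeFactors, p ∉ P → ww p ≤ l * Real.log p) :
    Real.log ((N : ℝ) / (Nat.totient N : ℝ)) ≤
      ∑ p ∈ P, ww p + l * Real.log N - l' * ∑ p ∈ P, Real.log p := by
  classical
  rw [log_ratio hN]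
  have e1 := Finset.sum_inter_add_sum_sdiff N.primeFactors P ww
  have e2 := Finset.sum_inter_add_sum_sdiff N.primeFactors P fun p => Real.log p
  have e3 := Finset.sum_inter_add_sum_sdiff P N.primeFactors ww
  have e4 := Finset.sum_inter_add_sum_sdiff P N.primeFactors fun p => Real.log p
  rw [Finset.inter_comm] at e3 e4
  have b1 : ∑ p ∈ N.primeFactors \ P, ww p ≤ l * ∑ p ∈ N.primeFactors \ P, Real.log p := by
    rw [Finset.mul_sum]
    exact Finset.sum_le_sum fun p hp => h2 p (Finset.mem_sdiff.1 hp).1 (Finset.mem_sdiff.1 hp).2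
  have b2 : l' * ∑ p ∈ P \ N.primeFactors, Real.log p ≤ ∑ p ∈ P \ N.primeFactors, ww p := by
    rw [Finset.mul_sum]
    exact Finset.sum_le_sum fun p hp => h1 p (Finset.mem_sdiff.1 hp).1 (hP p (Finset.mem_sdiff.1 hp).1)
  have b3 : 0 ≤ ∑ p ∈ N.primeFactors ∩ P, Real.log p :=
    Finset.sum_nonneg fun p _ => Real.log_natCast_nonneg p
  have b4 := mul_le_mul_of_nonneg_left (sum_log_primeFactors_le hN) hl0
  have b5 := mul_le_mul_of_nonneg_right hl b3
  rw [← e2] at b4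
  rw [← e1, ← e3, ← e4]
  nlinarith

/-- The von Mangoldt function restricted to proper prime powers. -/
noncomputable def vM2 (n : ℕ) : ℝ := vonMangoldt n - if n.Prime then Real.log n else 0

lemma vM2_nonneg (n : ℕ) : 0 ≤ vM2 n := by
  rw [vM2]
  split_ifs with h
  · rw [ArithmeticFunction.vonMangoldt_apply_prime h, sub_self]
  · rw [sub_zero]; exact ArithmeticFunction.vonMangoldt_nonneg

/-- The summatory function of `vM2`. -/
noncomputable def SS (m : ℕ) : ℝ := ∑ n ∈ Finset.range (m + 1), vM2 n

lemma SS_eq (m : ℕ) : SS m = Chebyshev.psi m - Chebyshev.theta m := by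
  rw [SS, Chebyshev.psi_eq_sum_Icc, Chebyshev.theta_eq_sum_Icc, Nat.floor_natCast,
    ← Nat.range_succ_eq_Icc_zero, Finset.sum_filter, ← Finset.sum_sub_distrib]
  rfl

/-- Partial summation: a square-root bound for `SS` controls the sum of `vM2 n / n` beyond `m`. -/
lemma tail_le {C : ℝ} {m : ℕ} (hm : 1 ≤ m) (hS : ∀ M, m ≤ M → SS M ≤ C * Real.sqrt M) {M : ℕ}
    (hM : m ≤ M) : SS m / m + ∑ n ∈ Finset.Ioc m M, vM2 n / n ≤
      SS M / M + 2 * C * (1 / Real.sqrt m - 1 / Real.sqrt M) := by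
  induction M, hM using Nat.le_induction with
  | base => simp
  | succ M hM ih =>
    rw [← Finset.insert_Ioc_right_eq_Ioc_add_one hM, Finset.sum_insert (by simp)]
    have hMp : (0 : ℝ) < M := by exact_mod_cast (lt_of_lt_of_le hm hM)
    have e : vM2 (M + 1) = SS (M + 1) - SS M := by
      rw [SS, Finset.sum_range_succ, ← SS]; ring
    rw [e]
    have hs := hS M hM
    set a := Real.sqrt M with ha
    set b := Real.sqrt ((M + 1 : ℕ) : ℝ) with hb
    have ha2 : a ^ 2 = M := Real.sq_sqrt hMp.le
    have hb2 : b ^ 2 = M + 1 := by rw [hb, Real.sq_sqrt (by positivity)]; push_cast; ring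
    have ha0 : 0 < a := Real.sqrt_pos.2 hMp
    have hb0 : 0 < b := Real.sqrt_pos.2 (by positivity)
    have hab : a ≤ b := Real.sqrt_le_sqrt (by push_cast; linarith)
    have hC : 0 ≤ C := by
      have h0 : 0 ≤ SS M := Finset.sum_nonneg fun n _ => vM2_nonneg n
      by_contra hneg
      push Not at hneg
      nlinarith
    push_cast
    rw [← ha2] at ih ⊢
    have hb2' : b ^ 2 = a ^ 2 + 1 := by rw [hb2, ha2]
    have k1 : SS M * (1 / a ^ 2 - 1 / b ^ 2) ≤ C * a * (1 / a ^ 2 - 1 / b ^ 2) := by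
      refine mul_le_mul_of_nonneg_right hs ?_
      rw [sub_nonneg]
      exact one_div_le_one_div_of_le (by positivity) (by nlinarith)
    have k2 : C * a * (1 / a ^ 2 - 1 / b ^ 2) ≤ 2 * C * (1 / a - 1 / b) := by
      have : 2 * C * (1 / a - 1 / b) - C * a * (1 / a ^ 2 - 1 / b ^ 2) =
          C * (b - a) ^ 2 / (a * b ^ 2) := by
        field_simp
        ring
      have h0 : 0 ≤ C * (b - a) ^ 2 / (a * b ^ 2) := by positivity
      linarith
    rw [← hb2']
    have : (SS (M + 1) - SS M) / b ^ 2 = SS (M + 1) / b ^ 2 - SS M / b ^ 2 := by ring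
    have h3 : SS M * (1 / a ^ 2 - 1 / b ^ 2) = SS M / a ^ 2 - SS M / b ^ 2 := by ring
    rw [this]
    linarith

lemma tail_le' {C : ℝ} {m : ℕ} (hm : 1 ≤ m) (hS : ∀ M, m ≤ M → SS M ≤ C * Real.sqrt M) {M : ℕ}
    (hM : m ≤ M) : SS m / m + ∑ n ∈ Finset.Ioc m M, vM2 n / n ≤ 2 * C / Real.sqrt m := by
  refine (tail_le hm hS hM).trans ?_
  have hMp : (0 : ℝ) < M := by exact_mod_cast (lt_of_lt_of_le hm hM)
  have h1 : SS M / M ≤ C / Real.sqrt M := by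
    rw [div_le_div_iff₀ hMp (Real.sqrt_pos.2 hMp)]
    calc SS M * Real.sqrt M ≤ C * Real.sqrt M * Real.sqrt M :=
          mul_le_mul_of_nonneg_right (hS M hM) (Real.sqrt_nonneg _)
      _ = C * M := by rw [mul_assoc, Real.mul_self_sqrt hMp.le]
  have h2 : 0 ≤ C / Real.sqrt M := (div_nonneg (Finset.sum_nonneg fun n _ => vM2_nonneg n) hMp.le).trans h1
  have e : 2 * C * (1 / Real.sqrt m - 1 / Real.sqrt M) = 2 * C / Real.sqrt m - 2 * (C / Real.sqrt M) := by
    ring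
  rw [e]; linarith

/-- The primes up to `m`. -/
abbrev pr (m : ℕ) : Finset ℕ := (Finset.range (m + 1)).filter Nat.Prime

lemma aa_prime_pow {p k : ℕ} (hp : p.Prime) :
    aa (p ^ (k + 1)) = (1 / (p : ℝ)) ^ (k + 1) / (k + 1) := by
  have hl : 0 < Real.log p := Real.log_pos (by exact_mod_cast hp.one_lt)
  have hp0 : (0 : ℝ) < p := by exact_mod_cast hp.pos
  rw [aa, ArithmeticFunction.vonMangoldt_apply_pow (by omega), ArithmeticFunction.vonMangoldt_apply_prime hp]
  push_cast
  rw [Real.log_pow, one_div, inv_pow]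
  push_cast
  field_simp

lemma hasSum_ww {p : ℕ} (hp : p.Prime) : HasSum (fun k => aa (p ^ (k + 1))) (ww p) := by
  have h : |1 / (p : ℝ)| < 1 := by
    rw [abs_of_nonneg (by positivity)]
    have := one_sub_pos hp.two_le
    linarith
  exact (Real.hasSum_pow_div_log_of_abs_lt_one h).congr_fun fun k => aa_prime_pow hp

lemma prime_pow_inj {p q k l : ℕ} (hp : p.Prime) (hq : q.Prime) (h : p ^ (k + 1) = q ^ (l + 1)) :
    p = q ∧ k = l := by
  have h1 : p = q := by
    have : p ∣ q ^ (l + 1) := h ▸ dvd_pow_self p (by omega)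
    exact (Nat.prime_dvd_prime_iff_eq hp hq).1 (hp.dvd_of_dvd_pow this)
  subst h1
  have := Nat.pow_right_injective hp.two_le h
  exact ⟨rfl, by omega⟩

/-- Expanding `ww p` over prime powers: powers up to `x` give `At`, the others are small. -/
lemma sum_ww_le {C x : ℝ} (hx : 1 < x) {m : ℕ} (hm : m = ⌊x⌋₊)
    (hS : ∀ M, m ≤ M → SS M ≤ C * Real.sqrt M) :
    ∑ p ∈ pr m, ww p ≤ At (Real.log x) + (2 * C / Real.sqrt m - SS m / m) / Real.log x := by
  have hx0 : 0 < x := by linarith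
  have hL : 0 < Real.log x := Real.log_pos hx
  have hm1 : 1 ≤ m := by rw [hm]; exact (Nat.one_le_floor_iff x).2 hx.le
  have hlim : Tendsto (fun K => ∑ p ∈ pr m, ∑ k ∈ Finset.range K, aa (p ^ (k + 1))) atTop
      (𝓝 (∑ p ∈ pr m, ww p)) :=
    tendsto_finsetSum _ fun p hp => (hasSum_ww (Finset.mem_filter.1 hp).2).tendsto_sum_nat
  refine le_of_tendsto hlim (Eventually.of_forall fun K => ?_)
  -- Each pair `(p, k)` is sent to the prime power it represents.
  set b : ℕ → ℝ := fun n => if n ≤ m then aa n else vM2 n / n / Real.log x with hb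
  have hb0 : ∀ n, 0 ≤ b n := by
    intro n; simp only [hb]
    split_ifs
    · exact aa_nonneg n
    · exact div_nonneg (div_nonneg (vM2_nonneg n) (Nat.cast_nonneg n)) hL.le
  set M := (m + 1) ^ (K + 1) with hMdef
  have hmM : m ≤ M := by
    calc m ≤ m + 1 := by omega
      _ = (m + 1) ^ 1 := by ring
      _ ≤ M := Nat.pow_le_pow_right (by omega) (by omega)
  have hsplit : ∑ n ∈ Finset.range (M + 1), b n =
      At (Real.log x) + (∑ n ∈ Finset.Ioc m M, vM2 n / n) / Real.log x := by
    have e : Finset.range (M + 1) = Finset.range (m + 1) ∪ Finset.Ioc m M := by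
      ext n; simp only [Finset.mem_union, Finset.mem_range, Finset.mem_Ioc]; omega
    have hd : Disjoint (Finset.range (m + 1)) (Finset.Ioc m M) := by
      rw [Finset.disjoint_left]; intro n; simp only [Finset.mem_range, Finset.mem_Ioc]; omega
    rw [e, Finset.sum_union hd, At, Real.exp_log hx0, ← hm, Finset.sum_div]
    congr 1
    · refine Finset.sum_congr rfl fun n hn => ?_
      rw [Finset.mem_range, Nat.lt_succ_iff] at hn
      simp only [hb, if_pos hn, aa]
    · refine Finset.sum_congr rfl fun n hn => ?_
      rw [Finset.mem_Ioc] at hn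
      simp only [hb, if_neg (not_le.2 hn.1)]
  have hle : ∑ p ∈ pr m, ∑ k ∈ Finset.range K, aa (p ^ (k + 1)) ≤ ∑ n ∈ Finset.range (M + 1), b n := by
    rw [← Finset.sum_product']
    have hinj : InjOn (fun z : ℕ × ℕ => z.1 ^ (z.2 + 1)) ((pr m ×ˢ Finset.range K : Finset (ℕ × ℕ)) : Set (ℕ × ℕ)) := by
      rintro ⟨p, k⟩ h1 ⟨q, l⟩ h2 h
      simp only [Finset.coe_product, Set.mem_prod, Finset.mem_coe] at h1 h2
      obtain ⟨h3, h4⟩ := prime_pow_inj (Finset.mem_filter.1 h1.1).2 (Finset.mem_filter.1 h2.1).2 h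
      exact Prod.ext h3 h4
    calc _ ≤ ∑ z ∈ pr m ×ˢ Finset.range K, b (z.1 ^ (z.2 + 1)) := by
          refine Finset.sum_le_sum fun ⟨p, k⟩ hz => ?_
          rw [Finset.mem_product, Finset.mem_filter, Finset.mem_range] at hz
          obtain ⟨⟨hpm, hp⟩, hk⟩ := hz
          simp only [hb]
          split_ifs with hn
          · exact le_rfl
          · have hk0 : k ≠ 0 := by
              rintro rfl
              rw [zero_add, pow_one] at hn
              omega
            have hnp : ¬ (p ^ (k + 1)).Prime := Nat.Prime.not_prime_pow (by omega)
            have hxn : x ≤ (p ^ (k + 1) : ℕ) := by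
              rw [hm, not_le] at hn
              exact (Nat.lt_of_floor_lt hn).le
            rw [aa, vM2, if_neg hnp, sub_zero, div_mul_eq_div_div]
            exact div_le_div_of_nonneg_left (div_nonneg ArithmeticFunction.vonMangoldt_nonneg
              (Nat.cast_nonneg _)) hL (Real.log_le_log hx0 hxn)
      _ = ∑ n ∈ (pr m ×ˢ Finset.range K).image (fun z : ℕ × ℕ => z.1 ^ (z.2 + 1)), b n :=
          (Finset.sum_image hinj).symm
      _ ≤ _ := by
          refine Finset.sum_le_sum_of_subset_of_nonneg (fun n hn => ?_) fun n _ _ => hb0 n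
          obtain ⟨⟨p, k⟩, hz, rfl⟩ := Finset.mem_image.1 hn
          rw [Finset.mem_product, Finset.mem_filter, Finset.mem_range, Finset.mem_range] at hz
          rw [Finset.mem_range, Nat.lt_succ_iff, hMdef]
          exact (Nat.pow_le_pow_left (by omega) _).trans (Nat.pow_le_pow_right (by omega) (by omega))
  refine hle.trans ?_
  rw [hsplit]
  gcongr
  have := tail_le' hm1 hS hmM
  linarith

/-! ### The inequality for `log N ≥ exp (21 / 2)` -/

lemma exp_lower : (5.72 : ℝ) ≤ Real.exp 1.749 ∧ (13.7 : ℝ) ≤ Real.exp 2.624 ∧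
    (23.3 : ℝ) ≤ Real.exp 3.1497 := by
  refine ⟨?_, ?_, ?_⟩
  · refine le_trans ?_ (Real.sum_le_exp_of_nonneg (by norm_num) 9)
    norm_num [Finset.sum_range_succ, Nat.factorial]
  · refine le_trans ?_ (Real.sum_le_exp_of_nonneg (by norm_num) 11)
    norm_num [Finset.sum_range_succ, Nat.factorial]
  · refine le_trans ?_ (Real.sum_le_exp_of_nonneg (by norm_num) 13)
    norm_num [Finset.sum_range_succ, Nat.factorial]

lemma log_four_bounds : Real.log 4 ≤ 1.3863 := by
  rw [show (4 : ℝ) = 2 ^ 2 by norm_num, Real.log_pow]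
  push_cast
  linarith [Real.log_two_lt_d9]

/-- `ψ(M) - θ(M) = ∑_{k ≥ 2} θ(M^{1/k})`, estimated with `θ(x) ≤ x log 4` for each `k`; the exponents
`2`, `3`, `4` are taken separately and the remaining ones together. -/
lemma SS_le {M : ℕ} (hM : 10.499 ≤ Real.log M) : SS M ≤ 2.5 * Real.sqrt M := by
  set l := Real.log M with hl
  have hM0 : (0 : ℝ) < M := by
    rcases Nat.eq_zero_or_pos M with rfl | h
    · norm_num at hl; rw [hl] at hM; norm_num at hM
    · exact_mod_cast h
  have hMl : (M : ℝ) = Real.exp l := (Real.exp_log hM0).symm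
  have hlog2 := Real.log_two_lt_d9
  have hlog2' := Real.log_two_gt_d9
  have hlog2p : 0 < Real.log 2 := by linarith
  set K := ⌊l / Real.log 2⌋₊ with hK
  have hKle : (K : ℝ) ≤ 1.4427 * l := by
    refine (Nat.floor_le (by positivity)).trans ?_
    rw [div_le_iff₀ hlog2p]
    nlinarith
  have hK5 : 5 ≤ K := by
    refine Nat.le_floor ?_
    rw [le_div_iff₀ hlog2p]
    push_cast
    linarith
  have hθ : ∀ n : ℕ, Chebyshev.theta ((M : ℝ) ^ ((1 : ℝ) / n)) ≤ 1.3863 * Real.exp (l / n) := by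
    intro n
    have e : (M : ℝ) ^ ((1 : ℝ) / n) = Real.exp (l / n) := by
      rw [Real.rpow_def_of_pos hM0, mul_one_div]
    rw [e]
    refine (Chebyshev.theta_le_log4_mul_x (Real.exp_pos _).le).trans ?_
    exact mul_le_mul_of_nonneg_right log_four_bounds (Real.exp_pos _).le
  have hψ := Chebyshev.psi_eq_sum_theta' hM0.le (N := K) le_rfl
  have hset : Finset.Icc 1 K = {1} ∪ ({2, 3, 4} ∪ Finset.Icc 5 K) := by
    ext n; simp only [Finset.mem_union, Finset.mem_insert, Finset.mem_singleton, Finset.mem_Icc]; omega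
  rw [hset, Finset.sum_union (by rw [Finset.disjoint_left]; intro n; simp; omega),
    Finset.sum_union (by rw [Finset.disjoint_left]; intro n; simp; omega),
    Finset.sum_singleton, Finset.sum_insert (by simp), Finset.sum_insert (by simp),
    Finset.sum_singleton] at hψ
  have htail : ∑ n ∈ Finset.Icc 5 K, Chebyshev.theta ((M : ℝ) ^ ((1 : ℝ) / n)) ≤
      ((K : ℝ) - 4) * (1.3863 * Real.exp (l / 5)) := by
    have := Finset.sum_le_card_nsmul (Finset.Icc 5 K)
      (fun n : ℕ => Chebyshev.theta ((M : ℝ) ^ ((1 : ℝ) / n))) (1.3863 * Real.exp (l / 5)) (by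
        intro n hn
        refine (hθ n).trans ?_
        have h5 : (5 : ℝ) ≤ n := by exact_mod_cast (Finset.mem_Icc.1 hn).1
        gcongr)
    rw [Nat.card_Icc, nsmul_eq_mul] at this
    refine this.trans (le_of_eq ?_)
    rw [show K + 1 - 5 = K - 4 by omega, Nat.cast_sub (by omega)]
    norm_num
  rw [SS_eq, hψ]
  have h2 := hθ 2
  have h3 := hθ 3
  have h4 := hθ 4
  simp only [Nat.cast_ofNat] at h2 h3 h4 ⊢
  simp only [Nat.cast_one, div_one, Real.rpow_one]
  have hs : Real.sqrt M = Real.exp (l / 2) := by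
    rw [hMl, ← Real.exp_half]
  rw [hs]
  set E := Real.exp (l / 2) with hE
  have hE0 : 0 < E := Real.exp_pos _
  obtain ⟨b1, b2, b3⟩ := exp_lower
  -- The hypothesis `l ≥ 10.499` enters below through `l / 6 ≥ 1.749`, `l / 4 ≥ 2.624` and `3 l / 10 ≥ 3.1497`.
  have c3 : 5.72 * Real.exp (l / 3) ≤ E := by
    have : E = Real.exp (l / 6) * Real.exp (l / 3) := by rw [← Real.exp_add, hE]; congr 1; ring
    rw [this]
    refine mul_le_mul_of_nonneg_right (b1.trans (Real.exp_le_exp.2 ?_)) (Real.exp_pos _).le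
    linarith
  have c4 : 13.7 * Real.exp (l / 4) ≤ E := by
    have : E = Real.exp (l / 4) * Real.exp (l / 4) := by rw [← Real.exp_add, hE]; congr 1; ring
    rw [this]
    refine mul_le_mul_of_nonneg_right (b2.trans (Real.exp_le_exp.2 ?_)) (Real.exp_pos _).le
    linarith
  have c5 : ((K : ℝ) - 4) * Real.exp (l / 5) ≤ 0.5 * E := by
    have e1 : E = Real.exp (3.1497 + (0.3 * l - 3.1497)) * Real.exp (l / 5) := by
      rw [← Real.exp_add, hE]; congr 1; ring
    have e2 : 23.3 * (1 + (0.3 * l - 3.1497)) ≤ Real.exp (3.1497 + (0.3 * l - 3.1497)) := by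
      rw [Real.exp_add]
      have := Real.add_one_le_exp (0.3 * l - 3.1497)
      have h0 : 0 ≤ 1 + (0.3 * l - 3.1497) := by linarith
      nlinarith
    rw [e1, ← mul_assoc]
    refine mul_le_mul_of_nonneg_right ?_ (Real.exp_pos _).le
    linarith
  nlinarith

/-- The bound `tangent` for the primes up to `x = log N`. The multipliers `1 / ((x - 1) L)` and
`1 / (x L)` are the slopes of `ww p` against `log p` just above and just below `x`. The
term `ψ(x) / (x L)` of `tangent` cancels the one in `At_le`, so no estimate for `ψ(x) - x` is needed. -/
lemma log_totient_ratio_le {N : ℕ} (hN : Real.exp (21 / 2) ≤ Real.log N) {L : ℝ}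
    (hL : L = Real.log (Real.log N)) :
    Real.log ((N : ℝ) / (Nat.totient N : ℝ)) ≤
      Real.eulerMascheroniConstant + Real.log L + 1.389 / L ^ 2 := by
  have hN0 : N ≠ 0 := by
    rintro rfl
    have := Real.exp_pos (21 / 2)
    simp at hN; linarith
  set x := Real.log N with hx
  have hxp : 0 < x := (Real.exp_pos _).trans_le hN
  have hL1 : 21 / 2 ≤ L := by rw [hL]; exact (Real.le_log_iff_exp_le hxp).2 hN
  have hL0 : 0 < L := by linarith
  have hxL : Real.exp L = x := by rw [hL, Real.exp_log hxp]
  have hxbig : (18.14 * L) ^ 2 ≤ x := by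
    have h1 := exp_ten_half.1
    have h2 : (190.54 : ℝ) ≤ Real.exp (21 / 4) := by
      rw [Real.exp_neg] at h1
      have := inv_le_of_inv_le₀ (Real.exp_pos _) h1
      exact le_trans (by norm_num) this
    have h3 := Real.add_one_le_exp (L / 2 - 21 / 4)
    have h4 : Real.exp (L / 2) = Real.exp (21 / 4) * Real.exp (L / 2 - 21 / 4) := by
      rw [← Real.exp_add]; congr 1; ring
    have h5 : 18.14 * L ≤ Real.exp (L / 2) := by rw [h4]; nlinarith
    have h6 : x = Real.exp (L / 2) ^ 2 := by rw [← Real.exp_nat_mul, ← hxL]; congr 1; push_cast; ring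
    rw [h6]
    gcongr
  set m := ⌊x⌋₊ with hm
  have hx1 : 1 < x := by nlinarith
  have hmx : x - 1 < m := by have := Nat.lt_floor_add_one x; linarith
  have hmx' : (m : ℝ) ≤ x := Nat.floor_le hxp.le
  have hsq : 18.1 * L ≤ Real.sqrt m := by
    refine Real.le_sqrt_of_sq_le ?_
    nlinarith
  have hlm : 10.499 ≤ Real.log m := by
    have hm0 : (0 : ℝ) < m := by linarith
    rw [Real.le_log_iff_exp_le hm0]
    have h1 : Real.exp 10.499 = Real.exp (21 / 2) * Real.exp (-0.001) := by
      rw [← Real.exp_add]; norm_num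
    have h2 : Real.exp (-0.001) ≤ 0.9995 := by
      rw [Real.exp_neg]
      have := Real.add_one_le_exp (0.001 : ℝ)
      exact inv_le_of_inv_le₀ (by norm_num) (le_trans (by norm_num) this)
    have h0 := Real.exp_pos (21 / 2)
    nlinarith
  have hS : ∀ M, m ≤ M → SS M ≤ 2.5 * Real.sqrt M := fun M hM => by
    refine SS_le (hlm.trans (Real.log_le_log (by linarith) (by exact_mod_cast hM)))
  have hww := sum_ww_le hx1 hm hS
  have hAt := At_le hL1
  have hLx : Real.log x = L := hL.symm
  rw [hLx] at hww
  have hlogle : ∀ p : ℕ, 2 ≤ p → p ≤ m → Real.log p ≤ L := fun p h2 hp => by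
    rw [← hLx]
    refine Real.log_le_log (by positivity) (le_trans ?_ hmx')
    exact_mod_cast hp
  have htan := tangent hN0 (pr m) (l := 1 / ((x - 1) * L)) (l' := 1 / (x * L)) ?_ ?_ ?_ ?_ ?_
  rotate_left
  · refine one_div_le_one_div_of_le (mul_pos (by linarith) hL0) ?_
    nlinarith
  · intro p hp h2
    have hp' : p ≤ m := by
      have := Finset.mem_range.1 (Finset.mem_filter.1 hp).1; omega
    refine le_trans ?_ (one_div_le_ww h2)
    have hp0 : (0 : ℝ) < p := by positivity
    have hpx : (p : ℝ) ≤ x := le_trans (by exact_mod_cast hp') hmx'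
    rw [div_mul_eq_mul_div, one_mul, div_le_div_iff₀ (by positivity) hp0, one_mul, mul_comm]
    exact mul_le_mul hpx (hlogle p h2 hp') (Real.log_natCast_nonneg p) hxp.le
  · exact fun p hp => (Finset.mem_filter.1 hp).2.two_le
  · have : 0 < x - 1 := by linarith
    positivity
  · intro p hp hpP
    have hpp := Nat.prime_of_mem_primeFactors hp
    have hmp : m < p := by
      by_contra h
      exact hpP (Finset.mem_filter.2 ⟨Finset.mem_range.2 (by omega), hpp⟩)
    have hxp' : x < p := Nat.lt_of_floor_lt hmp
    refine (ww_le hpp.two_le).trans ?_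
    have hlp : L ≤ Real.log p := by rw [← hLx]; exact Real.log_le_log hxp hxp'.le
    rw [div_mul_eq_mul_div, one_mul, div_le_div_iff₀ (by linarith) (mul_pos (by linarith) hL0), one_mul,
      mul_comm]
    exact mul_le_mul hlp (by linarith) (by linarith) (by linarith)
  have hθ : ∑ p ∈ pr m, Real.log p = Chebyshev.psi x - SS m := by
    rw [SS_eq, ← Chebyshev.psi_eq_psi_coe_floor, ← Chebyshev.theta_eq_theta_coe_floor,
      Chebyshev.theta_eq_sum_Icc, ← Nat.range_succ_eq_Icc_zero]
    ring
  rw [hθ] at htan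
  have hexp : Real.exp (-L) = 1 / x := by rw [Real.exp_neg, hxL, one_div]
  rw [hxL, hexp] at hAt
  have k1 : SS m / x ≤ SS m / m :=
    div_le_div_of_nonneg_left (Finset.sum_nonneg fun n _ => vM2_nonneg n) (by linarith) hmx'
  have k2 : 1 / ((x - 1) * L) * x ≤ 1 / L + 0.001 / L ^ 2 := by
    have h1 : 0 < x - 1 := by linarith
    have e : 1 / ((x - 1) * L) * x = 1 / L + 1 / (x - 1) / L := by field_simp; ring
    have h2 : 1 / (x - 1) ≤ 0.001 / L := by
      rw [div_le_div_iff₀ h1 hL0]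
      nlinarith
    have h3 : 1 / (x - 1) / L ≤ 0.001 / L / L := by gcongr
    rw [e]
    calc _ ≤ 1 / L + 0.001 / L / L := by linarith
      _ = _ := by rw [div_div, ← sq]
  have k3 : 2 * 2.5 / Real.sqrt m / L ≤ 0.2763 / L ^ 2 := by
    have h1 : 2 * 2.5 / Real.sqrt m ≤ 2 * 2.5 / (18.1 * L) := by gcongr
    calc _ ≤ 2 * 2.5 / (18.1 * L) / L := by gcongr
      _ = (5 / 18.1) / L ^ 2 := by field_simp; norm_num
      _ ≤ _ := by gcongr; norm_num
  have k4 : 0.67 * (3 / (2 * L ^ 2) + 5 / (3 * L ^ 3)) ≤ 1.1115 / L ^ 2 := by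
    have : 0.67 * (3 / (2 * L ^ 2) + 5 / (3 * L ^ 3)) = (1.005 + 3.35 / 3 / L) / L ^ 2 := by
      field_simp; ring
    rw [this]
    gcongr
    have : 3.35 / 3 / L ≤ 3.35 / 3 / (21 / 2) := by gcongr
    linarith
  have e1 : 1 / (x * L) * (Chebyshev.psi x - SS m) = Chebyshev.psi x * (1 / x / L) - SS m / x / L := by
    field_simp
  have e2 : (2 * 2.5 / Real.sqrt m - SS m / m) / L = 2 * 2.5 / Real.sqrt m / L - SS m / m / L := by ring
  have k5 : SS m / x / L ≤ SS m / m / L := by gcongr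
  rw [e1] at htan
  rw [e2] at hww
  have e3 : (1.389 : ℝ) / L ^ 2 = 0.001 / L ^ 2 + 0.2763 / L ^ 2 + 1.1115 / L ^ 2 + 0.0002 / L ^ 2 := by ring
  have h0 : 0 ≤ 0.0002 / L ^ 2 := by positivity
  linarith

lemma exp_gamma_le : Real.exp Real.eulerMascheroniConstant ≤ 1.7811 := by
  refine (Real.exp_le_exp.2 gamma_num.2).trans ?_
  have h := Real.exp_bound' (x := 0.577216) (by norm_num) (by norm_num) (n := 9) (by norm_num)
  refine h.trans ?_
  norm_num [Finset.sum_range_succ, Nat.factorial]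

/-- The inequality for all large `N`. -/
lemma large_case {N : ℕ} (hN : Real.exp (21 / 2) ≤ Real.log N) :
    (N : ℝ) / (Nat.totient N : ℝ) <
      Real.exp Real.eulerMascheroniConstant * Real.log (Real.log (N : ℝ)) +
          5 / (2 * Real.log (Real.log (N : ℝ))) := by
  have h := log_totient_ratio_le hN rfl
  have hxp : 0 < Real.log N := (Real.exp_pos _).trans_le hN
  have hL1 : 21 / 2 ≤ Real.log (Real.log N) := (Real.le_log_iff_exp_le hxp).2 hN
  set L := Real.log (Real.log N) with hL
  have hL0 : 0 < L := by linarith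
  have hN0 : 0 < N := by
    rcases Nat.eq_zero_or_pos N with rfl | h
    · simp at hxp
    · exact h
  have hpos : (0 : ℝ) < (N : ℝ) / (Nat.totient N : ℝ) := by
    have := Nat.totient_pos.2 hN0
    positivity
  set G := Real.exp Real.eulerMascheroniConstant with hG
  have hG0 : 0 < G := Real.exp_pos _
  have hrhs : G * L + 5 / (2 * L) = G * L * (1 + 2.5 / G / L ^ 2) := by
    field_simp; ring
  have ht : 1.4036 / L ^ 2 ≤ 2.5 / G / L ^ 2 := by
    gcongr
    rw [le_div_iff₀ hG0]
    linarith [exp_gamma_le]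
  have h1 : 1.389 / L ^ 2 < Real.log (1 + 1.4036 / L ^ 2) := by
    refine lt_of_lt_of_le ?_ (Real.le_log_one_add_of_nonneg (by positivity))
    have e : 2 * (1.4036 / L ^ 2) / (1.4036 / L ^ 2 + 2) = 2.8072 / (1.4036 + 2 * L ^ 2) := by
      field_simp; norm_num
    rw [e, div_lt_div_iff₀ (by positivity) (by positivity)]
    nlinarith
  have h2 : Real.log (1 + 1.4036 / L ^ 2) ≤ Real.log (1 + 2.5 / G / L ^ 2) :=
    Real.log_le_log (by positivity) (by linarith)
  have hp : 0 < 1 + 2.5 / G / L ^ 2 := by positivity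
  rw [hrhs, ← Real.log_lt_log_iff hpos (by positivity), Real.log_mul (by positivity) hp.ne',
    Real.log_mul hG0.ne' hL0.ne', hG, Real.log_exp]
  linarith

/-! ### A kernel-checked computation with primorials -/

/-- A primality test valid for `n < 197² = 38809`: the `gcd` of `n` with the product of the primes
below `19`, or below `197`, is compared with `1`. -/
def isP (n : ℕ) : Bool :=
  bif Nat.blt n 19 then
    Nat.beq n 2 || Nat.beq n 3 || Nat.beq n 5 || Nat.beq n 7 || Nat.beq n 11 || Nat.beq n 13 ||
      Nat.beq n 17
  else bif Nat.blt n 361 then Nat.beq (Nat.gcd n 510510) 1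
  else Nat.beq (Nat.gcd n 198962376391690981640415251545285153602734402721821058212203976095413910572270) 1

/-- The product of `t p` over the primes `a ≤ p < b`, computed by bisection; the first natural number
bounds the depth of the recursion. -/
def pw (t : ℕ → ℕ) : ℕ → ℕ → ℕ → ℕ
  | 0, _, _ => 1
  | d + 1, a, b =>
    bif Nat.ble b a then 1
    else bif Nat.beq b (a + 1) then bif isP a then t a else 1
    else pw t d a ((a + b) / 2) * pw t d ((a + b) / 2) b

/-- The product of the primes in `[a, b)`. -/
def prods (a b : ℕ) : ℕ := ∏ p ∈ (Finset.Ico a b).filter Nat.Prime, p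

/-- The product of `p - 1` over the primes `p` in `[a, b)`. -/
def prods' (a b : ℕ) : ℕ := ∏ p ∈ (Finset.Ico a b).filter Nat.Prime, (p - 1)

/-- A number `n < r²` that is at least `r` is prime if and only if it has no prime factor below `r`. -/
lemma gcd_prime {r : ℕ} (n : ℕ) (h1 : r ≤ n) (h2 : n < r * r) (h3 : 2 ≤ n) :
    Nat.gcd n (prods 0 r) = 1 ↔ n.Prime := by
  constructor
  · intro h
    by_contra hn
    have h4 := Nat.minFac_sq_le_self (by omega) hn
    have h5 : n.minFac < r := by
      by_contra h6
      push Not at h6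
      nlinarith
    have h6 : n.minFac.Prime := Nat.minFac_prime (by omega)
    have h7 : n.minFac ∣ prods 0 r :=
      Finset.dvd_prod_of_mem (fun p => p) (by simp [h5, h6])
    have := Nat.dvd_gcd (Nat.minFac_dvd n) h7
    rw [h] at this
    exact h6.one_lt.ne' (Nat.dvd_one.1 this)
  · intro h
    apply (Nat.Prime.coprime_iff_not_dvd h).2
    intro hd
    obtain ⟨p, hp, hd⟩ := (Nat.Prime.prime h).exists_mem_finset_dvd hd
    simp at hp
    have := Nat.le_of_dvd hp.2.pos hd
    omega

set_option maxRecDepth 10000 in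
lemma prods_19 : prods 0 19 = 510510 := by decide +kernel
set_option maxRecDepth 10000 in
lemma prods_197 : prods 0 197 =
  198962376391690981640415251545285153602734402721821058212203976095413910572270 := by decide +kernel

lemma isP_iff {n : ℕ} (h : n < 38809) : isP n = true ↔ n.Prime := by
  unfold isP
  by_cases h1 : n < 19
  · interval_cases n <;> norm_num
  · have e1 : Nat.blt n 19 = false := by
      rw [← Bool.not_eq_true, Nat.blt_eq]; exact h1
    rw [e1]
    by_cases h2 : n < 361
    · have e2 : Nat.blt n 361 = true := by rw [Nat.blt_eq]; exact h2
      rw [e2, ← prods_19, ← gcd_prime (r := 19) n (by omega) (by omega) (by omega)]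
      simp [Nat.beq_eq]
    · have e2 : Nat.blt n 361 = false := by
        rw [← Bool.not_eq_true, Nat.blt_eq]; exact h2
      rw [e2, ← prods_197, ← gcd_prime (r := 197) n (by omega) (by omega) (by omega)]
      simp [Nat.beq_eq]

lemma pw_eq (t : ℕ → ℕ) (d a b : ℕ) (hd : 2 * b ≤ 2 * a + 2 ^ d) (hb : b ≤ 38809) :
    pw t d a b = ∏ p ∈ (Finset.Ico a b).filter Nat.Prime, t p := by
  induction d generalizing a b with
  | zero => simp [pw, Finset.Ico_eq_empty_of_le (show b ≤ a by omega)]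
  | succ d ih =>
    rw [pw]
    by_cases h1 : b ≤ a
    · have e1 : Nat.ble b a = true := by rw [Nat.ble_eq]; exact h1
      simp [e1, Finset.Ico_eq_empty_of_le h1]
    · have e1 : Nat.ble b a = false := by
        rw [← Bool.not_eq_true, Nat.ble_eq]; exact h1
      rw [e1]
      by_cases h2 : b = a + 1
      · subst h2
        have : Nat.beq (a + 1) (a + 1) = true := by rw [Nat.beq_eq]
        rw [this]
        have h3 := isP_iff (n := a) (by omega)
        by_cases h4 : a.Prime
        · simp [h3.2 h4, h4, Finset.filter_singleton]
        · have : isP a = false := by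
            rw [← Bool.not_eq_true, h3]; exact h4
          simp [this, h4, Finset.filter_singleton]
      · have e2 : Nat.beq b (a + 1) = false := by
          rw [← Bool.not_eq_true, Nat.beq_eq]; exact h2
        rw [e2]
        have h5 : 2 * b ≤ 2 * ((a + b) / 2) + 2 ^ d ∧ 2 * ((a + b) / 2) ≤ 2 * a + 2 ^ d := by
          rcases d with _ | d
          · simp at hd; omega
          · rw [pow_succ, pow_succ] at hd
            rw [pow_succ]
            omega
        simp only [cond_false]
        rw [ih _ _ h5.2 (by omega), ih _ _ h5.1 hb,
          Finset.prod_filter, Finset.prod_filter, Finset.prod_filter]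
        exact Finset.prod_Ico_consecutive (fun p => if p.Prime then t p else 1) (by omega) (by omega)

/-- An integer that is at least `c · exp (k / 10000) / log 2`. The exponential is split as
`exp 1 ^ i * exp (1 / 100) ^ j * exp (1 / 10000) ^ l`, with the upper bounds `2.7182818286`,
`1.0100501671` and `1.0001000051` for the three bases, and `log 2` is replaced by `0.6931471`. -/
def mm (k c : ℕ) : ℕ :=
  27182818286 ^ (k / 10000) * 10100501671 ^ (k / 100 % 100) * 10001000051 ^ (k % 100) *
    (c * 10 ^ 7) / (6931471 * (10 ^ 10) ^ (k / 10000 + k / 100 % 100 + k % 100)) + 1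

/-- A certificate for the inequality on a block. The condition `2 ^ mm k c ≤ (A * s) ^ c` gives
`log log N ≥ k / 10000` for `N ≥ A * s`. The second condition says that `A' / B'` is less than the
bound at `log log N = k / 10000`, with `1.781069` in place of `e^γ`; as `k ≥ 12000`, the bound
increases from there on. -/
def cnd (A s k c A' B' : ℕ) : Bool :=
  Nat.ble (2 ^ mm k c) ((A * s) ^ c) &&
    Nat.blt (A' * (10 ^ 10 * k)) (B' * (1781069 * k ^ 2 + 25000 * 10 ^ 10)) &&
      Nat.ble 12000 k && Nat.blt 0 c

/-- Runs through consecutive blocks `(e, k, c)`, where `A` and `B` are the products of `p` and of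
`p - 1` over the primes `p < s`. A block starts at `N = A * s` and ends at `A' * e`, where `A'` is the
product of the primes below `e`, which is also the start of the next block. Matching on successors
forces the new products to be evaluated once. -/
def chk (M : ℕ) : List (ℕ × ℕ × ℕ) → ℕ → ℕ → ℕ → Bool
  | [], s, A, _ => Nat.ble M (A * s)
  | (e, k, c) :: l, s, A, B =>
    Nat.ble s e && Nat.ble e 38808 && isP e &&
    match A * pw (fun p => p) 20 s e, B * pw (fun p => p - 1) 20 s e with
    | A' + 1, B' + 1 => cnd A s k c (A' + 1) (B' + 1) && chk M l e (A' + 1) (B' + 1)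
    | _, _ => false

set_option maxRecDepth 100000 in
set_option exponentiation.threshold 1000000000 in
/-- Blocks covering `30 ≤ N < 223092870`. -/
lemma chk1 : chk 223092870 [(7, 12239, 1024), (11, 16765, 1024), (13, 20469, 1024),
    (17, 23331, 1024), (19, 25758, 1024), (23, 27780, 1024)] 5 6 2 = true := by
  decide +kernel

set_option maxRecDepth 100000 in
set_option exponentiation.threshold 1000000000 in
/-- Blocks covering `6469693230 ≤ N < 2 ^ 52394`. The prime `e` that ends a block is chosen nearly as
large as the value of the bound at the start of the block permits. -/
lemma chk2 : chk (2 ^ 52394)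
    [(31, 31175, 1024), (37, 32590, 1024), (41, 33889, 1024), (43, 35070, 1024), (47, 36138, 1024),
    (53, 37125, 1024), (59, 38051, 1024), (61, 38919, 1024), (67, 39724, 64), (73, 40485, 64),
    (83, 41876, 64), (97, 43130, 64), (103, 44274, 64), (109, 45322, 64), (131, 46282, 64),
    (149, 47603, 64), (163, 48800, 64), (181, 49891, 64), (199, 51208, 64), (233, 52394, 64),
    (263, 53735, 64), (293, 54940, 64), (347, 56240, 64), (389, 57603, 64), (443, 58992, 64),
    (503, 60381, 64), (587, 61753, 64), (659, 63102, 64), (757, 64518, 64), (863, 65872, 64),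
    (997, 67251, 64), (1129, 68630, 64), (1301, 70049, 1), (1493, 71433, 1), (1721, 72822, 1),
    (1993, 74241, 1), (2281, 75622, 1), (2633, 77031, 1), (2999, 78441, 1), (3461, 79834, 1),
    (3929, 81220, 1), (4517, 82607, 1), (5179, 83976, 1), (5897, 85351, 1), (6781, 86711, 1),
    (7727, 88070, 1), (8849, 89413, 1), (10093, 90759, 1), (11549, 92090, 1), (13121, 93413, 1),
    (14951, 94728, 1), (17027, 96034, 1), (19423, 97331, 1), (21997, 98622, 1), (24967, 99903, 1),
    (28319, 101175, 1), (32143, 102437, 1), (36307, 103691, 1), (37379, 104934, 1)]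
    29 223092870 36495360 = true := by
  decide +kernel

/-! ### Soundness of the computation -/

/-- Exchange argument: if `A` has at most as many elements as `B`, then replacing the elements of
`A \ B`, where `f ≤ a`, by elements of `B \ A`, where `f ≥ b`, changes the sum of `f` in a
controlled way. -/
lemma sum_exchange {f : ℕ → ℝ} {A B : Finset ℕ} {a b : ℝ} (hc : A.card ≤ B.card) (ha : 0 ≤ a)
    (hA : ∀ x ∈ A, x ∉ B → f x ≤ a) (hB : ∀ x ∈ B, x ∉ A → b ≤ f x) :
    ∑ x ∈ A, f x ≤ ∑ x ∈ B, f x + (B \ A).card * (a - b) := by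
  have h1 := Finset.sum_inter_add_sum_sdiff A B f
  have h2 := Finset.sum_inter_add_sum_sdiff B A f
  rw [Finset.inter_comm] at h2
  have h3 : ∑ x ∈ A \ B, f x ≤ (A \ B).card * a := by
    rw [← nsmul_eq_mul]
    exact Finset.sum_le_card_nsmul _ _ _ fun x hx =>
      hA x (Finset.mem_sdiff.1 hx).1 (Finset.mem_sdiff.1 hx).2
  have h4 : (B \ A).card * b ≤ ∑ x ∈ B \ A, f x := by
    rw [← nsmul_eq_mul]
    exact Finset.card_nsmul_le_sum _ _ _ fun x hx =>
      hB x (Finset.mem_sdiff.1 hx).1 (Finset.mem_sdiff.1 hx).2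
  have h5 : (A \ B).card ≤ (B \ A).card := by
    have e1 := Finset.card_inter_add_card_sdiff A B
    have e2 := Finset.card_inter_add_card_sdiff B A
    rw [Finset.inter_comm] at e2
    omega
  have h6 : ((A \ B).card : ℝ) * a ≤ (B \ A).card * a := by
    gcongr
  linarith

lemma ww_anti {p q : ℕ} (hp : 2 ≤ p) (h : p ≤ q) : ww q ≤ ww p := by
  have := one_sub_pos hp
  have hp' : (0 : ℝ) < p := by exact_mod_cast (by omega : 0 < p)
  have : Real.log (1 - 1 / (p : ℝ)) ≤ Real.log (1 - 1 / (q : ℝ)) := by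
    apply Real.log_le_log this
    gcongr
  rw [ww, ww]; linarith

lemma ww_nonneg {p : ℕ} (hp : 2 ≤ p) : 0 ≤ ww p :=
  le_trans (by positivity) (one_div_le_ww hp)

/-- The primes below `q`. -/
abbrev pq (q : ℕ) : Finset ℕ := (Finset.Ico 0 q).filter Nat.Prime

/-- A number less than the product of the primes up to `q` has fewer prime factors than there are
primes up to `q`. -/
lemma card_le {N q : ℕ} (hN : N ≠ 0) (hq : q.Prime) (h : N < prods 0 q * q) :
    N.primeFactors.card ≤ (pq q).card := by
  by_contra hc
  push Not at hc
  have hqm : q ∉ pq q := by simp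
  have h1 := sum_exchange (f := fun p : ℕ => Real.log p) (A := insert q (pq q)) (B := N.primeFactors)
    (a := Real.log q) (b := Real.log q)
    (by rw [Finset.card_insert_of_notMem hqm]; exact hc)
    (Real.log_nonneg (by exact_mod_cast hq.one_lt.le))
    (by
      intro x hx _
      have : 1 ≤ x ∧ x ≤ q := by
        rcases Finset.mem_insert.1 hx with rfl | hx
        · exact ⟨hq.one_lt.le, le_rfl⟩
        · simp at hx
          exact ⟨hx.2.one_lt.le, hx.1.le⟩
      exact Real.log_le_log (by exact_mod_cast this.1) (by exact_mod_cast this.2))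
    (by
      intro x hx hx'
      have hp := Nat.prime_of_mem_primeFactors hx
      have : q ≤ x := by
        by_contra hlt
        push Not at hlt
        exact hx' (Finset.mem_insert_of_mem (by simp [hlt, hp]))
      exact Real.log_le_log (by exact_mod_cast hq.pos) (by exact_mod_cast this))
  rw [sub_self, mul_zero, add_zero, Finset.sum_insert hqm] at h1
  have h2 := h1.trans (sum_log_primeFactors_le hN)
  have h3 : ∑ p ∈ pq q, Real.log (p : ℝ) = Real.log ((prods 0 q : ℕ) : ℝ) := by
    rw [prods, Nat.cast_prod, Real.log_prod]
    intro p hp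
    simp at hp
    exact_mod_cast hp.2.ne_zero
  have h4 : 0 < prods 0 q := Finset.prod_pos fun p hp => by
    simp at hp; exact hp.2.pos
  rw [h3, ← Real.log_mul (by exact_mod_cast hq.ne_zero) (by exact_mod_cast h4.ne')] at h2
  have h5 := (Real.log_le_log_iff (by exact_mod_cast Nat.mul_pos hq.pos h4)
    (by exact_mod_cast Nat.pos_of_ne_zero hN)).1 h2
  have h6 : q * prods 0 q ≤ N := by exact_mod_cast h5
  rw [mul_comm] at h6
  omega

lemma sum_ww_pq (q : ℕ) :
    ∑ p ∈ pq q, ww p = Real.log ((prods 0 q : ℕ) / (prods' 0 q : ℕ)) := by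
  rw [prods, prods', Nat.cast_prod, Nat.cast_prod, ← Finset.prod_div_distrib, Real.log_prod]
  · refine Finset.sum_congr rfl fun p hp => ?_
    simp at hp
    have h2 : (2 : ℝ) ≤ p := by exact_mod_cast hp.2.two_le
    have h0 : (p : ℝ) ≠ 0 := by linarith
    rw [ww, ← Real.log_inv, Nat.cast_sub hp.2.one_lt.le, Nat.cast_one]
    congr 1
    have : (p : ℝ) - 1 ≠ 0 := by linarith
    field_simp
  · intro p hp
    simp at hp
    have h2 : (2 : ℝ) ≤ p := by exact_mod_cast hp.2.two_le
    rw [Nat.cast_sub hp.2.one_lt.le, Nat.cast_one]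
    have : (p : ℝ) - 1 ≠ 0 := by linarith
    have h0 : (p : ℝ) ≠ 0 := by linarith
    positivity

lemma prods_pos (q : ℕ) : 0 < prods 0 q := Finset.prod_pos fun p hp => by
    simp at hp; exact hp.2.pos

lemma prods'_pos (q : ℕ) : 0 < prods' 0 q := Finset.prod_pos fun p hp => by
    simp at hp; have := hp.2.two_le; omega

/-- If `N` is less than the product of the primes up to `q`, then `N / φ(N)` is at most the product of
`p / (p - 1)` over the primes `p < q`. -/
lemma ratio_le {N q : ℕ} (hN : N ≠ 0) (hq : q.Prime) (h : N < prods 0 q * q) :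
    (N : ℝ) / (Nat.totient N : ℝ) ≤ (prods 0 q : ℕ) / (prods' 0 q : ℕ) := by
  have hc := card_le hN hq h
  have h1 := sum_exchange (f := ww) hc (a := ww q) (b := ww q) (ww_nonneg hq.two_le)
    (by
      intro x hx hx'
      have hp := Nat.prime_of_mem_primeFactors hx
      refine ww_anti hq.two_le ?_
      by_contra hlt
      push Not at hlt
      exact hx' (by simp [hlt, hp]))
    (by
      intro x hx _
      simp at hx
      exact ww_anti hx.2.two_le hx.1.le)
  rw [sub_self, mul_zero, add_zero, ← log_ratio hN, sum_ww_pq] at h1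
  have := Nat.totient_pos.2 (Nat.pos_of_ne_zero hN)
  have := prods_pos q
  have := prods'_pos q
  have hN' := Nat.pos_of_ne_zero hN
  exact (Real.log_le_log_iff (by positivity) (by positivity)).1 h1

/-- The bound to be proved, for a single `N`. -/
def Good (N : ℕ) : Prop := (N : ℝ) / (Nat.totient N : ℝ) <
        Real.exp Real.eulerMascheroniConstant * Real.log (Real.log (N : ℝ)) +
          5 / (2 * Real.log (Real.log (N : ℝ)))

lemma exp_gamma_ge : 1.781069 ≤ Real.exp Real.eulerMascheroniConstant := by
  refine le_trans ?_ (Real.exp_le_exp.2 gamma_num.1)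
  refine le_trans ?_ (Real.sum_le_exp_of_nonneg (by norm_num) 10)
  norm_num [Finset.sum_range_succ, Nat.factorial]

lemma exp_mm {k c : ℕ} (hc : 0 < c) : Real.exp ((k : ℝ) / 10000) * c ≤ mm k c * Real.log 2 := by
  have h0 : Real.exp 1 ≤ 27182818286 / 10 ^ 10 := by
    have := Real.exp_one_lt_d9; norm_num at this ⊢; linarith
  have h1 : Real.exp (1 / 100) ≤ 10100501671 / 10 ^ 10 := by
    have h := Real.exp_bound' (x := 1 / 100) (by norm_num) (by norm_num) (n := 5) (by norm_num)
    refine h.trans ?_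
    norm_num [Finset.sum_range_succ, Nat.factorial]
  have h2 : Real.exp (1 / 10000) ≤ 10001000051 / 10 ^ 10 := by
    have h := Real.exp_bound' (x := 1 / 10000) (by norm_num) (by norm_num) (n := 4) (by norm_num)
    refine h.trans ?_
    norm_num [Finset.sum_range_succ, Nat.factorial]
  have h3 : 6931471 / 10 ^ 7 ≤ Real.log 2 := by
    have := Real.log_two_gt_d9; norm_num at this ⊢; linarith
  rw [mm]
  set i := k / 10000 with hi
  set j := k / 100 % 100 with hj
  set r := k % 100 with hr
  have hk : k = 10000 * i + 100 * j + r := by omega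
  have e : Real.exp ((k : ℝ) / 10000)
      = Real.exp 1 ^ i * Real.exp (1 / 100) ^ j * Real.exp (1 / 10000) ^ r := by
    rw [← Real.exp_nat_mul, ← Real.exp_nat_mul, ← Real.exp_nat_mul, ← Real.exp_add,
      ← Real.exp_add]
    congr 1
    rw [hk]; push_cast; ring
  have hE : Real.exp ((k : ℝ) / 10000) ≤
      27182818286 ^ i * 10100501671 ^ j * 10001000051 ^ r / (10 ^ 10) ^ (i + j + r) := by
    rw [e]
    calc _ ≤ (27182818286 / 10 ^ 10 : ℝ) ^ i * (10100501671 / 10 ^ 10) ^ j *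
          (10001000051 / 10 ^ 10) ^ r := by gcongr
      _ = _ := by
        rw [div_pow, div_pow, div_pow, pow_add, pow_add]
        field_simp
  set U := 27182818286 ^ i * 10100501671 ^ j * 10001000051 ^ r with hU
  set V := (10 ^ 10) ^ (i + j + r) with hV
  have hV0 : 0 < V := by positivity
  have h4 : U * (c * 10 ^ 7) ≤ (U * (c * 10 ^ 7) / (6931471 * V) + 1) * (6931471 * V) :=
    ((Nat.div_lt_iff_lt_mul (by positivity)).1 (Nat.lt_succ_self _)).le
  have h5 : (U : ℝ) * (c * 10 ^ 7) ≤
      ((U * (c * 10 ^ 7) / (6931471 * V) + 1 : ℕ) : ℝ) * (6931471 * V) := by exact_mod_cast h4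
  set m := U * (c * 10 ^ 7) / (6931471 * V) + 1
  have hE' : Real.exp ((k : ℝ) / 10000) ≤ U / V := by
    refine hE.trans (le_of_eq ?_)
    rw [hU, hV]; push_cast; norm_num
  have hVr : (0 : ℝ) < V := by exact_mod_cast hV0
  calc _ ≤ (U : ℝ) / V * c := by gcongr
    _ ≤ m * (6931471 / 10 ^ 7) := by
      rw [div_mul_eq_mul_div, div_le_iff₀ hVr]
      linarith
    _ ≤ _ := by gcongr

lemma cnd_sound {A s k c A' B' N : ℕ} (h : cnd A s k c A' B' = true) (hN : A * s ≤ N)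
    (hB : 0 < B') (hr : (N : ℝ) / (Nat.totient N : ℝ) ≤ A' / B') : Good N := by
  simp only [cnd, Bool.and_eq_true, Nat.ble_eq, Nat.blt_eq] at h
  obtain ⟨⟨⟨h1, h2⟩, h3⟩, h4⟩ := h
  have h5 : (2 : ℝ) ^ mm k c ≤ (N : ℝ) ^ c := by
    exact_mod_cast h1.trans (Nat.pow_le_pow_left hN c)
  have hm := exp_mm (k := k) h4
  have h6 := Real.log_le_log (by positivity) h5
  rw [Real.log_pow, Real.log_pow] at h6
  have hc : (0 : ℝ) < c := by exact_mod_cast h4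
  have h7 : Real.exp ((k : ℝ) / 10000) ≤ Real.log N := by
    have := hm.trans h6
    rw [mul_comm (c : ℝ)] at this
    exact le_of_mul_le_mul_right this hc
  have h8 : (k : ℝ) / 10000 ≤ Real.log (Real.log N) :=
    (Real.le_log_iff_exp_le ((Real.exp_pos _).trans_le h7)).2 h7
  have hk : (12000 : ℝ) ≤ k := by exact_mod_cast h3
  have hBr : (0 : ℝ) < B' := by exact_mod_cast hB
  have h9 : (A' : ℝ) * (10 ^ 10 * k) < B' * (1781069 * k ^ 2 + 25000 * 10 ^ 10) := by
    exact_mod_cast h2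
  rw [Good]
  set L := Real.log (Real.log (N : ℝ))
  set l := (k : ℝ) / 10000 with hl
  have hl1 : 1.2 ≤ l := by rw [hl, le_div_iff₀ (by norm_num)]; linarith
  have hA : (A' : ℝ) / B' < 1.781069 * l + 5 / (2 * l) := by
    rw [div_lt_iff₀ hBr, hl]
    have hk0 : (0 : ℝ) < k := by linarith
    have : (1.781069 * ((k : ℝ) / 10000) + 5 / (2 * ((k : ℝ) / 10000))) * B' =
        B' * (1781069 * k ^ 2 + 25000 * 10 ^ 10) / (10 ^ 10 * k) := by
      field_simp; ring
    rw [this, lt_div_iff₀ (by positivity)]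
    exact h9
  have hf : 1.781069 * l + 5 / (2 * l) ≤ 1.781069 * L + 5 / (2 * L) := by
    have hl0 : 0 < l := by linarith
    have hL0 : 0 < L := by linarith
    have e : 1.781069 * L + 5 / (2 * L) - (1.781069 * l + 5 / (2 * l)) =
        (L - l) * (1.781069 * (l * L) - 2.5) / (l * L) := by
      field_simp; ring
    have : 0 ≤ (L - l) * (1.781069 * (l * L) - 2.5) / (l * L) := by
      apply div_nonneg _ (by positivity)
      apply mul_nonneg (by linarith)
      nlinarith
    linarith
  have hg : 1.781069 * L ≤ Real.exp Real.eulerMascheroniConstant * L := by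
    exact mul_le_mul_of_nonneg_right exp_gamma_ge (by linarith)
  linarith

lemma prods_mul (t : ℕ → ℕ) {s e : ℕ} (h : s ≤ e) (he : e ≤ 38808) :
    (∏ p ∈ (Finset.Ico 0 s).filter Nat.Prime, t p) * pw t 20 s e =
      ∏ p ∈ (Finset.Ico 0 e).filter Nat.Prime, t p := by
  rw [pw_eq t 20 s e (by omega) (by omega), Finset.prod_filter, Finset.prod_filter,
    Finset.prod_filter]
  exact Finset.prod_Ico_consecutive (fun p => if p.Prime then t p else 1) (by omega) h

lemma chk_sound {M : ℕ} (l : List (ℕ × ℕ × ℕ)) : ∀ {s A B : ℕ}, A = prods 0 s → B = prods' 0 s →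
    chk M l s A B = true → ∀ N : ℕ, N ≠ 0 → A * s ≤ N → N < M → Good N := by
  induction l with
  | nil =>
    intro s A B _ _ h N _ h1 h2
    rw [chk, Nat.ble_eq] at h
    omega
  | cons x l ih =>
    obtain ⟨e, k, c⟩ := x
    intro s A B hA hB h N hN h1 h2
    rw [chk] at h
    simp only [Bool.and_eq_true, Nat.ble_eq] at h
    obtain ⟨⟨⟨h3, h4⟩, h5⟩, h6⟩ := h
    rw [isP_iff (by omega)] at h5
    have hA' : A * pw (fun p => p) 20 s e = prods 0 e := by rw [hA]; exact prods_mul _ h3 h4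
    have hB' : B * pw (fun p => p - 1) 20 s e = prods' 0 e := by rw [hB]; exact prods_mul _ h3 h4
    rw [hA', hB'] at h6
    obtain ⟨a, ha⟩ := Nat.exists_eq_succ_of_ne_zero (prods_pos e).ne'
    obtain ⟨b, hb⟩ := Nat.exists_eq_succ_of_ne_zero (prods'_pos e).ne'
    have h6' : cnd A s k c (prods 0 e) (prods' 0 e) = true ∧
        chk M l e (prods 0 e) (prods' 0 e) = true := by
      rw [ha, hb] at h6 ⊢
      simpa using h6
    by_cases h7 : N < prods 0 e * e
    · exact cnd_sound h6'.1 h1 (prods'_pos e) (ratio_le hN h5 h7)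
    · exact ih rfl rfl h6'.2 N hN (by omega) h2

/-! ### The inequality for `log N < exp (21 / 2)` -/

set_option maxRecDepth 10000 in
lemma prods_val : prods 0 5 = 6 ∧ prods' 0 5 = 2 ∧ prods 0 29 = 223092870 ∧
    prods' 0 29 = 36495360 := by decide +kernel

/-- Below `30` the right-hand side is at least `2 √(5 e^γ / 2) > 3`. -/
lemma good_small {N : ℕ} (h3 : 3 ≤ N) (h : N < 30) : Good N := by
  have hr := ratio_le (N := N) (q := 5) (by omega) (by norm_num) (by rw [prods_val.1]; omega)
  rw [prods_val.1, prods_val.2.1] at hr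
  norm_num at hr
  have h3' : (3 : ℝ) ≤ N := by exact_mod_cast h3
  have h1 : 1 < Real.log N := by
    rw [Real.lt_log_iff_exp_lt (by linarith)]
    have := Real.exp_one_lt_d9
    linarith
  have hL := Real.log_pos h1
  rw [Good]
  set L := Real.log (Real.log N)
  have h5 := mul_le_mul_of_nonneg_right exp_gamma_ge hL.le
  -- The quadratic `1.781069 L² - 3 L + 2.5` has negative discriminant.
  have h6 : 3 < 1.781069 * L + 5 / (2 * L) := by
    have e : 1.781069 * L + 5 / (2 * L) = (1.781069 * L ^ 2 + 2.5) / L := by field_simp; ring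
    rw [e, lt_div_iff₀ hL]
    nlinarith [sq_nonneg (L - 1)]
  linarith

/-- The numbers from the excluded primorial to the next one. They have at most nine prime factors. If
these include all primes up to `23`, then `N` is a proper multiple of `223092870`, so
`N ≥ 2 · 223092870` and the bound is already large enough. Otherwise a prime up to `23` is missing,
and in the extremal product the factor `23 / 22` can be replaced by `29 / 28`. -/
lemma good_nine {N : ℕ} (h1 : 223092870 < N) (h2 : N < 223092870 * 29) : Good N := by
  obtain ⟨-, -, e1, e2⟩ := prods_val
  have hN : N ≠ 0 := by omega
  have hlt : N < prods 0 29 * 29 := by rw [e1]; exact h2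
  have hc := card_le hN (by norm_num) hlt
  by_cases hs : pq 29 ⊆ N.primeFactors
  · have hd : 223092870 ∣ N := by
      rw [← e1]
      exact (Finset.prod_dvd_prod_of_subset _ _ _ hs).trans (Nat.prod_primeFactors_dvd N)
    have hr := ratio_le hN (by norm_num) hlt
    rw [e1, e2] at hr
    exact cnd_sound (A := 223092870) (s := 2) (k := 29915) (c := 1024) (A' := 223092870)
      (B' := 36495360) (by decide +kernel) (by omega) (by norm_num) hr
  · have h3 := sum_exchange (f := ww) hc (a := ww 29) (b := ww 23) (ww_nonneg (by norm_num))
      (by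
        intro x hx hx'
        have hp := Nat.prime_of_mem_primeFactors hx
        refine ww_anti (by norm_num) ?_
        by_contra hlt
        push Not at hlt
        exact hx' (by simp [hlt, hp]))
      (by
        intro x hx _
        simp at hx
        refine ww_anti hx.2.two_le ?_
        by_contra hlt
        have : 24 ≤ x ∧ x ≤ 28 := by omega
        obtain ⟨h4, h5⟩ := this
        have := hx.2
        interval_cases x <;> revert this <;> norm_num)
    have h4 : 1 ≤ ((pq 29 \ N.primeFactors).card : ℝ) := by
      have : 0 < (pq 29 \ N.primeFactors).card := by
        rw [Finset.card_pos, Finset.sdiff_nonempty]; exact hs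
      exact_mod_cast this
    have h5 : ww 29 ≤ ww 23 := ww_anti (by norm_num) (by norm_num)
    have h6 : Real.log ((N : ℝ) / (Nat.totient N : ℝ)) ≤
        Real.log ((223092870 : ℕ) / (36495360 : ℕ)) + (ww 29 - ww 23) := by
      rw [log_ratio hN, ← e1, ← e2, ← sum_ww_pq]
      nlinarith
    have h7 : ww 29 - ww 23 = Real.log (29 * 22 / (28 * 23)) := by
      rw [ww, ww, ← Real.log_inv, ← Real.log_inv, ← Real.log_div (by norm_num) (by norm_num)]
      norm_num
    rw [h7, ← Real.log_mul (by norm_num) (by norm_num)] at h6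
    have := Nat.totient_pos.2 (Nat.pos_of_ne_zero hN)
    have hN' := Nat.pos_of_ne_zero hN
    have h8 := (Real.log_le_log_iff (by positivity) (by norm_num)).1 h6
    refine cnd_sound (A := 223092870) (s := 1) (k := 29560) (c := 1024) (A' := 223092870 * 29 * 22)
      (B' := 36495360 * 28 * 23) (by decide +kernel) (by omega) (by norm_num) (h8.trans (le_of_eq ?_))
    norm_num

lemma good_medium {N : ℕ} (h1 : 30 ≤ N) (h2 : N ≠ 223092870) (h : N < 2 ^ 52394) : Good N := by
  obtain ⟨e1, e2, e3, e4⟩ := prods_val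
  by_cases h3 : N < 223092870
  · exact chk_sound _ e1.symm e2.symm chk1 N (by omega) (by omega) h3
  by_cases h4 : N < 223092870 * 29
  · exact good_nine (by omega) h4
  · exact chk_sound _ e3.symm e4.symm chk2 N (by omega) (by omega) h

/-- The exponent comes from `exp (21 / 2) ≤ 36316 < 52394 · log 2`. -/
lemma lt_two_pow {N : ℕ} (hN : N ≠ 0) (h : Real.log N < Real.exp (21 / 2)) : N < 2 ^ 52394 := by
  have h1 : Real.exp (21 / 2) ≤ 36316 := by
    have e : Real.exp (21 / 2) ^ 2 = Real.exp 1 ^ 21 := by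
      rw [← Real.exp_nat_mul, ← Real.exp_nat_mul]; norm_num
    have h2 : Real.exp 1 ^ 21 ≤ 2.7182818286 ^ 21 := by
      have := Real.exp_one_lt_d9
      gcongr
    refine le_of_sq_le_sq ?_ (by norm_num)
    rw [e]
    exact h2.trans (by norm_num)
  have h3 : Real.log N < Real.log ((2 : ℝ) ^ 52394) := by
    rw [Real.log_pow]
    have := Real.log_two_gt_d9
    push_cast
    linarith
  have h4 := (Real.log_lt_log_iff (by exact_mod_cast Nat.pos_of_ne_zero hN) (by positivity)).1 h3
  exact_mod_cast h4

end RS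

/-- **Theorem 1 (Rosser–Schoenfeld).** For every integer `N ≥ 3` other than
`N = 2·3·5·7·11·13·17·19·23 = 223092870`, one has
`N / φ(N) < e^γ log log N + 5 / (2 log log N)`. -/
theorem totient_rosser_schoenfeld_upper :
    ∀ N : ℕ, 3 ≤ N → N ≠ 223092870 →
      (N : ℝ) / (Nat.totient N : ℝ) <
        Real.exp Real.eulerMascheroniConstant * Real.log (Real.log (N : ℝ)) +
          5 / (2 * Real.log (Real.log (N : ℝ))) := by
  intro N h3 hN
  by_cases hl : Real.exp (21 / 2) ≤ Real.log N
  · exact RS.large_case hl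
  by_cases h30 : N < 30
  · exact RS.good_small h3 h30
  · exact RS.good_medium (by omega) hN (RS.lt_two_pow (by omega) (not_le.1 hl))
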